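/- arXiv:0802.0104 — 2 statements merged into one kernel-verified Lean document; each statement's English description precedes it below -/
import Mathlib

section
/- All zeros of the entire function Z₁(s) lie on the line Re(s) = 1/2 except for the four real zeros s = 0, 1/3, 2/3, 1; that is, every zero ρ of Z₁ with ρ ∉ {0, 1/3, 2/3, 1} satisfies Re(ρ) = 1/2, and moreover each of 0, 1/3, 2/3, 1 is a simple zero of Z₁ (Z₁ vanishes there but its derivative does not). -/
open Complex

noncomputable def chi (s : ℂ) : ℂ := s * (s - 1) * completedRiemannZeta₀ s + 1

noncomputable def A : ℂ := Real.pi / 3 - 1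

noncomputable def f1 (s : ℂ) : ℂ :=
  (s - 1) * ((s - 1) * (3 * s - 2) * (A * s - A + 1) * chi (s + 1) * chi (3 * s)
    - (s + 1) * (s - 2) * chi s * chi (3 * s - 1)
    - 2 * (s - 1) * (s - 2) * chi s * chi (3 * s))

noncomputable def f2 (s : ℂ) : ℂ :=
  (s - 2) * ((A * s + 3) * (s - 1) ^ 2 * chi (s + 2)
    - 2 * (s - 1) * (s - 3) * chi (s + 1)
    - (s + 2) * (s - 3) * chi s)

noncomputable def Z1 (s : ℂ) : ℂ := chi (2 * s) * f1 s - chi (2 * s - 1) * f1 (1 - s)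

noncomputable def Z2 (s : ℂ) : ℂ := chi (2 * s) * f2 s - chi (2 * s - 1) * f2 (1 - s)


namespace ZP
open Complex MeasureTheory Set HurwitzZeta

noncomputable def phi (x : ℝ) : ℝ :=
  (Ioi (1:ℝ)).indicator (fun x => evenKernel 0 x - 1) x +
  (Ioo (0:ℝ) 1).indicator (fun x => evenKernel 0 x - x ^ (-(1/2:ℝ))) x

lemma evenKernel_ge_one {t : ℝ} (ht : 0 < t) : 1 ≤ evenKernel 0 t := by
  have h := hasSum_int_evenKernel₀ 0 ht
  simp only [AddCircle.coe_zero, if_true] at h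
  have : 0 ≤ evenKernel 0 t - 1 := by
    refine h.nonneg fun n => ?_
    split_ifs
    · exact le_rfl
    · exact (Real.exp_pos _).le
  linarith

lemma phi_nonneg (x : ℝ) : 0 ≤ phi x := by
  unfold phi
  refine add_nonneg (indicator_nonneg (fun x hx => ?_) x) (indicator_nonneg (fun x hx => ?_) x)
  · have : (1:ℝ) < x := hx
    linarith [evenKernel_ge_one (t := x) (by linarith)]
  · have h0 : (0:ℝ) < x := hx.1
    have := evenKernel_functional_equation 0 x
    rw [← evenKernel_eq_cosKernel_of_zero] at this
    have h1 := evenKernel_ge_one (t := 1 / x) (by positivity)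
    rw [this, Real.rpow_neg h0.le]
    have h2 : 0 < (x ^ (1/2:ℝ))⁻¹ := by positivity
    rw [one_div]
    nlinarith

lemma phi_modif : (fun x => (phi x : ℂ)) = (hurwitzEvenFEPair 0).f_modif := by
  funext x
  simp only [phi, WeakFEPair.f_modif, hurwitzEvenFEPair, Pi.add_apply, indicator]
  push_cast
  congr 1
  · split_ifs <;> simp
  · split_ifs <;> simp

lemma L_eq (s : ℂ) : completedRiemannZeta₀ s = mellin (fun x => (phi x : ℂ)) (s / 2) / 2 := by
  rw [phi_modif]; rfl

lemma phi_conv (s : ℂ) : MellinConvergent (fun x => (phi x : ℂ)) s := by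
  rw [phi_modif]
  exact ((hurwitzEvenFEPair 0).isStrongFEPair_toStrongFEPair.hasMellin s).1

/-- real integrability -/
lemma phi_int (r : ℝ) : IntegrableOn (fun x : ℝ => x ^ r * phi x) (Ioi 0) := by
  have h := (phi_conv ((r:ℂ) + 1)).norm
  refine h.congr ?_
  filter_upwards [ae_restrict_mem measurableSet_Ioi] with x hx
  have hx : (0:ℝ) < x := hx
  have : ((x:ℂ) ^ ((r:ℂ) + 1 - 1)) = ((x ^ r : ℝ) : ℂ) := by
    rw [add_sub_cancel_right, Complex.ofReal_cpow hx.le]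
  rw [this, norm_smul, Complex.norm_real, Complex.norm_real, Real.norm_of_nonneg (phi_nonneg x),
    Real.norm_of_nonneg (by positivity)]

noncomputable def mom (n : ℕ) : ℝ :=
  (∫ x in Ioi (0:ℝ), x ^ (-(3/4:ℝ)) * phi x * (Real.log x / 2) ^ n / n.factorial) / 2

lemma mom_even_nonneg (n : ℕ) : 0 ≤ mom (2 * n) := by
  unfold mom
  refine div_nonneg (setIntegral_nonneg measurableSet_Ioi fun x hx => ?_) (by norm_num)
  have hx : (0:ℝ) < x := hx
  have := phi_nonneg x
  have h2 : 0 ≤ (Real.log x / 2) ^ (2 * n) := by rw [pow_mul]; positivity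
  positivity

lemma hs_congr {f g : ℕ → ℂ} {a : ℂ} (h : HasSum g a) (e : ∀ n, f n = g n) : HasSum f a := by
  rw [funext e]; exact h

lemma rexp_hasSum (x : ℝ) : HasSum (fun n : ℕ => x ^ n / n.factorial) (Real.exp x) := by
  rw [Real.exp_eq_exp_ℝ]
  exact NormedSpace.expSeries_div_hasSum_exp x

lemma cexp_hasSum (x : ℂ) : HasSum (fun n : ℕ => x ^ n / n.factorial) (Complex.exp x) := by
  rw [Complex.exp_eq_exp_ℂ]
  exact NormedSpace.expSeries_div_hasSum_exp x

lemma hasSum_mom (z : ℂ) : HasSum (fun n => (mom n : ℂ) * z ^ n) (completedRiemannZeta₀ (1/2 + z)) := by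
  have key : HasSum (fun n : ℕ => ∫ x in Ioi (0:ℝ),
      ((x ^ (-(3/4:ℝ)) * phi x * (Real.log x / 2) ^ n / n.factorial : ℝ) : ℂ) * z ^ n)
      (∫ x in Ioi (0:ℝ), ((x ^ (-(3/4:ℝ)) * phi x : ℝ) : ℂ) * cexp (z * (Real.log x / 2 : ℝ))) := by
    have e1 : ∀ x : ℝ, HasSum (fun n : ℕ => x ^ (-(3/4:ℝ)) * phi x * ((‖z‖ * |Real.log x / 2|) ^ n / n.factorial))
        (x ^ (-(3/4:ℝ)) * phi x * Real.exp (‖z‖ * |Real.log x / 2|)) := fun x =>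
      (rexp_hasSum _).mul_left _
    have hm : AEStronglyMeasurable (fun x : ℝ => x ^ (-(3/4:ℝ)) * phi x) (volume.restrict (Ioi 0)) :=
      (phi_int _).aestronglyMeasurable
    have hlog : Measurable (fun x : ℝ => Real.log x / 2) := Real.measurable_log.div_const 2
    refine hasSum_integral_of_dominated_convergence
      (fun n x => x ^ (-(3/4:ℝ)) * phi x * ((‖z‖ * |Real.log x / 2|) ^ n / n.factorial)) ?_ ?_ ?_ ?_ ?_
    · intro n
      have : AEStronglyMeasurable (fun x : ℝ => x ^ (-(3/4:ℝ)) * phi x * (Real.log x / 2) ^ n / n.factorial)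
          (volume.restrict (Ioi 0)) :=
        by simpa only [div_eq_mul_inv, Pi.mul_apply] using
          ((hm.mul (hlog.pow_const n).aestronglyMeasurable)).mul_const ((n.factorial : ℝ)⁻¹)
      exact (Complex.continuous_ofReal.comp_aestronglyMeasurable this).mul_const _
    · intro n
      filter_upwards [ae_restrict_mem measurableSet_Ioi] with x hx
      have hx : (0:ℝ) < x := hx
      rw [norm_mul, Complex.norm_real, norm_div, norm_mul, norm_mul, norm_pow, norm_pow,
        Real.norm_of_nonneg (phi_nonneg x), Real.norm_of_nonneg (by positivity : 0 ≤ x ^ (-(3/4:ℝ))),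
        Real.norm_eq_abs, RCLike.norm_natCast]
      apply le_of_eq
      ring
    · exact Filter.Eventually.of_forall fun x => (e1 x).summable
    · simp_rw [fun x => (e1 x).tsum_eq]
      have hI := (phi_int (-(3/4) + ‖z‖/2)).add (phi_int (-(3/4) - ‖z‖/2))
      refine hI.mono' ?_ ?_
      · exact hm.mul (Real.measurable_exp.comp ((hlog.norm).const_mul ‖z‖)).aestronglyMeasurable
      · filter_upwards [ae_restrict_mem measurableSet_Ioi] with x hx
        have hx : (0:ℝ) < x := hx
        have hp := phi_nonneg x
        rw [Real.norm_of_nonneg (by positivity)]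
        simp only [Pi.add_apply]
        have a1 : x ^ (-(3/4) + ‖z‖/2) = x ^ (-(3/4:ℝ)) * Real.exp (‖z‖ * (Real.log x / 2)) := by
          rw [Real.rpow_add hx, Real.rpow_def_of_pos hx (‖z‖/2)]; congr 2; ring
        have a2 : x ^ (-(3/4) - ‖z‖/2) = x ^ (-(3/4:ℝ)) * Real.exp (‖z‖ * -(Real.log x / 2)) := by
          rw [sub_eq_add_neg, Real.rpow_add hx, Real.rpow_def_of_pos hx (-(‖z‖/2))]; congr 2; ring
        rw [a1, a2]
        have a3 : Real.exp (‖z‖ * |Real.log x / 2|) ≤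
            Real.exp (‖z‖ * (Real.log x / 2)) + Real.exp (‖z‖ * -(Real.log x / 2)) := by
          rcases abs_choice (Real.log x / 2) with h | h <;> rw [h]
          · linarith [Real.exp_pos (‖z‖ * -(Real.log x / 2))]
          · linarith [Real.exp_pos (‖z‖ * (Real.log x / 2))]
        have a4 : 0 ≤ x ^ (-(3/4:ℝ)) * phi x := by positivity
        nlinarith [mul_le_mul_of_nonneg_left a3 a4]
    · filter_upwards with x
      have := (cexp_hasSum (z * (Real.log x / 2 : ℝ))).mul_left
        (((x ^ (-(3/4:ℝ)) * phi x : ℝ) : ℂ))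
      refine hs_congr this fun n => ?_
      push_cast
      rw [mul_pow]
      ring
  have h2 := key.div_const 2
  have e2 : completedRiemannZeta₀ (1/2 + z) = (∫ x in Ioi (0:ℝ), ((x ^ (-(3/4:ℝ)) * phi x : ℝ) : ℂ) * cexp (z * (Real.log x / 2 : ℝ))) / 2 := by
    rw [L_eq, mellin]
    congr 1
    refine setIntegral_congr_fun measurableSet_Ioi fun x hx => ?_
    have hx : (0:ℝ) < x := hx
    have hx' : (x:ℂ) ≠ 0 := by exact_mod_cast hx.ne'
    have : ((1/2 + z)/2 - 1 : ℂ) = ((-(3/4:ℝ) : ℝ) : ℂ) + z / 2 := by push_cast; ring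
    simp only [smul_eq_mul]
    rw [this, Complex.cpow_add _ _ hx', ← Complex.ofReal_cpow hx.le, Complex.cpow_def_of_ne_zero hx' (z/2),
      ← Complex.ofReal_log hx.le]
    push_cast
    rw [show (Real.log x : ℂ) * (z / 2) = z * (Real.log x / 2) by ring]
    ring
  rw [e2]
  refine hs_congr h2 fun n => ?_
  rw [integral_mul_const, mom, integral_complex_ofReal]
  push_cast
  ring

end ZP

namespace ZP

/-- entire functions with nonnegative Taylor coefficients -/
def NP (f : ℂ → ℂ) : Prop := ∃ c : ℕ → ℝ, (∀ n, 0 ≤ c n) ∧ ∀ X : ℂ, HasSum (fun n => (c n : ℂ) * X ^ n) (f X)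

lemma np_real {c : ℕ → ℝ} {f : ℂ → ℂ} (h : ∀ X : ℂ, HasSum (fun n => (c n : ℂ) * X ^ n) (f X)) (x : ℝ) :
    HasSum (fun n => c n * x ^ n) (f x).re := by
  have := Complex.hasSum_re (h x)
  have e : (fun n => ((c n : ℂ) * (x:ℂ) ^ n).re) = fun n => c n * x ^ n := by
    funext n
    rw [← Complex.ofReal_pow, ← Complex.ofReal_mul, Complex.ofReal_re]
  rw [e] at this
  exact this

lemma NP.ofReal {f : ℂ → ℂ} (hf : NP f) (x : ℝ) : f x = ((f x).re : ℂ) := by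
  obtain ⟨c, -, h⟩ := hf
  have h1 := (np_real h x).mapL Complex.ofRealCLM
  have h2 := h x
  refine h2.unique ?_
  refine hs_congr h1 fun n => ?_
  simp

lemma NP.norm_le {f : ℂ → ℂ} (hf : NP f) (X : ℂ) : ‖f X‖ ≤ (f (‖X‖ : ℝ)).re := by
  obtain ⟨c, hc, h⟩ := hf
  have h1 := np_real h ‖X‖
  rw [← (h X).tsum_eq, ← h1.tsum_eq]
  refine tsum_of_norm_bounded h1.summable.hasSum fun n => ?_
  rw [norm_mul, norm_pow, Complex.norm_real, Real.norm_of_nonneg (hc n)]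

lemma NP.mono {f : ℂ → ℂ} (hf : NP f) {x y : ℝ} (hx : 0 ≤ x) (hxy : x ≤ y) : (f x).re ≤ (f y).re := by
  obtain ⟨c, hc, h⟩ := hf
  refine hasSum_le (fun n => ?_) (np_real h x) (np_real h y)
  exact mul_le_mul_of_nonneg_left (pow_le_pow_left₀ hx hxy n) (hc n)

lemma NP.nonneg {f : ℂ → ℂ} (hf : NP f) {x : ℝ} (hx : 0 ≤ x) : 0 ≤ (f x).re := by
  obtain ⟨c, hc, h⟩ := hf
  exact (np_real h x).nonneg fun n => mul_nonneg (hc n) (pow_nonneg hx n)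

lemma NP.div {f : ℂ → ℂ} (hf : NP f) {x0 : ℝ} (hx0 : 0 ≤ x0) :
    ∃ g, NP g ∧ ∀ X, f X = f x0 + (X - x0) * g X := by
  obtain ⟨c, hc, h⟩ := hf
  have hS : ∀ R : ℝ, Summable (fun n => c n * R ^ n) := fun R => (np_real h R).summable
  -- summability of tails
  have key : ∀ R : ℝ, 1 ≤ R → x0 ≤ R → ∀ i, Summable (fun j => c (i + 1 + j) * x0 ^ j) ∧
      R ^ i * ∑' j, c (i + 1 + j) * x0 ^ j ≤ ∑' n, c n * R ^ n := by
    intro R hR hxR i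
    have t1 : Summable (fun j => c (i + 1 + j) * R ^ (i + 1 + j)) := by
      have := (summable_nat_add_iff (i + 1)).mpr (hS R)
      refine this.congr fun j => ?_
      rw [add_comm j]
    have le : ∀ j, R ^ i * (c (i + 1 + j) * x0 ^ j) ≤ c (i + 1 + j) * R ^ (i + 1 + j) := by
      intro j
      have a1 : R ^ i * x0 ^ j ≤ R ^ (i + 1 + j) := by
        calc R ^ i * x0 ^ j ≤ R ^ (i+1) * R ^ j := by
              gcongr
              omega
          _ = _ := by rw [← pow_add]
      nlinarith [mul_le_mul_of_nonneg_left a1 (hc (i+1+j))]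
    have t2 : Summable (fun j => R ^ i * (c (i + 1 + j) * x0 ^ j)) := by
      refine Summable.of_nonneg_of_le (fun j => ?_) le t1
      have := hc (i+1+j)
      positivity
    have hRi : R ^ i ≠ 0 := by positivity
    refine ⟨(summable_mul_left_iff hRi).mp t2, ?_⟩
    rw [← tsum_mul_left]
    refine (Summable.tsum_le_tsum le t2 t1).trans ?_
    have := (hS R).sum_add_tsum_nat_add (i + 1)
    rw [← this]
    have e : ∑' j, c (i + 1 + j) * R ^ (i + 1 + j) = ∑' j, c (j + (i + 1)) * R ^ (j + (i + 1)) := by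
      congr 1; funext j; rw [add_comm (i+1)]
    rw [e]
    have : 0 ≤ ∑ j ∈ Finset.range (i + 1), c j * R ^ j :=
      Finset.sum_nonneg fun j _ => mul_nonneg (hc j) (by positivity)
    linarith
  set b : ℕ → ℝ := fun i => ∑' j, c (i + 1 + j) * x0 ^ j with hb
  have hb0 : ∀ i, 0 ≤ b i := fun i => tsum_nonneg fun j => mul_nonneg (hc _) (pow_nonneg hx0 j)
  have hbs : ∀ X : ℂ, Summable (fun n => (b n : ℂ) * X ^ n) := by
    intro X
    set R : ℝ := ‖X‖ + x0 + 1 with hR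
    have hn := norm_nonneg X
    have hg : Summable (fun n : ℕ => (∑' n, c n * (2 * R) ^ n) * (1/2 : ℝ) ^ n) :=
      (summable_geometric_two).mul_left _
    refine Summable.of_norm_bounded hg fun n => ?_
    rw [norm_mul, norm_pow, Complex.norm_real, Real.norm_of_nonneg (hb0 n)]
    have h1 := (key (2 * R) (by linarith) (by linarith) n).2
    have hRp : 0 < R := by linarith
    have h2 : ‖X‖ ^ n ≤ R ^ n := pow_le_pow_left₀ hn (by linarith) n
    have h3 : (2 * R) ^ n * b n ≤ ∑' n, c n * (2 * R) ^ n := h1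
    calc b n * ‖X‖ ^ n ≤ b n * R ^ n := mul_le_mul_of_nonneg_left h2 (hb0 n)
      _ = ((2 * R) ^ n * b n) * (1/2) ^ n := by
          rw [mul_pow, div_pow, one_pow]; field_simp
      _ ≤ _ := by gcongr
  refine ⟨fun X => ∑' n, (b n : ℂ) * X ^ n, ⟨b, hb0, fun X => (hbs X).hasSum⟩, fun X => ?_⟩
  have rec1 : ∀ i, b i = c (i + 1) + x0 * b (i + 1) := by
    intro i
    have hs := (key (x0 + 1) (by linarith) (by linarith) i).1
    have := hs.tsum_eq_zero_add
    simp only [hb]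
    rw [this, ← tsum_mul_left]
    simp only [add_zero, pow_zero, mul_one]
    congr 2
    funext j
    rw [show i + 1 + (j + 1) = i + 1 + 1 + j by ring]
    ring
  have hx00 : (f x0) = c 0 + x0 * b 0 := by
    have h1 := np_real h x0
    have h2 := h1.summable.tsum_eq_zero_add
    rw [h1.tsum_eq] at h2
    have h3 : (f x0).re = c 0 + x0 * b 0 := by
      rw [h2, hb]
      simp only
      rw [← tsum_mul_left]
      simp only [pow_zero, mul_one]
      congr 2
      funext j
      rw [show 0 + 1 + j = j + 1 by ring]
      ring
    rw [NP.ofReal ⟨c, hc, h⟩ x0, h3]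
    push_cast; ring
  have hfX := (h X).summable.tsum_eq_zero_add
  rw [(h X).tsum_eq] at hfX
  have hbX := (hbs X).tsum_eq_zero_add
  have hs1 : Summable (fun n => (b (n+1) : ℂ) * X ^ (n+1)) := (summable_nat_add_iff 1).mpr (hbs X)
  have e3 : ∑' n, (c (n+1) : ℂ) * X ^ (n+1) = X * (∑' n, (b n : ℂ) * X ^ n) - x0 * ∑' n, (b (n+1) : ℂ) * X ^ (n+1) := by
    rw [← tsum_mul_left, ← tsum_mul_left, ← Summable.tsum_sub ((hbs X).mul_left _) (hs1.mul_left _)]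
    congr 1
    funext n
    have := rec1 n
    rw [this]
    push_cast
    ring
  rw [hfX, e3, hx00]
  have e4 : ∑' n, (b (n+1) : ℂ) * X ^ (n+1) = ∑' n, (b n : ℂ) * X ^ n - b 0 := by
    rw [hbX]; simp
  rw [e4]
  simp
  ring

/-- The completed zeta function as a function of `z^2`, `s = 1/2 + z`. -/
lemma L_NP : ∃ f : ℂ → ℂ, NP f ∧ ∀ s : ℂ, completedRiemannZeta₀ s = f ((s - 1/2) ^ 2) := by
  have h0 : ∀ z : ℂ, HasSum (fun n => (mom (2 * n) : ℂ) * (z^2) ^ n) (completedRiemannZeta₀ (1/2 + z)) := by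
    intro z
    have h1 := hasSum_mom z
    have h2 := hasSum_mom (-z)
    have e : completedRiemannZeta₀ (1/2 + -z) = completedRiemannZeta₀ (1/2 + z) := by
      rw [← completedRiemannZeta₀_one_sub]; congr 1; ring
    rw [e] at h2
    have h3 := (h1.add h2).div_const 2
    have e2 : (completedRiemannZeta₀ (1/2 + z) + completedRiemannZeta₀ (1/2 + z)) / 2 = completedRiemannZeta₀ (1/2 + z) := by ring
    rw [e2] at h3
    have inj : Function.Injective (fun n : ℕ => 2 * n) := fun a b h => by simpa using h
    rw [← inj.hasSum_iff] at h3
    · refine hs_congr h3 fun n => ?_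
      simp only [Function.comp]
      rw [neg_pow, Even.neg_one_pow (even_two_mul n), pow_mul]
      ring
    · intro n hn
      have : Odd n := by
        rcases Nat.even_or_odd n with h | h
        · exfalso; apply hn; obtain ⟨k, hk⟩ := h; exact ⟨k, by simp; omega⟩
        · exact h
      rw [neg_pow, this.neg_one_pow]
      ring
  have hs : ∀ X : ℂ, Summable (fun n => (mom (2 * n) : ℂ) * X ^ n) := by
    intro X
    have := (IsAlgClosed.exists_pow_nat_eq X (n := 2) (by norm_num)).choose_spec
    have h := (h0 (IsAlgClosed.exists_pow_nat_eq X (n := 2) (by norm_num)).choose).summable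
    rw [this] at h
    exact h
  refine ⟨fun X => ∑' n, (mom (2 * n) : ℂ) * X ^ n, ⟨fun n => mom (2 * n), mom_even_nonneg, fun X => (hs X).hasSum⟩, fun s => ?_⟩
  have := h0 (s - 1/2)
  rw [show (1/2 + (s - 1/2) : ℂ) = s by ring] at this
  exact this.tsum_eq.symm

end ZP

namespace ZP
open Complex Filter Topology

noncomputable def fL : ℂ → ℂ := L_NP.choose
lemma fL_NP : NP fL := L_NP.choose_spec.1
lemma L_fL (s : ℂ) : completedRiemannZeta₀ s = fL ((s - 1/2) ^ 2) := L_NP.choose_spec.2 s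

lemma NP.conj {f : ℂ → ℂ} (hf : NP f) (X : ℂ) : f ((starRingEnd ℂ) X) = (starRingEnd ℂ) (f X) := by
  obtain ⟨c, -, h⟩ := hf
  have h1 := (h X).mapL (conjCLE : ℂ →L[ℝ] ℂ)
  refine (h _).unique ?_
  refine hs_congr h1 fun n => ?_
  simp

lemma chi_eq_fL (s : ℂ) : chi s = ((s - 1/2)^2 - 1/4) * fL ((s - 1/2) ^ 2) + 1 := by
  rw [chi, L_fL]; ring

lemma chi_one_sub (s : ℂ) : chi (1 - s) = chi s := by
  rw [chi_eq_fL, chi_eq_fL s, show (1 - s - 1/2)^2 = (s - 1/2)^2 by ring]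

lemma chi_conj (s : ℂ) : chi ((starRingEnd ℂ) s) = (starRingEnd ℂ) (chi s) := by
  rw [chi_eq_fL, chi_eq_fL s]
  have e2 : (starRingEnd ℂ) (1/2 : ℂ) = 1/2 := by
    rw [show (1/2:ℂ) = ((1/2:ℝ):ℂ) by push_cast; ring, conj_ofReal]
  have e4 : (starRingEnd ℂ) (1/4 : ℂ) = 1/4 := by
    rw [show (1/4:ℂ) = ((1/4:ℝ):ℂ) by push_cast; ring, conj_ofReal]
  simp only [map_add, map_mul, map_sub, map_pow, ← fL_NP.conj, e2, e4, map_one]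

lemma chi_diff : Differentiable ℂ chi := by
  unfold chi
  have := differentiable_completedZeta₀
  fun_prop

lemma chi_zero : chi 0 = 1 := by simp [chi]
lemma chi_one : chi 1 = 1 := by simp [chi]

lemma chi_ofReal (x : ℝ) : chi x = ((chi x).re : ℂ) := by
  have := chi_conj x
  rw [conj_ofReal] at this
  exact (conj_eq_iff_re.mp this.symm).symm

lemma chi_re_formula (x : ℝ) : (chi x).re = ((x - 1/2)^2 - 1/4) * (fL (((x - 1/2)^2 : ℝ) : ℂ)).re + 1 := by
  rw [chi_eq_fL, show ((x:ℂ) - 1/2)^2 = (((x - 1/2)^2 : ℝ) : ℂ) by push_cast; ring]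
  rw [fL_NP.ofReal]
  rw [show ((((x - 1/2)^2 : ℝ) : ℂ) - 1/4) = (((x - 1/2)^2 - 1/4 : ℝ) : ℂ) by push_cast; ring, ← ofReal_mul, ← ofReal_one, ← ofReal_add, ofReal_re, ofReal_re]

lemma chi_mono {x y : ℝ} (hx : 1 ≤ x) (hxy : x ≤ y) : (chi x).re ≤ (chi y).re := by
  rw [chi_re_formula, chi_re_formula]
  have h1 : (x - 1/2)^2 ≤ (y - 1/2)^2 := by nlinarith
  have h2 := fL_NP.mono (by positivity) h1
  have h3 := fL_NP.nonneg (x := (x - 1/2)^2) (by positivity)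
  have h4 : 0 ≤ (x-1/2)^2 - 1/4 := by nlinarith
  nlinarith [mul_le_mul (sub_le_sub_right h1 (1/4)) h2 h3 (by linarith)]

lemma chi_ge_one {x : ℝ} (hx : 1 ≤ x) : 1 ≤ (chi x).re := by
  have := chi_mono le_rfl hx
  rw [ofReal_one, chi_one] at this
  simpa using this

lemma chi_eq_zeta {s : ℂ} (h0 : 0 < s.re) (h1 : s ≠ 1) :
    chi s = s * (s - 1) * (Gammaℝ s * riemannZeta s) := by
  have hs0 : s ≠ 0 := by rintro rfl; simp at h0
  have hG : Gammaℝ s ≠ 0 := Gammaℝ_ne_zero_of_re_pos h0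
  rw [riemannZeta_def_of_ne_zero hs0, mul_div_cancel₀ _ hG, completedRiemannZeta_eq, chi]
  have : 1 - s ≠ 0 := sub_ne_zero.mpr (Ne.symm h1)
  have h3 : s - 1 ≠ 0 := sub_ne_zero.mpr h1
  field_simp
  ring

lemma chi_ne_zero {s : ℂ} (h : 1 ≤ s.re) : chi s ≠ 0 := by
  by_cases h1 : s = 1
  · rw [h1, chi_one]; exact one_ne_zero
  rw [chi_eq_zeta (by linarith) h1]
  have hs0 : s ≠ 0 := by rintro rfl; simp at h; linarith
  exact mul_ne_zero (mul_ne_zero hs0 (sub_ne_zero.mpr h1))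
    (mul_ne_zero (Gammaℝ_ne_zero_of_re_pos (by linarith)) (riemannZeta_ne_zero_of_one_le_re h))

/-- elementary: `1+v ≤ exp (2 * v^{3/4})` -/
lemma one_add_le {v : ℝ} (hv : 0 ≤ v) : 1 + v ≤ Real.exp (2 * v ^ (3/4:ℝ)) := by
  rcases le_total v 1 with h | h
  · have : v ≤ v ^ (3/4:ℝ) := by
      conv_lhs => rw [← Real.rpow_one v]
      rcases hv.eq_or_lt with rfl | hv'
      · simp
      exact Real.rpow_le_rpow_of_exponent_ge hv' h (by norm_num)
    have := Real.add_one_le_exp (2 * v ^ (3/4:ℝ))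
    linarith
  · have hw : (v ^ (3/4:ℝ)) ^ 2 = v ^ (3/2:ℝ) := by
      rw [← Real.rpow_natCast, ← Real.rpow_mul hv]; norm_num
    have h2 : v ≤ (v ^ (3/4:ℝ)) ^ 2 := by
      rw [hw]; conv_lhs => rw [← Real.rpow_one v]
      exact Real.rpow_le_rpow_of_exponent_le h (by norm_num)
    have h0 : 0 ≤ v ^ (3/4:ℝ) := by positivity
    have := Real.quadratic_le_exp_of_nonneg (x := 2 * v ^ (3/4:ℝ)) (by positivity)
    nlinarith

/-- lower bound for Gamma on vertical lines -/
lemma gamma_lower : ∃ C : ℝ, 0 ≤ C ∧ ∀ x y : ℝ, 1/2 ≤ x →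
    Real.Gamma x ≤ ‖Complex.Gamma (x + y * I)‖ * Real.exp (C * |y| ^ (3/2:ℝ)) := by
  have hsum : Summable (fun j : ℕ => 1 / ((j:ℝ) + 1/2) ^ (3/2:ℝ)) := by
    have := Real.summable_one_div_nat_add_rpow (1/2) (3/2)
    refine ((this.mpr (by norm_num))).congr fun j => ?_
    rw [abs_of_nonneg (by positivity)]
  refine ⟨∑' j : ℕ, 1 / ((j:ℝ) + 1/2) ^ (3/2:ℝ), tsum_nonneg fun j => by positivity, fun x y hx => ?_⟩
  set S := ∑' j : ℕ, 1 / ((j:ℝ) + 1/2) ^ (3/2:ℝ) with hS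
  have t1 := Real.GammaSeq_tendsto_Gamma x
  have t2 := (Complex.GammaSeq_tendsto_Gamma (x + y * I)).norm.mul_const (Real.exp (S * |y| ^ (3/2:ℝ)))
  refine le_of_tendsto_of_tendsto t1 t2 ?_
  filter_upwards [eventually_gt_atTop 0] with n hn
  have hn' : (0:ℝ) < n := by exact_mod_cast hn
  rw [Real.GammaSeq, Complex.GammaSeq, norm_div, norm_mul, norm_prod]
  have e1 : ‖(n:ℂ) ^ ((x:ℂ) + y * I)‖ = (n:ℝ) ^ x := by
    rw [show (n:ℂ) = ((n:ℝ):ℂ) by simp, norm_cpow_eq_rpow_re_of_pos hn']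
    simp
  rw [e1, Complex.norm_natCast]
  have pp : 0 < ∏ j ∈ Finset.range (n + 1), (x + j) := Finset.prod_pos fun j _ => by positivity
  have hnz : ∀ j : ℕ, (x:ℂ) + y * I + j ≠ 0 := by
    intro j h
    have := congrArg re h
    simp at this
    have : (0:ℝ) ≤ j := by positivity
    linarith
  have pq : 0 < ∏ j ∈ Finset.range (n + 1), ‖(x:ℂ) + y * I + j‖ :=
    Finset.prod_pos fun j _ => norm_pos_iff.mpr (hnz j)
  have main : ∏ j ∈ Finset.range (n + 1), ‖(x:ℂ) + y * I + j‖ ≤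
      (∏ j ∈ Finset.range (n + 1), (x + j)) * Real.exp (S * |y| ^ (3/2:ℝ)) := by
    have each : ∀ j : ℕ, ‖(x:ℂ) + y * I + j‖ ≤ (x + j) * Real.exp (1 / ((j:ℝ) + 1/2) ^ (3/2:ℝ) * |y| ^ (3/2:ℝ)) := by
      intro j
      have hj : (0:ℝ) ≤ j := by positivity
      have hxj : 0 < x + j := by linarith
      have hsq : ‖(x:ℂ) + y * I + j‖ ^ 2 = (x + j)^2 * (1 + (|y| / (x + j))^2) := by
        rw [← Complex.normSq_eq_norm_sq, Complex.normSq_apply]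
        simp
        field_simp
        rw [sq_abs]
      refine le_of_sq_le_sq ?_ (by positivity)
      rw [hsq, mul_pow, ← Real.exp_nat_mul]
      refine mul_le_mul_of_nonneg_left ?_ (by positivity)
      refine (one_add_le (by positivity)).trans (Real.exp_le_exp.mpr ?_)
      have e5 : (((|y| / (x + j)) ^ 2 : ℝ)) ^ (3/4:ℝ) = |y| ^ (3/2:ℝ) / (x + j) ^ (3/2:ℝ) := by
        rw [← Real.rpow_natCast, ← Real.rpow_mul (by positivity), Real.div_rpow (by positivity) (by positivity)]
        norm_num
      rw [e5]
      have e6 : ((j:ℝ) + 1/2) ^ (3/2:ℝ) ≤ (x + j) ^ (3/2:ℝ) :=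
        Real.rpow_le_rpow (by positivity) (by linarith) (by norm_num)
      have e7 : |y| ^ (3/2:ℝ) / (x + j) ^ (3/2:ℝ) ≤ 1 / ((j:ℝ) + 1/2) ^ (3/2:ℝ) * |y| ^ (3/2:ℝ) := by
        rw [div_mul_eq_mul_div, one_mul]
        gcongr
      push_cast
      linarith
    calc _ ≤ ∏ j ∈ Finset.range (n + 1), ((x + j) * Real.exp (1 / ((j:ℝ) + 1/2) ^ (3/2:ℝ) * |y| ^ (3/2:ℝ))) :=
          Finset.prod_le_prod (fun j _ => norm_nonneg _) fun j _ => each j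
      _ = (∏ j ∈ Finset.range (n + 1), (x + j)) * Real.exp ((∑ j ∈ Finset.range (n+1), 1 / ((j:ℝ) + 1/2) ^ (3/2:ℝ)) * |y| ^ (3/2:ℝ)) := by
          rw [Finset.prod_mul_distrib, ← Real.exp_sum, Finset.sum_mul]
      _ ≤ _ := by
          gcongr
          exact hsum.sum_le_tsum _ fun j _ => by positivity
  rw [div_mul_eq_mul_div, div_le_div_iff₀ pp pq]
  have hA : 0 ≤ (n:ℝ) ^ x * (n.factorial : ℝ) := by positivity
  calc _ ≤ (n:ℝ) ^ x * (n.factorial : ℝ) * _ := mul_le_mul_of_nonneg_left main hA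
    _ = _ := by ring

end ZP

namespace ZP
open Complex Filter Topology

lemma zeta_bds {σ : ℝ} (hσ : 1 < σ) : ∃ M : ℝ, 1 ≤ M ∧ ∀ w : ℂ, σ ≤ w.re →
    ‖riemannZeta w‖ ≤ M ∧ 1 ≤ M * ‖riemannZeta w‖ := by
  have hS : Summable (fun n : ℕ => 1 / (n:ℝ) ^ σ) := Real.summable_one_div_nat_rpow.mpr hσ
  have bd : ∀ f : ℕ → ℂ, (∀ n, ‖f n‖ ≤ 1) → ∀ w : ℂ, σ ≤ w.re → ‖LSeries f w‖ ≤ ∑' n : ℕ, 1 / (n:ℝ) ^ σ := by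
    intro f hf w hw
    refine tsum_of_norm_bounded hS.hasSum fun n => ?_
    rcases Nat.eq_zero_or_pos n with rfl | hn
    · simp; positivity
    have hn' : (1:ℝ) ≤ n := by exact_mod_cast hn
    rw [LSeries.norm_term_eq, if_neg hn.ne']
    have h1 : (n:ℝ) ^ σ ≤ (n:ℝ) ^ w.re := Real.rpow_le_rpow_of_exponent_le hn' hw
    have h2 : 0 < (n:ℝ) ^ σ := by positivity
    exact div_le_div₀ zero_le_one (hf n) h2 h1
  refine ⟨max 1 (∑' n : ℕ, 1 / (n:ℝ) ^ σ), le_max_left _ _, fun w hw => ?_⟩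
  have hw1 : 1 < w.re := by linarith
  have h1 := bd (fun n => ((ArithmeticFunction.zeta n : ℕ) : ℂ)) (fun n => by
    rw [ArithmeticFunction.zeta_apply]; split_ifs <;> simp) w hw
  have h2 := bd (fun n => ((ArithmeticFunction.moebius n : ℤ) : ℂ)) (fun n => by
    rw [Complex.norm_intCast]
    exact_mod_cast ArithmeticFunction.abs_moebius_le_one) w hw
  have h3 := ArithmeticFunction.LSeries_zeta_mul_Lseries_moebius hw1
  have h4 := congrArg norm h3
  rw [norm_mul, norm_one, ArithmeticFunction.LSeries_zeta_eq_riemannZeta hw1] at h4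
  rw [ArithmeticFunction.LSeries_zeta_eq_riemannZeta hw1] at h1
  refine ⟨h1.trans (le_max_right _ _), ?_⟩
  have h5 := h2.trans (le_max_right 1 (∑' n : ℕ, 1 / (n:ℝ) ^ σ))
  calc (1:ℝ) = ‖riemannZeta w‖ * ‖LSeries (fun n => ((ArithmeticFunction.moebius n : ℤ) : ℂ)) w‖ := h4.symm
    _ ≤ ‖riemannZeta w‖ * max 1 (∑' n : ℕ, 1 / (n:ℝ) ^ σ) := by gcongr
    _ = _ := mul_comm _ _

lemma norm_Gammaℝ (x y : ℝ) : ‖Gammaℝ (x + y * I)‖ = Real.pi ^ (-x/2) * ‖Complex.Gamma ((x/2 : ℝ) + (y/2 : ℝ) * I)‖ := by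
  rw [Gammaℝ_def, norm_mul, norm_cpow_eq_rpow_re_of_pos Real.pi_pos]
  congr 2
  · simp
  · congr 1; push_cast; ring

lemma chi_lower {σ : ℝ} (hσ : 1 < σ) : ∃ M C : ℝ, 0 < M ∧ 0 ≤ C ∧ ∀ w : ℂ, σ ≤ w.re →
    1 ≤ M * Real.exp (C * ‖w‖ ^ (3/2:ℝ)) * ‖chi w‖ := by
  obtain ⟨M, hM, hz⟩ := zeta_bds hσ
  obtain ⟨C, hC, hg⟩ := gamma_lower
  refine ⟨M * M, C, by positivity, hC, fun w hw => ?_⟩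
  set x := w.re with hx
  set y := w.im with hy
  have hwe : w = x + y * I := (re_add_im w).symm
  have hx1 : 1 < x := by linarith
  have hx1' : (x:ℂ) ≠ 1 := by exact_mod_cast hx1.ne'
  have hw1 : w ≠ 1 := by rintro rfl; simp at hx; linarith
  have a1 : 1 ≤ ‖chi x‖ := by
    rw [chi_ofReal, norm_real, Real.norm_eq_abs]
    exact (chi_ge_one hx1.le).trans (le_abs_self _)
  rw [chi_eq_zeta (by simpa using by linarith) hx1', norm_mul, norm_mul, norm_mul] at a1
  have a2 : ‖Gammaℝ x‖ ≤ ‖Gammaℝ w‖ * Real.exp (C * ‖w‖ ^ (3/2:ℝ)) := by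
    have e := norm_Gammaℝ x 0
    have e' := norm_Gammaℝ x y
    have e3 := hg (x/2) (y/2) (by linarith)
    rw [← hwe] at e'
    simp only [ofReal_zero, zero_mul, add_zero, zero_div] at e
    rw [e, e', Complex.Gamma_ofReal, norm_real, Real.norm_of_nonneg (Real.Gamma_pos_of_pos (by linarith)).le, mul_assoc]
    refine mul_le_mul_of_nonneg_left (e3.trans ?_) (by positivity)
    have : |y/2| ≤ ‖w‖ := by
      rw [abs_div, abs_two]
      have := abs_im_le_norm w
      rw [← hy] at this
      linarith [abs_nonneg y]
    gcongr
  have a3 : ‖(x:ℂ)‖ ≤ ‖w‖ := by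
    rw [norm_real, hx]; exact abs_re_le_norm w
  have a4 : ‖(x:ℂ) - 1‖ ≤ ‖w - 1‖ := by
    have := abs_re_le_norm (w - 1)
    rw [sub_re, one_re, ← hx] at this
    rwa [← ofReal_one, ← ofReal_sub, norm_real, Real.norm_eq_abs]
  have a5 := (hz x (by simpa using hw)).1
  have a6 := (hz w hw).2
  have a7 : 1 ≤ ‖w‖ * ‖w - 1‖ * ((‖Gammaℝ w‖ * Real.exp (C * ‖w‖ ^ (3/2:ℝ))) * M) := by
    refine a1.trans ?_
    gcongr
  rw [chi_eq_zeta (by linarith) hw1, norm_mul, norm_mul, norm_mul]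
  calc (1:ℝ) ≤ ‖w‖ * ‖w - 1‖ * ((‖Gammaℝ w‖ * Real.exp (C * ‖w‖ ^ (3/2:ℝ))) * M) * (M * ‖riemannZeta w‖) := by
        nlinarith
    _ = _ := by ring

lemma chi_upper : ∃ M : ℝ, 0 < M ∧ ∀ w : ℂ, ‖chi w‖ ≤ M * Real.exp (3 * (‖w‖ + 2) ^ (3/2:ℝ)) := by
  obtain ⟨M, hM, hz⟩ := zeta_bds (σ := 2) (by norm_num)
  refine ⟨8 * M, by positivity, fun w => ?_⟩
  set n : ℕ := ⌈‖w‖⌉₊ + 1 with hn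
  have hn1 : (1:ℝ) ≤ n := by rw [hn]; push_cast; linarith [Nat.cast_nonneg (α := ℝ) ⌈‖w‖⌉₊]
  have hnw : ‖w‖ + 1 ≤ n := by rw [hn]; push_cast; linarith [Nat.le_ceil ‖w‖]
  have hnw' : (n:ℝ) ≤ ‖w‖ + 2 := by rw [hn]; push_cast; linarith [Nat.ceil_lt_add_one (norm_nonneg w)]
  set T : ℝ := (2 * n - 1/2)^2 with hT
  have hZ : ‖(w - 1/2)^2‖ ≤ T := by
    rw [norm_pow, hT]
    have : ‖w - 1/2‖ ≤ ‖w‖ + 1/2 := by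
      refine (norm_sub_le _ _).trans (by norm_num)
    exact pow_le_pow_left₀ (norm_nonneg _) (by linarith) 2
  have hf : ‖fL ((w - 1/2)^2)‖ ≤ (fL (T:ℝ)).re :=
    (fL_NP.norm_le _).trans (fL_NP.mono (norm_nonneg _) hZ)
  have hT2 : 9/4 ≤ T := by rw [hT]; nlinarith
  have hfT : 0 ≤ (fL (T:ℝ)).re := fL_NP.nonneg (by linarith)
  have c1 : ‖chi w‖ ≤ (T + 1/4) * (fL (T:ℝ)).re + 1 := by
    rw [chi_eq_fL]
    refine (norm_add_le _ _).trans ?_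
    rw [norm_mul, norm_one]
    have : ‖(w - 1/2)^2 - 1/4‖ ≤ T + 1/4 := (norm_sub_le _ _).trans (by
      have : ‖(1/4:ℂ)‖ = 1/4 := by norm_num
      linarith)
    gcongr
  have c2 : (chi ((2 * n : ℝ) : ℝ)).re = (T - 1/4) * (fL (T:ℝ)).re + 1 := by
    rw [chi_re_formula]
  have c3 : ‖chi w‖ ≤ 2 * (chi ((2 * n : ℝ) : ℝ)).re := by
    rw [c2]; nlinarith
  have hne : (((2 * n : ℝ) : ℝ) : ℂ) ≠ 1 := by
    intro h
    have : (2 * n : ℝ) = 1 := by exact_mod_cast h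
    linarith
  have c4 : (chi ((2 * n : ℝ) : ℝ)).re ≤ (2 * n) * (2 * n) * ((n - 1).factorial * M) := by
    refine (re_le_norm _).trans ?_
    rw [chi_eq_zeta (by simpa using by linarith) hne, norm_mul, norm_mul, norm_mul]
    have g1 := norm_Gammaℝ (2 * n) 0
    simp only [ofReal_zero, zero_mul, add_zero, zero_div] at g1
    rw [g1, show (2 * (n:ℝ) / 2) = n by ring]
    have g2 : Complex.Gamma ((n:ℝ) : ℂ) = ((n-1).factorial : ℂ) := by
      have := Complex.Gamma_nat_eq_factorial (n - 1)
      rw [← this]; congr 1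
      rw [hn]; simp
    rw [g2, Complex.norm_natCast]
    have g3 : Real.pi ^ (-(2 * (n:ℝ)) / 2) ≤ 1 :=
      Real.rpow_le_one_of_one_le_of_nonpos (by linarith [Real.pi_gt_three]) (by linarith)
    have g4 := (hz ((2 * n : ℝ) : ℝ) (by rw [ofReal_re]; linarith)).1
    have g5 : ‖((2 * n : ℝ) : ℂ)‖ = 2 * n := by rw [norm_real, Real.norm_of_nonneg (by linarith)]
    have g6 : ‖((2 * n : ℝ) : ℂ) - 1‖ ≤ 2 * n := by
      rw [← ofReal_one, ← ofReal_sub, norm_real, Real.norm_of_nonneg (by linarith)]; linarith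
    rw [g5]
    have g7 : Real.pi ^ (-(2 * (n:ℝ)) / 2) * ((n-1).factorial:ℝ) ≤ (n-1).factorial := by
      have : (0:ℝ) ≤ (n-1).factorial := by positivity
      nlinarith
    gcongr
  have c5 : (n:ℝ) * (n - 1).factorial = n.factorial := by
    rw [hn]; simp [Nat.factorial_succ]
  have c6 : (n.factorial : ℝ) ≤ (n:ℝ) ^ n := by exact_mod_cast Nat.factorial_le_pow n
  have c7 : (n:ℝ) * (n:ℝ) ^ n ≤ Real.exp (3 * (n:ℝ) ^ (3/2:ℝ)) := by
    have l1 : (n:ℝ) ≤ Real.exp ((n:ℝ) ^ (3/2:ℝ)) := by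
      have : (n:ℝ) ≤ (n:ℝ) ^ (3/2:ℝ) := by
        conv_lhs => rw [← Real.rpow_one (n:ℝ)]
        exact Real.rpow_le_rpow_of_exponent_le hn1 (by norm_num)
      have := Real.add_one_le_exp ((n:ℝ) ^ (3/2:ℝ))
      linarith
    have l2 : (n:ℝ) ^ n ≤ Real.exp (2 * (n:ℝ) ^ (3/2:ℝ)) := by
      have h := Real.log_le_rpow_div (x := n) (ε := 1/2) (by linarith) (by norm_num)
      rw [← Real.exp_log (show (0:ℝ) < (n:ℝ)^n by positivity), Real.log_pow]
      apply Real.exp_le_exp.mpr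
      have : (n:ℝ) ^ (3/2:ℝ) = n * (n:ℝ) ^ (1/2:ℝ) := by
        rw [show (3/2:ℝ) = 1 + 1/2 by norm_num, Real.rpow_add (by linarith), Real.rpow_one]
      rw [this]
      have : Real.log n ≤ 2 * (n:ℝ) ^ (1/2:ℝ) := by linarith
      nlinarith
    calc _ ≤ Real.exp ((n:ℝ) ^ (3/2:ℝ)) * Real.exp (2 * (n:ℝ) ^ (3/2:ℝ)) := by gcongr
      _ = _ := by rw [← Real.exp_add]; congr 1; ring
  have c8 : Real.exp (3 * (n:ℝ) ^ (3/2:ℝ)) ≤ Real.exp (3 * (‖w‖ + 2) ^ (3/2:ℝ)) := by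
    gcongr
  calc ‖chi w‖ ≤ 2 * ((2 * n) * (2 * n) * ((n - 1).factorial * M)) := by linarith
    _ = 8 * M * (n * (n * (n-1).factorial)) := by ring
    _ ≤ 8 * M * (n * (n:ℝ)^n) := by rw [c5]; gcongr
    _ ≤ _ := by
      have := c7.trans c8
      gcongr

/-- Phragmén–Lindelöf for the quotient `chi (w - δ) / chi w`. -/
lemma inner_pl {δ : ℝ} (hδ : 1 < δ) {w : ℂ} (hw : (1 + δ) / 2 ≤ w.re) : ‖chi (w - δ)‖ ≤ ‖chi w‖ := by
  set σ := (1 + δ)/2 with hσ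
  have hσ1 : 1 < σ := by rw [hσ]; linarith
  have hne : ∀ z : ℂ, 0 ≤ z.re → chi (z + σ) ≠ 0 := fun z hz => chi_ne_zero (by simp; linarith)
  have key : ∀ z : ℂ, 0 ≤ z.re → ‖chi (z + σ - δ) / chi (z + σ)‖ ≤ 1 := by
    intro z hz
    refine PhragmenLindelof.right_half_plane_of_bounded_on_real (f := fun z => chi (z + σ - δ) / chi (z + σ)) ?_ ?_ ?_ ?_ hz
    · apply DifferentiableOn.diffContOnCl
      rw [closure_setOfPred_lt_re]
      intro z hz
      have h1 : DifferentiableAt ℂ (fun z => chi (z + σ - δ)) z :=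
        (chi_diff _).comp z (by fun_prop)
      have h2 : DifferentiableAt ℂ (fun z => chi (z + σ)) z :=
        (chi_diff _).comp z (by fun_prop)
      exact (h1.div h2 (hne z hz)).differentiableWithinAt
    · obtain ⟨M, hM, hU⟩ := chi_upper
      obtain ⟨N, C, hN, hC, hLo⟩ := chi_lower hσ1
      refine ⟨3/2, by norm_num, 3 * 2 ^ (3/2:ℝ) + C * 2 ^ (3/2:ℝ), ?_⟩
      refine Asymptotics.IsBigO.of_bound (M * N) ?_
      have hev : ∀ᶠ z : ℂ in Bornology.cobounded ℂ, σ + δ + 2 ≤ ‖z‖ :=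
        (tendsto_norm_cobounded_atTop.eventually_ge_atTop _)
      filter_upwards [hev.filter_mono inf_le_left, mem_inf_of_right (mem_principal_self _)] with z h1 h2
      have hz0 : 0 < z.re := h2
      have b1 := hU (z + σ - δ)
      have b2 := hLo (z + σ) (by simp; linarith)
      have nσ : ‖(σ:ℂ)‖ = σ := by rw [norm_real, Real.norm_of_nonneg (by linarith)]
      have nδ : ‖(δ:ℂ)‖ = δ := by rw [norm_real, Real.norm_of_nonneg (by linarith)]
      have n1 : ‖z + σ - δ‖ + 2 ≤ 2 * ‖z‖ := by
        have := norm_sub_le (z + σ) δ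
        have := norm_add_le z σ
        linarith
      have n2 : ‖z + σ‖ ≤ 2 * ‖z‖ := by
        have := norm_add_le z σ
        linarith
      have p0 : 0 < ‖chi (z + σ)‖ := norm_pos_iff.mpr (hne z hz0.le)
      rw [norm_div, div_le_iff₀ p0, Real.norm_of_nonneg (Real.exp_pos _).le]
      have m1 : (‖z + σ - δ‖ + 2) ^ (3/2:ℝ) ≤ 2 ^ (3/2:ℝ) * ‖z‖ ^ (3/2:ℝ) := by
        rw [← Real.mul_rpow (by norm_num) (norm_nonneg _)]; gcongr
      have m2 : ‖z + σ‖ ^ (3/2:ℝ) ≤ 2 ^ (3/2:ℝ) * ‖z‖ ^ (3/2:ℝ) := by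
        rw [← Real.mul_rpow (by norm_num) (norm_nonneg _)]; gcongr
      have m3 : Real.exp (3 * (‖z + σ - δ‖ + 2) ^ (3/2:ℝ)) ≤ Real.exp (3 * (2 ^ (3/2:ℝ) * ‖z‖ ^ (3/2:ℝ))) := by gcongr
      have m4 : Real.exp (C * ‖z + σ‖ ^ (3/2:ℝ)) ≤ Real.exp (C * (2 ^ (3/2:ℝ) * ‖z‖ ^ (3/2:ℝ))) := by gcongr
      have m5 : 1 ≤ N * Real.exp (C * (2 ^ (3/2:ℝ) * ‖z‖ ^ (3/2:ℝ))) * ‖chi (z + σ)‖ :=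
        b2.trans (by gcongr)
      have m6 : ‖chi (z + σ - δ)‖ ≤ M * Real.exp (3 * (2 ^ (3/2:ℝ) * ‖z‖ ^ (3/2:ℝ))) := b1.trans (by gcongr)
      calc ‖chi (z + σ - δ)‖ ≤ M * Real.exp (3 * (2 ^ (3/2:ℝ) * ‖z‖ ^ (3/2:ℝ))) * 1 := by linarith
        _ ≤ M * Real.exp (3 * (2 ^ (3/2:ℝ) * ‖z‖ ^ (3/2:ℝ))) * (N * Real.exp (C * (2 ^ (3/2:ℝ) * ‖z‖ ^ (3/2:ℝ))) * ‖chi (z + σ)‖) := by gcongr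
        _ = _ := by
          rw [show (3 * 2 ^ (3/2:ℝ) + C * 2 ^ (3/2:ℝ)) * ‖z‖ ^ (3/2:ℝ) = 3 * (2 ^ (3/2:ℝ) * ‖z‖ ^ (3/2:ℝ)) + C * (2 ^ (3/2:ℝ) * ‖z‖ ^ (3/2:ℝ)) by ring, Real.exp_add]
          ring
    · refine ⟨1, ?_⟩
      rw [eventually_map]
      filter_upwards [eventually_ge_atTop (1 + δ)] with x hx
      have q1 : (x:ℂ) + σ - δ = ((x + σ - δ : ℝ) : ℂ) := by push_cast; ring
      have q2 : (x:ℂ) + σ = ((x + σ : ℝ) : ℂ) := by push_cast; ring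
      have r1 := chi_ge_one (x := x + σ - δ) (by linarith)
      have r2 := chi_mono (x := x + σ - δ) (y := x + σ) (by linarith) (by linarith)
      rw [q1, q2, chi_ofReal, chi_ofReal (x + σ), norm_div, norm_real, norm_real,
        Real.norm_of_nonneg (by linarith), Real.norm_of_nonneg (by linarith)]
      exact div_le_one_of_le₀ r2 (by linarith)
    · intro y
      have : chi (y * I + σ - δ) = (starRingEnd ℂ) (chi (y * I + σ)) := by
        rw [← chi_conj, ← chi_one_sub]
        congr 1
        have e : (starRingEnd ℂ) ((y:ℂ) * I + σ) = -(y * I) + σ := by simp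
        rw [e, hσ]
        push_cast
        ring
      simp only [this, norm_div, RCLike.norm_conj]
      exact div_self_le_one _
  have hk := key (w - σ) (by simp; linarith)
  rw [sub_add_cancel, norm_div] at hk
  have p0 : 0 < ‖chi w‖ := norm_pos_iff.mpr (chi_ne_zero (by linarith))
  rwa [div_le_one p0] at hk

/-- The case `δ = 1`. -/
lemma inner_one {w : ℂ} (hw : 1 ≤ w.re) : ‖chi (w - 1)‖ ≤ ‖chi w‖ := by
  rcases hw.eq_or_lt with h | h
  · have : chi (w - 1) = (starRingEnd ℂ) (chi w) := by
      rw [← chi_conj, ← chi_one_sub]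
      congr 1
      apply Complex.ext <;> simp <;> linarith
    rw [this, RCLike.norm_conj]
  · have t : Tendsto (fun δ : ℝ => ‖chi (w - δ)‖) (𝓝[>] 1) (𝓝 ‖chi (w - (1:ℝ))‖) := by
      have hc : Continuous (fun δ : ℝ => ‖chi (w - δ)‖) :=
        (chi_diff.continuous.comp (by fun_prop)).norm
      exact (hc.tendsto 1).mono_left nhdsWithin_le_nhds
    rw [ofReal_one] at t
    refine le_of_tendsto t ?_
    have : Set.Ioo (1:ℝ) (2 * w.re - 1) ∈ 𝓝[>] (1:ℝ) := Ioo_mem_nhdsGT (by linarith)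
    filter_upwards [this] with δ hδ
    exact inner_pl hδ.1 (by linarith [hδ.2])

lemma inner_two {w : ℂ} (hw : 3/2 ≤ w.re) : ‖chi (w - 2)‖ ≤ ‖chi w‖ := by
  have := inner_pl (δ := 2) (by norm_num) (w := w) (by linarith)
  simpa using this

end ZP

namespace ZP

lemma pick_norm {H : ℂ} {β : ℝ} (hβ : |β| < 1) (hH : ‖H‖ ≤ 1) : ‖(H - β) / (1 - β * H)‖ ≤ 1 := by
  have h1 : ‖H - β‖ ^ 2 ≤ ‖1 - β * H‖ ^ 2 := by
    have h2 : ‖H‖ ^ 2 ≤ 1 := by nlinarith [norm_nonneg H]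
    rw [Complex.sq_norm, Complex.normSq_apply] at *
    rw [Complex.sq_norm, Complex.normSq_apply]
    simp
    have h3 : β ^ 2 < 1 := by rw [← sq_abs]; nlinarith [abs_nonneg β]
    nlinarith
  rw [norm_div]
  apply div_le_one_of_le₀ _ (norm_nonneg _)
  exact abs_le_of_sq_le_sq' h1 (norm_nonneg _) |>.2

lemma pick_ne {H : ℂ} {β : ℝ} (hβ : |β| < 1) (hH : ‖H‖ ≤ 1) : 1 - β * H ≠ 0 := by
  intro h
  have : ‖(β:ℂ) * H‖ = 1 := by rw [show (β:ℂ) * H = 1 by linear_combination -h]; simp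
  rw [norm_mul] at this
  simp at this
  nlinarith [abs_nonneg β, norm_nonneg H]

lemma schwarz_pick {H : ℂ → ℂ} {w0 β : ℝ} (hw0 : 1 < w0)
    (hd : ∀ w : ℂ, 1 < w.re → DifferentiableAt ℂ H w) (hb : ∀ w : ℂ, 1 < w.re → ‖H w‖ ≤ 1)
    (hβ : |β| < 1) (h0 : H w0 = β) :
    ∃ G : ℂ → ℂ, (∀ w : ℂ, 1 < w.re → DifferentiableAt ℂ G w) ∧ (∀ w : ℂ, 1 < w.re → ‖G w‖ ≤ 1) ∧
      ∀ w : ℂ, 1 < w.re → 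
        H w * (1 + β * ((w - w0) / (w - 2 + w0) * G w)) = β + (w - w0) / (w - 2 + w0) * G w := by
  set W : ℂ → ℂ := fun u => 1 + (w0 - 1) * (1 + u) / (1 - u) with hW
  have hne : ∀ u : ℂ, ‖u‖ < 1 → 1 - u ≠ 0 := by
    intro u hu h
    have : u = 1 := by linear_combination -h
    rw [this] at hu; simp at hu
  have hWre : ∀ u : ℂ, ‖u‖ < 1 → 1 < (W u).re := by
    intro u hu
    have h1 := hne u hu
    have e : W u = ((1:ℝ):ℂ) + ((w0 - 1 : ℝ):ℂ) * ((1 + u) / (1 - u)) := by simp [hW]; ring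
    have e2 : ((1 + u) / (1 - u)).re = (1 - ‖u‖ ^ 2) / normSq (1 - u) := by
      rw [Complex.div_re, Complex.sq_norm, Complex.normSq_apply u]
      simp; ring
    rw [e, Complex.add_re, Complex.re_ofReal_mul, e2, Complex.ofReal_re]
    have : 0 < normSq (1 - u) := Complex.normSq_pos.2 h1
    have : 0 < (1 - ‖u‖ ^ 2) / normSq (1 - u) := div_pos (by nlinarith [norm_nonneg u]) this
    nlinarith
  set K : ℂ → ℂ := fun w => (H w - β) / (1 - β * H w) with hK
  have hKd : ∀ w : ℂ, 1 < w.re → DifferentiableAt ℂ K w := fun w hw => by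
    have := hd w hw
    exact (this.sub_const _).div ((this.const_mul _).const_sub _) (pick_ne hβ (hb w hw))
  set T : ℂ → ℂ := fun u => K (W u) with hT
  have hT0 : T 0 = 0 := by
    have : W 0 = w0 := by simp [hW]
    simp [hT, this, hK, h0]
  have hTd : DifferentiableOn ℂ T (Metric.ball 0 1) := by
    intro u hu
    have hu : ‖u‖ < 1 := by simpa using hu
    apply DifferentiableAt.differentiableWithinAt
    apply DifferentiableAt.comp u (hKd _ (hWre u hu))
    have := hne u hu
    simp only [hW]
    fun_prop (disch := exact this)
  have hTm : Set.MapsTo T (Metric.ball 0 1) (Metric.closedBall (T 0) 1) := by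
    intro u hu
    have hu : ‖u‖ < 1 := by simpa using hu
    rw [hT0, mem_closedBall_zero_iff]
    exact pick_norm hβ (hb _ (hWre u hu))
  set B : ℂ → ℂ := fun w => (w - w0) / (w - 2 + w0) with hB
  have hden : ∀ w : ℂ, 1 < w.re → w - 2 + w0 ≠ 0 := by
    intro w hw h
    have := congrArg Complex.re h
    simp at this; linarith
  have hBn : ∀ w : ℂ, 1 < w.re → ‖B w‖ < 1 := by
    intro w hw
    rw [hB]; simp only
    rw [norm_div, div_lt_one (norm_pos_iff.2 (hden w hw))]
    apply lt_of_pow_lt_pow_left₀ 2 (norm_nonneg _)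
    rw [Complex.sq_norm, Complex.sq_norm, Complex.normSq_apply, Complex.normSq_apply]
    simp; nlinarith
  have hWB : ∀ w : ℂ, 1 < w.re → W (B w) = w := by
    intro w hw
    have h1 := hden w hw
    have h2 := hne _ (hBn w hw)
    have h3 : (w0:ℂ) - 1 ≠ 0 := by
      intro h
      have := congrArg Complex.re h
      simp at this; linarith
    have e : 1 - B w = 2 * (w0 - 1) / (w - 2 + w0) := by
      simp only [hB]; field_simp; ring
    have e2 : 1 + B w = 2 * (w - 1) / (w - 2 + w0) := by
      simp only [hB]; field_simp; ring
    simp only [hW]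
    rw [e, e2]
    field_simp; ring
  refine ⟨fun w => dslope T 0 (B w), ?_, ?_, ?_⟩
  · intro w hw
    have h1 : DifferentiableOn ℂ (dslope T 0) (Metric.ball 0 1) :=
      (Complex.differentiableOn_dslope (Metric.ball_mem_nhds _ one_pos)).2 hTd
    have h2 : DifferentiableAt ℂ (dslope T 0) (B w) :=
      h1.differentiableAt (Metric.isOpen_ball.mem_nhds (by simpa using hBn w hw))
    apply DifferentiableAt.comp w h2
    have := hden w hw
    simp only [hB]
    fun_prop (disch := exact this)
  · intro w hw
    have := Complex.norm_dslope_le_div_of_mapsTo_ball hTd hTm (z := B w) (by simpa using hBn w hw)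
    simpa using this
  · intro w hw
    have e : B w * dslope T 0 (B w) = K w := by
      have := sub_smul_dslope T 0 (B w)
      simp only [sub_zero, hT0, smul_eq_mul] at this
      rw [this]; simp only [hT, hWB w hw]
    change H w * (1 + β * (B w * dslope T 0 (B w))) = β + B w * dslope T 0 (B w)
    rw [e]
    have := pick_ne hβ (hb w hw)
    have h3 : K w * (1 - β * H w) = H w - β := div_mul_cancel₀ _ this
    linear_combination -h3

/-- `F` data: values of `F(w) = χ(w-1)/χ(w)`. -/
lemma F_data {b1 b2 : ℝ} (h1 : |b1| < 1) (h2 : |b2| < 1) (e1 : chi 1 = b1 * chi 2)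
    (e2 : chi 2 * (3 + b1 * b2) = (3 * b1 + b2) * chi 3) (hh : 3 + b1 * b2 ≠ 0) {w : ℂ} (hw : 1 < w.re) :
    ∃ G ζ : ℂ, ‖G‖ ≤ 1 ∧ ‖ζ‖ ≤ 1 ∧ ‖chi (w - 1) / chi w‖ ≤ 1 ∧ 
      chi (w - 1) / chi w * (1 + b1 * ((w - 2) / w * G)) = b1 + (w - 2) / w * G ∧
      G * (1 + b2 * ((w - 3) / (w + 1) * ζ)) = b2 + (w - 3) / (w + 1) * ζ := by
  have hb : ∀ w : ℂ, 1 < w.re → ‖chi (w - 1) / chi w‖ ≤ 1 := by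
    intro w hw
    rw [norm_div]
    exact div_le_one_of_le₀ (inner_one hw.le) (norm_nonneg _)
  have c2 : chi 2 ≠ 0 := chi_ne_zero (by norm_num)
  have c3 : chi 3 ≠ 0 := chi_ne_zero (by norm_num)
  obtain ⟨G, Gd, Gb, Ge⟩ := schwarz_pick (H := fun w => chi (w - 1) / chi w) (w0 := 2) (β := b1) (by norm_num)
    (fun w hw => (chi_diff.comp (differentiable_id.sub_const 1)).differentiableAt.div (chi_diff w)
      (chi_ne_zero hw.le)) hb h1 (by norm_num [e1, c2])
  have hG3 : G (3:ℝ) = b2 := by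
    have := Ge 3 (by norm_num)
    norm_num at this
    have h3 : chi 2 / chi 3 * (3 + b1 * b2) = (3 * b1 + b2) := by
      field_simp; linear_combination e2
    have h4 : (3 + b1 * b2 : ℂ) ≠ 0 := by exact_mod_cast hh
    have h5 : (1 - (b1:ℂ)^2) ≠ 0 := by
      have : b1 ^ 2 < 1 := by rw [← sq_abs]; nlinarith [abs_nonneg b1]
      have : (1 - b1 ^ 2) ≠ 0 := by linarith
      exact_mod_cast this
    rw [eq_div_of_mul_eq h4 h3] at this
    field_simp at this
    have : (1 - (b1:ℂ)^2) * (G 3 - b2) = 0 := by linear_combination (-1/3) * this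
    have := (mul_eq_zero.1 this).resolve_left h5
    norm_num; linear_combination this
  obtain ⟨Q, Qd, Qb, Qe⟩ := schwarz_pick (H := G) (w0 := 3) (β := b2) (by norm_num) Gd Gb h2 hG3
  refine ⟨G w, Q w, Gb w hw, Qb w hw, hb w hw, ?_, ?_⟩
  · have := Ge w hw
    simpa using this
  · have := Qe w hw
    rw [show w + 1 = w - 2 + (3:ℝ) by push_cast; ring]
    simpa using this
end ZP

namespace ZP

structure Ball where
  re : Int
  im : Int
  r : Nat

abbrev bS : Nat := 1000000000000000000000000000000
abbrev bSS : Nat := 1000000000000000000000000000000000000000000000000000000000000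
abbrev bSh : Nat := 500000000000000000000000000000

def fN {α : Type} (n : Nat) (k : Nat → α) : α :=
  Nat.casesOn n (k 0) fun m => k (Nat.succ m)

def fI {α : Type} (z : Int) (k : Int → α) : α :=
  Int.casesOn z (fun n => fN n fun n => k (Int.ofNat n)) (fun n => fN n fun n => k (Int.negSucc n))

def fB {α : Type} (b : Ball) (k : Ball → α) : α :=
  Ball.casesOn b fun x y r => fI x fun x => fI y fun y => fN r fun r => k (Ball.mk x y r)

theorem fN_eq {α : Type} (n : Nat) (k : Nat → α) : fN n k = k n := by cases n <;> rfl
theorem fI_eq {α : Type} (n : Int) (k : Int → α) : fI n k = k n := by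
  cases n <;> simp [fI, fN_eq]
theorem fB_eq {α : Type} (b : Ball) (k : Ball → α) : fB b k = k b := by
  simp [fB, fN_eq, fI_eq]

def bnd (n g : Nat) : Nat := Nat.succ (Nat.div (Nat.add g (Nat.div n g)) 2)

def babs (x y : Int) : Nat :=
  fN (Int.natAbs x) fun a => fN (Int.natAbs y) fun b =>
    fN (Nat.add (Nat.mul a a) (Nat.mul b b)) fun n =>
      fN (Bool.casesOn (Nat.ble a b) (Nat.succ (Nat.add a (Nat.div (Nat.mul b 53) 128)))
         (Nat.succ (Nat.add b (Nat.div (Nat.mul a 53) 128)))) fun g =>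
        fN (bnd n g) fun g => bnd n g

def badd (a b : Ball) : Ball :=
  Ball.casesOn a fun x y r => Ball.casesOn b fun x' y' r' =>
    Ball.mk (Int.add x x') (Int.add y y') (Nat.add r r')
def bsub (a b : Ball) : Ball :=
  Ball.casesOn a fun x y r => Ball.casesOn b fun x' y' r' =>
    Ball.mk (Int.sub x x') (Int.sub y y') (Nat.add r r')
def bconj (a : Ball) : Ball := Ball.casesOn a fun x y r => Ball.mk x (Int.neg y) r
def bmul (a b : Ball) : Ball :=
  Ball.casesOn a fun x y r => Ball.casesOn b fun x' y' r' =>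
  Ball.mk (Int.ediv (Int.sub (Int.mul x x') (Int.mul y y')) (Int.ofNat bS))
    (Int.ediv (Int.add (Int.mul x y') (Int.mul y x')) (Int.ofNat bS))
    (Nat.add (Nat.div (Nat.add (Nat.mul (babs x y) r') (Nat.mul r (Nat.add (babs x' y') r'))) bS) 3)

def binv (a : Ball) (k : Ball → Bool) : Bool :=
  Ball.casesOn a fun x y r =>
  Int.casesOn (Int.sub (Int.add (Int.mul x x) (Int.mul y y)) (Int.ofNat (Nat.mul r r)))
    (fun D => fN D fun D => Nat.casesOn D false fun _ =>
      fB (Ball.mk (Int.ediv (Int.mul x (Int.ofNat bSS)) (Int.ofNat D))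
        (Int.ediv (Int.mul (Int.neg y) (Int.ofNat bSS)) (Int.ofNat D))
        (Nat.add (Nat.div (Nat.mul r bSS) D) 3)) k)
    (fun _ => false)
def bone : Ball := Ball.mk (Int.ofNat bS) 0 0
def btwo : Ball := Ball.mk (Int.ofNat 2000000000000000000000000000000) 0 0
def bU : Ball := Ball.mk 0 0 bS
/-- the ball around n/4 -/
def brat4 (n : Nat) : Ball := Ball.mk (Int.ofNat (Nat.mul n 250000000000000000000000000000)) 0 0

def bline (cn : Int) (k : Int) (t0 : Int) (h : Nat) : Ball :=
  Ball.mk (Int.mul cn (Int.ofNat bSh)) (Int.mul k t0) (Nat.mul (Int.natAbs k) h)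

def bB (w p : Ball) (k : Ball → Bool) : Bool :=
  fB (bsub w p) fun x => fB (badd w p) fun y => binv y fun y => fB (bmul x y) k

/-- `ib - e / (1 + b x)`, `ib = 1/b`, `e = 1/b - b` -/
def bmob (b ib e x : Ball) (k : Ball → Bool) : Bool :=
  fB (bmul b x) fun y => fB (badd bone y) fun y => binv y fun y => fB (bmul e y) fun y => fB (bsub ib y) k

structure Cst where
  (A b1 ib1 e1 b2 ib2 e2 g d0 d1 d2 d3 d4 d5 d6 : Ball)

def bF (C : Cst) (w : Ball) (k : Ball → Bool) : Bool :=
  bB w btwo fun x => fB (bmul x bU) fun x => bmob C.b2 C.ib2 C.e2 x fun y =>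
  bB w bone fun x => fB (bmul x y) fun x => bmob C.b1 C.ib1 C.e1 x k

def bstep (d x X h : Ball) : Ball := fB (bsub x X) fun y => fB (bmul y h) fun y => badd d y

def bchi (C : Cst) (x : Ball) : Ball :=
  fB (bstep C.d5 x (brat4 529) C.d6) fun h =>
  fB (bstep C.d4 x (brat4 361) h) fun h =>
  fB (bstep C.d3 x (brat4 225) h) fun h =>
  fB (bstep C.d2 x (brat4 121) h) fun h =>
  fB (bstep C.d1 x (brat4 49) h) fun h =>
  fB (bstep C.d0 x (brat4 9) h) fun h =>
  bstep bone x (brat4 1) h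

def bth (C : Cst) (t0 : Int) (h : Nat) (k : Ball → Bool) : Bool :=
  fB (bline 1 2 t0 h) fun z => fB (bmul z z) fun x => fB (bchi C x) fun c => binv c fun d => fB (bmul (bconj c) d) k

/-- final test -/
def btest (b : Ball) : Bool := Ball.casesOn b fun x _ r =>
  Int.casesOn (Int.sub x (Int.ofNat r)) (fun n => Nat.ble 31250000000000000000000000000 n) (fun _ => false)

def bmain (C : Cst) (t0 : Int) (h : Nat) (th : Ball) : Bool :=
  fB (bline 1 1 t0 h) fun s =>
  bF C s fun a =>
  fB (bline 1 3 t0 h) fun s3 =>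
  bF C s3 fun c =>
  fB (bline 8 1 t0 h) fun m1 =>
  fB (bline 40 (-1) t0 h) fun m2 =>
  fB (bmul (bconj s) m1) fun mu =>
  fB (bmul mu m2) fun mu =>
  fB (bsub s bone) fun sm1 =>
  fB (bsub s btwo) fun sm2 =>
  fB (badd s bone) fun w1 =>
  fB (bmul w1 sm2) fun w1 =>
  fB (bmul C.g s) fun w2 =>
  fB (badd bone th) fun th =>
  fB (bmul w2 th) fun w2 =>
  fB (bmul sm1 sm2) fun q =>
  fB (badd q q) fun q =>
  fB (badd w1 w2) fun w =>
  fB (bmul c w) fun cw =>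
  fB (badd q cw) fun cw =>
  fB (bmul a cw) fun aw =>
  fB (bline (-1) 3 t0 h) fun s32 =>
  fB (bmul sm1 s32) fun cub =>
  fB (bmul C.A sm1) fun l =>
  fB (badd l bone) fun l =>
  fB (bmul cub l) fun cub =>
  fB (bsub aw cub) fun y =>
  fB (bmul mu y) btest

def run (C : Cst) (crude : Bool) (t0 : Int) (h : Nat) (n : Nat) : Bool :=
  Nat.rec (motive := fun _ => Int → Bool) (fun _ => true) (fun _ ih t0 =>
    Bool.casesOn (Bool.casesOn crude (bth C t0 h fun th => bmain C t0 h th) (bmain C t0 h bU))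
      false (fI (Int.add t0 (Int.ofNat (Nat.mul 2 h))) fun t1 => ih t1)) n t0

end ZP

namespace ZP

def cen (b : Ball) : ℂ := ⟨(b.re : ℝ), (b.im : ℝ)⟩
def Mem (z : ℂ) (b : Ball) : Prop := ‖(bS : ℝ) * z - cen b‖ ≤ (b.r : ℝ)

lemma norm_mk_le (x y : ℝ) : ‖(⟨x, y⟩ : ℂ)‖ ≤ |x| + |y| := by
  simpa using Complex.norm_le_abs_re_add_abs_im ⟨x, y⟩

lemma bnd_sound (n g : ℕ) (hg : 0 < g) : Real.sqrt n ≤ (bnd n g : ℝ) := by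
  have h1 : (n : ℝ) ≤ g * ((n / g : ℕ) + 1 : ℝ) := by
    have : n < g * (n / g + 1) := by
      have := Nat.div_add_mod n g
      have := Nat.mod_lt n hg
      nlinarith
    exact_mod_cast this.le
  have h2 : ((g + n / g : ℕ) : ℝ) ≤ 2 * (((g + n / g) / 2 : ℕ) : ℝ) + 1 := by
    have : g + n / g ≤ 2 * ((g + n / g) / 2) + 1 := by omega
    exact_mod_cast this
  have h3 : (bnd n g : ℝ) = (((g + n / g) / 2 : ℕ) : ℝ) + 1 := by
    have : bnd n g = (g + n / g) / 2 + 1 := rfl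
    rw [this]; push_cast; ring
  push_cast at h2
  rw [h3]
  apply Real.sqrt_le_iff.2 ⟨by positivity, ?_⟩
  push_cast
  set q : ℝ := ((n / g : ℕ) : ℝ)
  set m : ℝ := (((g + n / g) / 2 : ℕ) : ℝ)
  have hq : 0 ≤ q := by positivity
  have : (0:ℝ) < g := by exact_mod_cast hg
  nlinarith [sq_nonneg ((g:ℝ) - (q + 1))]

lemma babs_sound (x y : ℤ) : ‖(⟨x, y⟩ : ℂ)‖ ≤ (babs x y : ℝ) := by
  have h : ∃ g, 0 < g ∧ babs x y = bnd (x.natAbs * x.natAbs + y.natAbs * y.natAbs) g := by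
    unfold babs
    simp only [fN_eq]
    rcases h : Nat.ble x.natAbs y.natAbs with _ | _
    · exact ⟨bnd _ _, Nat.succ_pos _, rfl⟩
    · exact ⟨bnd _ _, Nat.succ_pos _, rfl⟩
  obtain ⟨g, hg, e⟩ := h
  rw [e]
  refine le_trans (le_of_eq ?_) (bnd_sound _ g hg)
  rw [Complex.norm_def, Complex.normSq_mk]
  congr 1
  push_cast
  simp only [Nat.cast_natAbs]
  push_cast
  rw [abs_mul_abs_self, abs_mul_abs_self]

lemma Mem.add {z w : ℂ} {a b : Ball} (h1 : Mem z a) (h2 : Mem w b) : Mem (z + w) (badd a b) := by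
  have e : (bS:ℝ) * (z + w) - cen (badd a b) = ((bS:ℝ) * z - cen a) + ((bS:ℝ) * w - cen b) := by
    have : cen (badd a b) = cen a + cen b := by
      apply Complex.ext
      · change (((a.re + b.re : ℤ)):ℝ) = (a.re:ℝ) + b.re
        push_cast; ring
      · change (((a.im + b.im : ℤ)):ℝ) = (a.im:ℝ) + b.im
        push_cast; ring
    rw [this]; ring
  have e2 : ((badd a b).r : ℝ) = a.r + b.r := by
    change ((a.r + b.r : ℕ):ℝ) = _
    push_cast; ring
  unfold Mem
  rw [e, e2]
  exact (norm_add_le _ _).trans (add_le_add h1 h2)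

lemma Mem.sub {z w : ℂ} {a b : Ball} (h1 : Mem z a) (h2 : Mem w b) : Mem (z - w) (bsub a b) := by
  have e : (bS:ℝ) * (z - w) - cen (bsub a b) = ((bS:ℝ) * z - cen a) - ((bS:ℝ) * w - cen b) := by
    have : cen (bsub a b) = cen a - cen b := by
      apply Complex.ext
      · change (((a.re - b.re : ℤ)):ℝ) = (a.re:ℝ) - b.re
        push_cast; ring
      · change (((a.im - b.im : ℤ)):ℝ) = (a.im:ℝ) - b.im
        push_cast; ring
    rw [this]; ring
  have e2 : ((bsub a b).r : ℝ) = a.r + b.r := by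
    change ((a.r + b.r : ℕ):ℝ) = _
    push_cast; ring
  unfold Mem
  rw [e, e2]
  exact (norm_sub_le _ _).trans (add_le_add h1 h2)

lemma Mem.conj {z : ℂ} {a : Ball} (h1 : Mem z a) : Mem ((starRingEnd ℂ) z) (bconj a) := by
  have e : (bS:ℝ) * ((starRingEnd ℂ) z) - cen (bconj a) = (starRingEnd ℂ) ((bS:ℝ) * z - cen a) := by
    have : cen (bconj a) = (starRingEnd ℂ) (cen a) := by
      apply Complex.ext
      · rfl
      · change (((- a.im : ℤ)):ℝ) = -(a.im:ℝ)
        push_cast; ring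
    rw [this]; simp only [map_sub, map_mul, Complex.conj_ofReal]
  unfold Mem
  rw [e, Complex.norm_conj]
  exact h1

lemma ediv_near (x : ℤ) (d : ℕ) (hd : 0 < d) : |(x:ℝ) / d - ((x / (d:ℤ) : ℤ) : ℝ)| ≤ 1 := by
  have hd' : (0:ℝ) < d := by exact_mod_cast hd
  have h1 := Int.emod_add_mul_ediv x d
  have h2 := Int.emod_nonneg x (b := (d:ℤ)) (by omega)
  have h3 := Int.emod_lt_of_pos x (b := (d:ℤ)) (by omega)
  have h4 : (x:ℝ) = ((x % (d:ℤ) : ℤ):ℝ) + d * ((x / (d:ℤ) : ℤ) : ℝ) := by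
    have := congrArg (fun z : ℤ => (z:ℝ)) h1
    push_cast at this
    push_cast
    linarith
  have h2' : (0:ℝ) ≤ ((x % (d:ℤ) : ℤ):ℝ) := by exact_mod_cast h2
  have h3' : ((x % (d:ℤ) : ℤ):ℝ) ≤ d := by exact_mod_cast h3.le
  rw [show (x:ℝ) / d - ((x / (d:ℤ) : ℤ) : ℝ) = ((x % (d:ℤ) : ℤ):ℝ) / d by rw [h4]; field_simp; push_cast; ring_nf]
  rw [abs_of_nonneg (by positivity)]
  exact div_le_one_of_le₀ h3' hd'.le

lemma ndiv_near (x d : ℕ) (hd : 0 < d) : (x:ℝ) / d ≤ ((x / d : ℕ) : ℝ) + 1 := by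
  have hd' : (0:ℝ) < d := by exact_mod_cast hd
  have h1 := Nat.div_add_mod x d
  have h2 := Nat.mod_lt x hd
  rw [div_le_iff₀ hd']
  have : x ≤ (x / d + 1) * d := by nlinarith
  exact_mod_cast this

lemma Mem.mul {z w : ℂ} {a b : Ball} (h1 : Mem z a) (h2 : Mem w b) : Mem (z * w) (bmul a b) := by
  have hS : (0:ℝ) < (bS:ℝ) := by norm_num
  obtain ⟨x, y, r⟩ := a
  obtain ⟨x', y', r'⟩ := b
  unfold Mem at *
  simp only [cen] at h1 h2
  set S : ℝ := (bS:ℝ) with hSd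
  have e2 : ((bmul ⟨x,y,r⟩ ⟨x',y',r'⟩).r : ℝ) =
      (((babs x y * r' + r * (babs x' y' + r')) / bS : ℕ) : ℝ) + 3 := by
    change (((babs x y * r' + r * (babs x' y' + r')) / bS + 3 : ℕ) : ℝ) = _
    push_cast; ring
  have e3 : cen (bmul ⟨x,y,r⟩ ⟨x',y',r'⟩) =
    ⟨(((x * x' - y * y') / ((bS:ℕ):ℤ) : ℤ) : ℝ), (((x * y' + y * x') / ((bS:ℕ):ℤ) : ℤ) : ℝ)⟩ := rfl
  rw [e2, e3]
  set c : ℂ := ⟨(x:ℝ), (y:ℝ)⟩ with hc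
  set c' : ℂ := ⟨(x':ℝ), (y':ℝ)⟩ with hc'
  set δ : ℂ := S * z - c with hδ
  set δ' : ℂ := S * w - c' with hδ'
  have hn := ndiv_near (babs x y * r' + r * (babs x' y' + r')) bS (by norm_num)
  have e4 : (S:ℂ) * (z * w) - ⟨(((x * x' - y * y') / ((bS:ℕ):ℤ) : ℤ) : ℝ), (((x * y' + y * x') / ((bS:ℕ):ℤ) : ℤ) : ℝ)⟩ =
     (c * δ' + δ * (c' + δ')) / S + ⟨((x * x' - y * y' : ℤ) : ℝ) / bS - (((x * x' - y * y') / ((bS:ℕ):ℤ) : ℤ) : ℝ), 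
      ((x * y' + y * x' : ℤ) : ℝ) / bS - (((x * y' + y * x') / ((bS:ℕ):ℤ) : ℤ) : ℝ)⟩ := by
    have hSc : (S:ℂ) ≠ 0 := by exact_mod_cast hS.ne'
    have : (c * δ' + δ * (c' + δ')) / S = S * (z * w) - c * c' / S := by
      rw [hδ, hδ']; field_simp; ring
    rw [this]
    have h5 : c * c' / S = ⟨((x * x' - y * y' : ℤ) : ℝ) / bS, ((x * y' + y * x' : ℤ) : ℝ) / bS⟩ := by
      apply Complex.ext
      · rw [Complex.div_ofReal_re, Complex.mul_re]; simp only [hc, hc']; push_cast; rfl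
      · rw [Complex.div_ofReal_im, Complex.mul_im]; simp only [hc, hc']; push_cast; rfl
    rw [h5]
    apply Complex.ext
    · simp only [Complex.sub_re, Complex.add_re]; ring
    · simp only [Complex.sub_im, Complex.add_im]; ring
  rw [e4]
  have k1 := ediv_near (x * x' - y * y') bS (by norm_num)
  have k2 := ediv_near (x * y' + y * x') bS (by norm_num)
  have k3 : ‖(c * δ' + δ * (c' + δ')) / S‖ ≤ ((babs x y * r' + r * (babs x' y' + r') : ℕ):ℝ) / bS := by
    rw [norm_div, Complex.norm_real, Real.norm_of_nonneg hS.le]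
    gcongr
    push_cast
    have b1 := babs_sound x y
    have b2 := babs_sound x' y'
    refine (norm_add_le _ _).trans ?_
    rw [norm_mul, norm_mul]
    gcongr
    refine (norm_add_le _ _).trans ?_
    gcongr
  refine (norm_add_le _ _).trans ?_
  have := norm_mk_le (((x * x' - y * y' : ℤ) : ℝ) / bS - (((x * x' - y * y') / ((bS:ℕ):ℤ) : ℤ) : ℝ)) 
      (((x * y' + y * x' : ℤ) : ℝ) / bS - (((x * y' + y * x') / ((bS:ℕ):ℤ) : ℤ) : ℝ))
  linarith

lemma inv_ball {u c : ℂ} {r : ℝ} (h : ‖u - c‖ ≤ r) (hD : 0 < c.re * c.re + c.im * c.im - r * r) :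
    u ≠ 0 ∧ ‖u⁻¹ - (starRingEnd ℂ) c / ((c.re * c.re + c.im * c.im - r * r : ℝ) : ℂ)‖ ≤ r / (c.re * c.re + c.im * c.im - r * r) := by
  have hr : 0 ≤ r := (norm_nonneg _).trans h
  have h2 : ‖u - c‖ ^ 2 ≤ r ^ 2 := by gcongr
  have hu : u ≠ 0 := by
    rintro rfl
    rw [Complex.sq_norm, Complex.normSq_apply] at h2
    simp at h2; nlinarith
  refine ⟨hu, ?_⟩
  set D := c.re * c.re + c.im * c.im - r * r with hDd
  have hDc : (D:ℂ) ≠ 0 := by exact_mod_cast hD.ne'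
  have e : u⁻¹ - (starRingEnd ℂ) c / (D:ℂ) = (D - u * (starRingEnd ℂ) c) / (u * D) := by field_simp
  rw [e, norm_div, norm_mul, Complex.norm_real, Real.norm_of_nonneg hD.le]
  have hun : 0 < ‖u‖ := norm_pos_iff.2 hu
  rw [div_le_div_iff₀ (by positivity) hD]
  have key : ‖(D:ℂ) - u * (starRingEnd ℂ) c‖ ≤ r * ‖u‖ := by
    apply abs_le_of_sq_le_sq' _ (by positivity) |>.2
    rw [mul_pow, Complex.sq_norm, Complex.sq_norm, Complex.normSq_apply, Complex.normSq_apply]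
    rw [Complex.sq_norm, Complex.normSq_apply] at h2
    simp only [Complex.sub_re, Complex.sub_im, Complex.mul_re, Complex.mul_im, Complex.conj_re, Complex.conj_im,
      Complex.ofReal_re, Complex.ofReal_im] at h2 ⊢
    rw [hDd]
    have := mul_nonneg hD.le (sub_nonneg.2 h2)
    rw [hDd] at this
    nlinarith [this]
  nlinarith

lemma binv_sound {z : ℂ} {a : Ball} (h : Mem z a) {k : Ball → Bool} (hk : binv a k = true) :
    z ≠ 0 ∧ ∃ b, Mem z⁻¹ b ∧ k b = true := by
  have hS : (0:ℝ) < (bS:ℝ) := by norm_num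
  obtain ⟨x, y, r⟩ := a
  unfold binv at hk
  simp only [fN_eq, fB_eq] at hk
  rcases hD : Int.sub (Int.add (Int.mul x x) (Int.mul y y)) (Int.ofNat (Nat.mul r r)) with D | D
  · rw [hD] at hk
    simp only at hk
    rcases D with _ | m
    · simp at hk
    simp only at hk
    have hD : x * x + y * y - ((r * r : ℕ) : ℤ) = ((m + 1 : ℕ) : ℤ) := hD
    set D := m + 1 with hDm
    have hDr : (x:ℝ) * x + (y:ℝ) * y - (r:ℝ) * r = (D:ℝ) := by exact_mod_cast hD
    have hDp : (0:ℝ) < D := by positivity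
    unfold Mem at h
    simp only [cen] at h
    obtain ⟨h1, h2⟩ := inv_ball h (by simp only; rw [hDr]; exact hDp)
    simp only at h2
    rw [hDr] at h2
    refine ⟨fun h0 => h1 (by rw [h0]; simp), _, ?_, hk⟩
    unfold Mem
    have e3 : cen (Ball.mk ((x.mul (Int.ofNat bSS)).ediv (Int.ofNat D)) ((y.neg.mul (Int.ofNat bSS)).ediv (Int.ofNat D)) (((r.mul bSS).div D).add 3)) = ⟨((x * ((bSS:ℕ):ℤ) / ((D:ℕ):ℤ) : ℤ) : ℝ), ((-y * ((bSS:ℕ):ℤ) / ((D:ℕ):ℤ) : ℤ) : ℝ)⟩ := rfl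
    have e2 : ((((r.mul bSS).div D).add 3 : ℕ) : ℝ) = ((r * bSS / D : ℕ) : ℝ) + 3 := by
      change ((r * bSS / D + 3 : ℕ) : ℝ) = _
      push_cast; ring
    change ‖((bS:ℝ):ℂ) * z⁻¹ - cen (Ball.mk ((x.mul (Int.ofNat bSS)).ediv (Int.ofNat D)) ((y.neg.mul (Int.ofNat bSS)).ediv (Int.ofNat D)) (((r.mul bSS).div D).add 3))‖ ≤ ((((r.mul bSS).div D).add 3 : ℕ) : ℝ)
    rw [e3, e2]
    have hSS : (bSS : ℝ) = bS * bS := by norm_num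
    have k1 := ediv_near (x * ((bSS:ℕ):ℤ)) D (by omega)
    have k2 := ediv_near (-y * ((bSS:ℕ):ℤ)) D (by omega)
    have hn := ndiv_near (r * bSS) D (by omega)
    have e4 : ((bS:ℝ):ℂ) * z⁻¹ - ⟨((x * ((bSS:ℕ):ℤ) / ((D:ℕ):ℤ) : ℤ) : ℝ), ((-y * ((bSS:ℕ):ℤ) / ((D:ℕ):ℤ) : ℤ) : ℝ)⟩
      = ((bSS:ℝ):ℂ) * ((((bS:ℝ):ℂ) * z)⁻¹ - (starRingEnd ℂ) (⟨x, y⟩:ℂ) / ((D:ℝ):ℂ)) +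
        ⟨((x * ((bSS:ℕ):ℤ) : ℤ):ℝ) / (D:ℕ) - ((x * ((bSS:ℕ):ℤ) / ((D:ℕ):ℤ) : ℤ) : ℝ), 
          ((-y * ((bSS:ℕ):ℤ) : ℤ):ℝ) / (D:ℕ) - ((-y * ((bSS:ℕ):ℤ) / ((D:ℕ):ℤ) : ℤ) : ℝ)⟩ := by
      have h5 : ((bSS:ℝ):ℂ) * ((starRingEnd ℂ) (⟨x, y⟩:ℂ) / ((D:ℝ):ℂ)) =
         ⟨((x * ((bSS:ℕ):ℤ) : ℤ):ℝ) / (D:ℕ), ((-y * ((bSS:ℕ):ℤ) : ℤ):ℝ) / (D:ℕ)⟩ := by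
        apply Complex.ext
        · rw [Complex.re_ofReal_mul, Complex.div_ofReal_re]; simp only [Complex.conj_re]; push_cast; ring
        · rw [Complex.im_ofReal_mul, Complex.div_ofReal_im]; simp only [Complex.conj_im]; push_cast; ring
      have h6 : ((bSS:ℝ):ℂ) * (((bS:ℝ):ℂ) * z)⁻¹ = ((bS:ℝ):ℂ) * z⁻¹ := by
        have : ((bS:ℝ):ℂ) ≠ 0 := by exact_mod_cast hS.ne'
        rw [hSS, mul_inv]; push_cast; field_simp
      rw [mul_sub, h5, h6]
      apply Complex.ext
      · simp only [Complex.sub_re, Complex.add_re]; ring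
      · simp only [Complex.sub_im, Complex.add_im]; ring
    rw [e4]
    refine (norm_add_le _ _).trans ?_
    have := norm_mk_le (((x * ((bSS:ℕ):ℤ) : ℤ):ℝ) / (D:ℕ) - ((x * ((bSS:ℕ):ℤ) / ((D:ℕ):ℤ) : ℤ) : ℝ)) 
          (((-y * ((bSS:ℕ):ℤ) : ℤ):ℝ) / (D:ℕ) - ((-y * ((bSS:ℕ):ℤ) / ((D:ℕ):ℤ) : ℤ) : ℝ))
    have k3 : ‖((bSS:ℝ):ℂ) * ((((bS:ℝ):ℂ) * z)⁻¹ - (starRingEnd ℂ) (⟨x, y⟩:ℂ) / ((D:ℝ):ℂ))‖ ≤ ((r * bSS : ℕ):ℝ) / D := by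
      rw [norm_mul, Complex.norm_real, Real.norm_of_nonneg (by positivity)]
      calc _ ≤ (bSS:ℝ) * (r / D) := by gcongr
        _ = _ := by push_cast; ring
    linarith
  · rw [hD] at hk
    simp at hk

end ZP

namespace ZP

lemma bB_sound {w p : ℂ} {a b : Ball} (h1 : Mem w a) (h2 : Mem p b) {k : Ball → Bool} (hk : bB a b k = true) :
    ∃ c, Mem ((w - p) / (w + p)) c ∧ k c = true := by
  unfold bB at hk
  simp only [fB_eq] at hk
  obtain ⟨_, c, hc, hk⟩ := binv_sound (h1.add h2) hk
  exact ⟨_, (h1.sub h2).mul hc, hk⟩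

lemma Mem_one : Mem 1 bone := by
  have : cen bone = ((bS:ℝ):ℂ) := by
    apply Complex.ext
    · change (((bS:ℕ):ℤ):ℝ) = (bS:ℝ)
      push_cast; rfl
    · change (((0:ℤ)):ℝ) = 0
      simp
  unfold Mem
  rw [this]; simp

lemma Mem_two : Mem 2 btwo := by
  have : cen btwo = ((bS:ℝ):ℂ) * 2 := by
    apply Complex.ext
    · change (((2000000000000000000000000000000:ℕ):ℤ):ℝ) = _
      rw [Complex.re_ofReal_mul]
      norm_num
    · change (((0:ℤ)):ℝ) = _
      rw [Complex.im_ofReal_mul]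
      norm_num
  unfold Mem
  rw [this]; simp

lemma Mem_U {z : ℂ} (h : ‖z‖ ≤ 1) : Mem z bU := by
  have : cen bU = 0 := by
    apply Complex.ext
    · change (((0:ℤ)):ℝ) = 0
      simp
    · change (((0:ℤ)):ℝ) = 0
      simp
  unfold Mem
  rw [this, sub_zero, norm_mul, Complex.norm_real]
  change ‖(bS:ℝ)‖ * ‖z‖ ≤ (bS:ℝ)
  rw [Real.norm_of_nonneg (by positivity)]
  nlinarith [show (0:ℝ) < (bS:ℝ) by norm_num]

lemma Mem_rat4 (n : ℕ) : Mem ((n:ℂ) / 4) (brat4 n) := by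
  have : cen (brat4 n) = ((bS:ℝ):ℂ) * (n / 4) := by
    apply Complex.ext
    · change (((n * 250000000000000000000000000000:ℕ):ℤ):ℝ) = _
      rw [Complex.re_ofReal_mul]
      have : ((n:ℂ)/4).re = (n:ℝ)/4 := by
        rw [show ((n:ℂ)/4) = (((n:ℝ)/4 : ℝ):ℂ) by push_cast; rfl, Complex.ofReal_re]
      rw [this]
      push_cast; ring
    · change (((0:ℤ)):ℝ) = _
      rw [Complex.im_ofReal_mul]
      have : ((n:ℂ)/4).im = 0 := by
        rw [show ((n:ℂ)/4) = (((n:ℝ)/4 : ℝ):ℂ) by push_cast; rfl, Complex.ofReal_im]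
      rw [this]; simp
  unfold Mem
  rw [this]; simp

lemma Mem_line (cn k t0 : ℤ) (h : ℕ) {t : ℝ} (ht : |(bS:ℝ) * t - t0| ≤ h) :
    Mem ((cn:ℂ) / 2 + k * t * I) (bline cn k t0 h) := by
  have : cen (bline cn k t0 h) = ((bS:ℝ):ℂ) * (cn / 2) + ((k * t0 : ℝ):ℂ) * I := by
    apply Complex.ext
    · change ((cn * ((500000000000000000000000000000:ℕ):ℤ):ℤ):ℝ) = _
      rw [show ((bS:ℝ):ℂ) * (cn / 2) = ((bS * (cn/2) : ℝ):ℂ) by push_cast; rfl]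
      simp
      ring
    · change ((k * t0 :ℤ):ℝ) = _
      rw [show ((bS:ℝ):ℂ) * (cn / 2) = ((bS * (cn/2) : ℝ):ℂ) by push_cast; rfl]
      rw [Complex.add_im, Complex.ofReal_im]
      simp
  unfold Mem
  rw [this]
  have e : ((bS:ℝ):ℂ) * ((cn:ℂ) / 2 + k * t * I) - (((bS:ℝ):ℂ) * (cn / 2) + ((k * t0 : ℝ):ℂ) * I)
    = ((k * ((bS:ℝ) * t - t0) : ℝ) : ℂ) * I := by
    rw [Complex.ofReal_mul (k:ℝ) ((bS:ℝ) * t - t0), Complex.ofReal_sub, Complex.ofReal_mul (bS:ℝ) t, Complex.ofReal_mul (k:ℝ) t0]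
    rw [Complex.ofReal_intCast, Complex.ofReal_intCast]
    ring
  rw [e, norm_mul, Complex.norm_I, mul_one, Complex.norm_real, Real.norm_eq_abs, abs_mul]
  change _ ≤ ((Nat.mul (Int.natAbs k) h : ℕ) : ℝ)
  rw [Nat.mul_eq, Nat.cast_mul, Nat.cast_natAbs, Int.cast_abs]
  exact mul_le_mul_of_nonneg_left ht (abs_nonneg _)

lemma bmob_sound {b x y : ℂ} {bb ib e xx : Ball} (hb : Mem b bb) (hib : Mem b⁻¹ ib) (he : Mem (b⁻¹ - b) e) 
    (hx : Mem x xx) (b0 : b ≠ 0) (hy : y * (1 + b * x) = b + x) {k : Ball → Bool} (hk : bmob bb ib e xx k = true) :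
    ∃ c, Mem y c ∧ k c = true := by
  unfold bmob at hk
  simp only [fB_eq] at hk
  obtain ⟨h0, c, hc, hk⟩ := binv_sound (Mem_one.add (hb.mul hx)) hk
  refine ⟨_, ?_, hk⟩
  have : y = b⁻¹ - (b⁻¹ - b) * (1 + b * x)⁻¹ := by
    rw [eq_div_of_mul_eq h0 hy]; field_simp; ring
  rw [this]
  exact hib.sub (he.mul hc)

structure CS (C : Cst) (a b1 b2 g : ℝ) : Prop where
  n1 : (b1:ℂ) ≠ 0
  n2 : (b2:ℂ) ≠ 0
  ha : Mem a C.A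
  hb1 : Mem b1 C.b1
  hib1 : Mem (b1:ℂ)⁻¹ C.ib1
  he1 : Mem ((b1:ℂ)⁻¹ - b1) C.e1
  hb2 : Mem b2 C.b2
  hib2 : Mem (b2:ℂ)⁻¹ C.ib2
  he2 : Mem ((b2:ℂ)⁻¹ - b2) C.e2
  hg : Mem g C.g

lemma bF_sound {C : Cst} {a b1 b2 g : ℝ} (hC : CS C a b1 b2 g) {w G ζ F : ℂ} {ww : Ball} (hw : Mem w ww) (hζ : ‖ζ‖ ≤ 1)
    (hG : G * (1 + b2 * ((w - 2) / (w + 2) * ζ)) = b2 + (w - 2) / (w + 2) * ζ)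
    (hF : F * (1 + b1 * ((w - 1) / (w + 1) * G)) = b1 + (w - 1) / (w + 1) * G)
    {k : Ball → Bool} (hk : bF C ww k = true) :
    ∃ c, Mem F c ∧ k c = true := by
  unfold bF at hk
  simp only [fB_eq] at hk
  obtain ⟨c, hc, hk⟩ := bB_sound hw Mem_two hk
  obtain ⟨d, hd, hk⟩ := bmob_sound hC.hb2 hC.hib2 hC.he2 (hc.mul (Mem_U hζ)) hC.n2 hG hk
  obtain ⟨f, hf, hk⟩ := bB_sound hw Mem_one hk
  exact bmob_sound hC.hb1 hC.hib1 hC.he1 (hf.mul hd) hC.n1 hF hk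

lemma bstep_sound {d x X h : ℂ} {bd bx bX bh : Ball} (hd : Mem d bd) (hx : Mem x bx) (hX : Mem X bX) (hh : Mem h bh) :
    Mem (d + (x - X) * h) (bstep bd bx bX bh) := by
  unfold bstep
  simp only [fB_eq]
  exact hd.add ((hx.sub hX).mul hh)

/-- Newton form data for the function `f` with `χ = 1 + (X - 1/4) f(X)`. -/
structure CN (C : Cst) (f : ℂ → ℂ) : Prop where
  nd : ∃ d0 d1 d2 d3 d4 d5 : ℂ, Mem d0 C.d0 ∧ Mem d1 C.d1 ∧ Mem d2 C.d2 ∧ Mem d3 C.d3 ∧ Mem d4 C.d4 ∧ Mem d5 C.d5 ∧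
    ∀ X : ℂ, ‖X‖ ≤ 729/4 → ∃ d6 : ℂ, Mem d6 C.d6 ∧
    f X = d0 + (X - 9/4) * (d1 + (X - 49/4) * (d2 + (X - 121/4) * (d3 + (X - 225/4) * (d4 + (X - 361/4) *
     (d5 + (X - 529/4) * d6)))))

lemma bchi_sound {C : Cst} {f : ℂ → ℂ} (hC : CN C f) {X : ℂ} {x : Ball} (hx : Mem X x) (hX : ‖X‖ ≤ 729/4) :
    Mem (1 + (X - 1/4) * f X) (bchi C x) := by
  obtain ⟨d0, d1, d2, d3, d4, d5, h0, h1, h2, h3, h4, h5, h⟩ := hC.nd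
  obtain ⟨d6, h6, e⟩ := h X hX
  unfold bchi
  simp only [fB_eq]
  rw [e]
  have r (n : ℕ) := Mem_rat4 n
  have s6 := bstep_sound h5 hx (r 529) h6
  have s5 := bstep_sound h4 hx (r 361) s6
  have s4 := bstep_sound h3 hx (r 225) s5
  have s3 := bstep_sound h2 hx (r 121) s4
  have s2 := bstep_sound h1 hx (r 49) s3
  have s1 := bstep_sound h0 hx (r 9) s2
  have s0 := bstep_sound Mem_one hx (r 1) s1
  norm_num at s0
  exact s0

lemma btest_sound {z : ℂ} {b : Ball} (h : Mem z b) (hb : btest b = true) : 1/32 ≤ z.re := by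
  obtain ⟨x, y, r⟩ := b
  unfold btest at hb
  simp only at hb
  rcases hD : Int.sub x (Int.ofNat r) with n | n
  · rw [hD] at hb
    have hn : 31250000000000000000000000000 ≤ n := Nat.le_of_ble_eq_true hb
    have hD : x - (r:ℤ) = (n:ℤ) := hD
    have h1 : (x:ℝ) - r = n := by exact_mod_cast hD
    have h2 : (31250000000000000000000000000:ℝ) ≤ n := by exact_mod_cast hn
    have h3 := (Complex.abs_re_le_norm _).trans h
    rw [Complex.sub_re, Complex.re_ofReal_mul] at h3
    have h4 := (abs_le.1 h3).1
    simp only [cen] at h4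
    norm_num at h4
    linarith
  · rw [hD] at hb
    simp at hb

/-- the main expression at `s = 1/2 + i t` -/
noncomputable def mainE (A γ a c θ : ℂ) (t : ℝ) : ℂ :=
  let s : ℂ := 1/2 + t * I
  (1/2 - t * I) * (4 + t * I) * (20 - t * I) *
    (a * (2 * (s - 1) * (s - 2) + c * ((s + 1) * (s - 2) + γ * s * (1 + θ))) - (s - 1) * (3 * s - 2) * (A * (s - 1) + 1))

def FD (b1 b2 : ℝ) (w F : ℂ) : Prop := ∃ G ζ : ℂ, ‖ζ‖ ≤ 1 ∧
    F * (1 + b1 * ((w - 1) / (w + 1) * G)) = b1 + (w - 1) / (w + 1) * G ∧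
    G * (1 + b2 * ((w - 2) / (w + 2) * ζ)) = b2 + (w - 2) / (w + 2) * ζ

lemma bmain_sound {C : Cst} {A b1 b2 γ : ℝ} (hC : CS C A b1 b2 γ) {t0 : ℤ} {h : ℕ} {t : ℝ} 
    (ht : |(bS:ℝ) * t - t0| ≤ h) {a c θ : ℂ} (ha : FD b1 b2 (1/2 + t * I) a) (hc : FD b1 b2 (1/2 + 3 * t * I) c)
    {th : Ball} (hth : Mem θ th) (hk : bmain C t0 h th = true) : 1/32 ≤ (mainE A γ a c θ t).re := by
  obtain ⟨Ga, ζa, hza, ea, ea'⟩ := ha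
  obtain ⟨Gc, ζc, hzc, ec, ec'⟩ := hc
  have l (cn k : ℤ) := Mem_line cn k t0 h ht
  unfold bmain at hk
  simp only [fB_eq] at hk
  have hs := l 1 1
  have hs3 := l 1 3
  have hm1 := l 8 1
  have hm2 := l 40 (-1)
  have hs32 := l (-1) 3
  obtain ⟨ba, hba, hk⟩ := bF_sound hC (by convert hs using 1) hza (by convert ea' using 5 <;> norm_num) 
    (by convert ea using 5 <;> norm_num) hk
  obtain ⟨bc, hbc, hk⟩ := bF_sound hC (by convert hs3 using 1) hzc (by convert ec' using 5 <;> norm_num) 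
    (by convert ec using 5 <;> norm_num) hk
  refine btest_sound ?_ hk
  have hmu := (hs.conj.mul hm1).mul hm2
  have hsm1 := hs.sub Mem_one
  have hsm2 := hs.sub Mem_two
  have hw1 := (hs.add Mem_one).mul hsm2
  have hw2 := (hC.hg.mul hs).mul (Mem_one.add hth)
  have hq := hsm1.mul hsm2
  have haw := hba.mul ((hq.add hq).add (hbc.mul (hw1.add hw2)))
  have hcub := (hsm1.mul hs32).mul ((hC.ha.mul hsm1).add Mem_one)
  have hfin := hmu.mul (haw.sub hcub)
  convert hfin using 1
  unfold mainE
  simp only [map_add, map_mul, map_div₀, Complex.conj_I, Complex.conj_ofReal, map_intCast, map_ofNat]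
  norm_num
  ring

lemma bth_sound {C : Cst} {f : ℂ → ℂ} (hC : CN C f) {t0 : ℤ} {h : ℕ} {t : ℝ} 
    (ht : |(bS:ℝ) * t - t0| ≤ h) (htt : |t| ≤ 6) {x : ℂ} (hx : x = 1 + ((1/2 + 2 * t * I)^2 - 1/4) * f ((1/2 + 2 * t * I)^2))
    {k : Ball → Bool} (hk : bth C t0 h k = true) : ∃ b, Mem ((starRingEnd ℂ) x / x) b ∧ k b = true := by
  unfold bth at hk
  simp only [fB_eq] at hk
  have hz := Mem_line 1 2 t0 h ht
  have hX := hz.mul hz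
  have e : (((1:ℤ):ℂ) / 2 + ((2:ℤ):ℂ) * t * I) * (((1:ℤ):ℂ) / 2 + ((2:ℤ):ℂ) * t * I) = (1/2 + 2 * t * I)^2 := by
    push_cast; ring
  rw [e] at hX
  have hn : ‖((1/2 + 2 * t * I)^2 : ℂ)‖ ≤ 729/4 := by
    rw [norm_pow, Complex.sq_norm, Complex.normSq_apply]
    norm_num
    nlinarith [abs_le.1 htt]
  have hc := bchi_sound hC hX hn
  rw [← hx] at hc
  obtain ⟨_, b, hb, hk⟩ := binv_sound hc hk
  exact ⟨_, hc.conj.mul hb, hk⟩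

lemma run_crude {C : Cst} {A b1 b2 γ : ℝ} (hC : CS C A b1 b2 γ) (h : ℕ) (n : ℕ) : ∀ (t0 : ℤ), 
    run C true t0 h n = true → ∀ t : ℝ, (t0:ℝ) - h ≤ (bS:ℝ) * t → (bS:ℝ) * t ≤ t0 + (2 * n - 1) * h → 0 < n →
    ∀ a c θ : ℂ, FD b1 b2 (1/2 + t * I) a → FD b1 b2 (1/2 + 3 * t * I) c → ‖θ‖ ≤ 1 → 1/32 ≤ (mainE A γ a c θ t).re := by
  induction n with
  | zero => intro t0 _ t _ _ h0; exact absurd h0 (lt_irrefl _)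
  | succ n ih =>
    intro t0 hr t h1 h2 _ a c θ ha hc hθ
    have e : run C true t0 h (n+1) = (Bool.casesOn (bmain C t0 h bU) false
       (fI (Int.add t0 (Int.ofNat (Nat.mul 2 h))) fun t1 => run C true t1 h n) : Bool) := rfl
    rw [e] at hr
    rcases hb : bmain C t0 h bU with _ | _
    · rw [hb] at hr; simp at hr
    rw [hb, fI_eq] at hr
    have hr : run C true (t0 + ((2 * h : ℕ) : ℤ)) h n = true := hr
    by_cases hc1 : (bS:ℝ) * t ≤ t0 + h
    · exact bmain_sound hC (by rw [abs_le]; constructor <;> linarith) ha hc (Mem_U hθ) hb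
    · push Not at hc1
      rw [Nat.cast_succ n] at h2
      have e3 : ((t0 + ((2 * h : ℕ) : ℤ) : ℤ) : ℝ) = t0 + 2 * h := by push_cast; ring
      refine ih _ hr t (by rw [e3]; linarith) (by rw [e3]; linarith) ?_ a c θ ha hc hθ
      rcases Nat.eq_zero_or_pos n with h0 | h0
      · rw [h0, Nat.cast_zero] at h2; linarith
      · exact h0

lemma run_fine {C : Cst} {A b1 b2 γ : ℝ} (hC : CS C A b1 b2 γ) {f : ℂ → ℂ} (hN : CN C f) (h : ℕ) (n : ℕ) : ∀ (t0 : ℤ), 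
    run C false t0 h n = true → ∀ t : ℝ, (t0:ℝ) - h ≤ (bS:ℝ) * t → (bS:ℝ) * t ≤ t0 + (2 * n - 1) * h → 0 < n → |t| ≤ 6 →
    ∀ a c x : ℂ, FD b1 b2 (1/2 + t * I) a → FD b1 b2 (1/2 + 3 * t * I) c → 
      x = 1 + ((1/2 + 2 * t * I)^2 - 1/4) * f ((1/2 + 2 * t * I)^2) → 
      1/32 ≤ (mainE A γ a c ((starRingEnd ℂ) x / x) t).re := by
  induction n with
  | zero => intro t0 _ t _ _ h0; exact absurd h0 (lt_irrefl _)
  | succ n ih =>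
    intro t0 hr t h1 h2 _ h6 a c x ha hc hx
    have e : run C false t0 h (n+1) = (Bool.casesOn (bth C t0 h fun th => bmain C t0 h th) false
       (fI (Int.add t0 (Int.ofNat (Nat.mul 2 h))) fun t1 => run C false t1 h n) : Bool) := rfl
    rw [e] at hr
    rcases hb : (bth C t0 h fun th => bmain C t0 h th) with _ | _
    · rw [hb] at hr; simp at hr
    rw [hb, fI_eq] at hr
    have hr : run C false (t0 + ((2 * h : ℕ) : ℤ)) h n = true := hr
    by_cases hc1 : (bS:ℝ) * t ≤ t0 + h
    · have ht : |(bS:ℝ) * t - t0| ≤ h := by rw [abs_le]; constructor <;> linarith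
      obtain ⟨b, hm, hb⟩ := bth_sound hN ht h6 hx hb
      exact bmain_sound hC ht ha hc hm hb
    · push Not at hc1
      rw [Nat.cast_succ n] at h2
      have e3 : ((t0 + ((2 * h : ℕ) : ℤ) : ℤ) : ℝ) = t0 + 2 * h := by push_cast; ring
      refine ih _ hr t (by rw [e3]; linarith) (by rw [e3]; linarith) ?_ h6 a c x ha hc hx
      rcases Nat.eq_zero_or_pos n with h0 | h0
      · rw [h0, Nat.cast_zero] at h2; linarith
      · exact h0
end ZP

namespace ZP

def CC : Cst where
  A := ⟨47197551196597746153333333332, 0, 3385416738⟩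
  b1 := ⟨954929658551372014614106072404, 0, 3087129889⟩
  ib1 := ⟨1047197551196597746153333333332, 0, 3385416739⟩
  e1 := ⟨92267892645225731539227260928, 0, 6472546564⟩
  b2 := ⟨-992983041869335364873690432757, 0, 27158232548041138590550249⟩
  ib2 := ⟨-1007066544502760268563396229017, 0, 27543418420792260033233174⟩
  e2 := ⟨-14083502633424903689705796260, 0, 54701650968833398623783359⟩
  g := ⟨975989769409459235082971445895, 0, 173182861616992451706637⟩
  d0 := ⟨23598775598298873076666666666, 0, 1692708404⟩
  d1 := ⟨273016219158288935464313481, 0, 240174901⟩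
  d2 := ⟨2073782777523473714958344, 0, 11247328⟩
  d3 := ⟨11670223986105405325184, 0, 263058⟩
  d4 := ⟨52012223565856946059, 0, 3766⟩
  d5 := ⟨191545187626844732, 0, 101⟩
  d6 := ⟨0, 0, 600273540296774⟩

set_option maxRecDepth 100000
theorem rf0 : run CC false 300000000000000000000000000 300000000000000000000000000 60 = true := by decide +kernel
theorem rf1 : run CC false 36400000000000000000000000000 400000000000000000000000000 60 = true := by decide +kernel
theorem rf2 : run CC false 84500000000000000000000000000 500000000000000000000000000 60 = true := by decide +kernel
theorem rf3 : run CC false 144700000000000000000000000000 700000000000000000000000000 60 = true := by decide +kernel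
theorem rf4 : run CC false 229100000000000000000000000000 1100000000000000000000000000 60 = true := by decide +kernel
theorem rf5 : run CC false 362200000000000000000000000000 2200000000000000000000000000 60 = true := by decide +kernel
theorem rf6 : run CC false 630900000000000000000000000000 6900000000000000000000000000 60 = true := by decide +kernel
theorem rf7 : run CC false 1478400000000000000000000000000 26400000000000000000000000000 14 = true := by decide +kernel
theorem rf8 : run CC false 2212300000000000000000000000000 21100000000000000000000000000 10 = true := by decide +kernel
theorem rf9 : run CC false 2630100000000000000000000000000 16900000000000000000000000000 14 = true := by decide +kernel
theorem rf10 : run CC false 3099900000000000000000000000000 13500000000000000000000000000 15 = true := by decide +kernel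
theorem rf11 : run CC false 3502200000000000000000000000000 10800000000000000000000000000 12 = true := by decide +kernel
theorem rf12 : run CC false 3759200000000000000000000000000 8600000000000000000000000000 9 = true := by decide +kernel
theorem rf13 : run CC false 3912300000000000000000000000000 6900000000000000000000000000 6 = true := by decide +kernel
theorem rf14 : run CC false 3992600000000000000000000000000 4400000000000000000000000000 10 = true := by decide +kernel
theorem rf15 : run CC false 4079000000000000000000000000000 2800000000000000000000000000 8 = true := by decide +kernel
theorem rf16 : run CC false 4122800000000000000000000000000 1800000000000000000000000000 7 = true := by decide +kernel
theorem rf17 : run CC false 4147600000000000000000000000000 1400000000000000000000000000 2 = true := by decide +kernel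
theorem rc0 : run CC true 4152900000000000000000000000000 1100000000000000000000000000 60 = true := by decide +kernel
theorem rc1 : run CC true 4285600000000000000000000000000 1800000000000000000000000000 60 = true := by decide +kernel
theorem rc2 : run CC true 4502000000000000000000000000000 2200000000000000000000000000 60 = true := by decide +kernel
theorem rc3 : run CC true 4767300000000000000000000000000 3500000000000000000000000000 60 = true := by decide +kernel
theorem rc4 : run CC true 5189300000000000000000000000000 5500000000000000000000000000 60 = true := by decide +kernel
theorem rc5 : run CC true 5852400000000000000000000000000 8600000000000000000000000000 60 = true := by decide +kernel
theorem rc6 : run CC true 6886600000000000000000000000000 10800000000000000000000000000 60 = true := by decide +kernel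
theorem rc7 : run CC true 8188700000000000000000000000000 16900000000000000000000000000 60 = true := by decide +kernel
theorem rc8 : run CC true 10220900000000000000000000000000 21100000000000000000000000000 60 = true := by decide +kernel
theorem rc9 : run CC true 12758200000000000000000000000000 26400000000000000000000000000 60 = true := by decide +kernel
theorem rc10 : run CC true 15926200000000000000000000000000 26400000000000000000000000000 60 = true := by decide +kernel
theorem rc11 : run CC true 19100800000000000000000000000000 33000000000000000000000000000 15 = true := by decide +kernel

end ZP

namespace ZP

lemma bern6 : bernoulli' 6 = 1/42 := by
  rw [bernoulli'_def]
  norm_num [Finset.sum_range_succ, Nat.choose, bernoulli'_eq_zero_of_odd (n := 5) (by decide)]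
lemma bern8 : bernoulli' 8 = -1/30 := by
  rw [bernoulli'_def]
  norm_num [Finset.sum_range_succ, Nat.choose, bernoulli'_eq_zero_of_odd (n := 5) (by decide), bern6,
    bernoulli'_eq_zero_of_odd (n := 7) (by decide)]
lemma bern10 : bernoulli' 10 = 5/66 := by
  rw [bernoulli'_def]
  norm_num [Finset.sum_range_succ, Nat.choose, bernoulli'_eq_zero_of_odd (n := 5) (by decide), bern6, bern8,
    bernoulli'_eq_zero_of_odd (n := 7) (by decide), bernoulli'_eq_zero_of_odd (n := 9) (by decide)]
lemma bern12 : bernoulli' 12 = -691/2730 := by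
  rw [bernoulli'_def]
  norm_num [Finset.sum_range_succ, Nat.choose, bernoulli'_eq_zero_of_odd (n := 5) (by decide), bern6, bern8, bern10,
    bernoulli'_eq_zero_of_odd (n := 7) (by decide), bernoulli'_eq_zero_of_odd (n := 9) (by decide),
    bernoulli'_eq_zero_of_odd (n := 11) (by decide)]
lemma bern14 : bernoulli' 14 = 7/6 := by
  rw [bernoulli'_def]
  norm_num [Finset.sum_range_succ, Nat.choose, bernoulli'_eq_zero_of_odd (n := 5) (by decide), bern6, bern8, bern10, bern12,
    bernoulli'_eq_zero_of_odd (n := 7) (by decide), bernoulli'_eq_zero_of_odd (n := 9) (by decide),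
    bernoulli'_eq_zero_of_odd (n := 11) (by decide), bernoulli'_eq_zero_of_odd (n := 13) (by decide)]

lemma chi_even (k : ℕ) : chi (2 * ((k + 1 : ℕ) : ℂ)) = (2 * (k+1)) * (2 * (k+1) - 1) * (k.factorial : ℂ) *
    ((-1) ^ (k + 2) * 2 ^ (2 * k + 1) * bernoulli' (2 * (k+1)) / ((2 * (k+1)).factorial)) * (Real.pi : ℂ) ^ (k + 1) := by
  rw [chi_eq_zeta, riemannZeta_two_mul_nat (by omega), Gammaℝ_def]
  · have hp : (Real.pi : ℂ) ≠ 0 := by exact_mod_cast Real.pi_ne_zero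
    have e1 : -(2 * ((k + 1 : ℕ) : ℂ)) / 2 = -((k + 1 : ℕ) : ℂ) := by ring
    have e2 : (2 * ((k + 1 : ℕ) : ℂ)) / 2 = (k:ℂ) + 1 := by push_cast; ring
    rw [e1, e2, Complex.Gamma_nat_eq_factorial, cpow_neg, cpow_natCast,
      bernoulli_eq_bernoulli'_of_ne_one (by omega)]
    have e3 : 2 * (k + 1) - 1 = 2 * k + 1 := by omega
    rw [e3]
    have e4 : (Real.pi : ℂ) ^ (2 * (k+1)) = Real.pi ^ (k+1) * Real.pi ^ (k+1) := by ring
    rw [e4]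
    push_cast
    field_simp
  · simp; positivity
  · intro h
    have := congrArg Complex.re h
    simp at this
    have : (0:ℝ) ≤ k := by positivity
    linarith

lemma chi2 : chi 2 = ((Real.pi / 3 : ℝ) : ℂ) := by
  have := chi_even 0
  norm_num [Nat.factorial] at this ⊢; rw [this]; ring
lemma chi4 : chi 4 = ((2/15 * Real.pi ^ 2 : ℝ) : ℂ) := by
  have := chi_even 1
  norm_num [Nat.factorial] at this ⊢; rw [this]
lemma chi6 : chi 6 = ((4/63 * Real.pi ^ 3 : ℝ) : ℂ) := by
  have := chi_even 2
  norm_num [Nat.factorial, bern6] at this ⊢; rw [this]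
lemma chi8 : chi 8 = ((8/225 * Real.pi ^ 4 : ℝ) : ℂ) := by
  have := chi_even 3
  norm_num [Nat.factorial, bern8] at this ⊢; rw [this]
lemma chi10 : chi 10 = ((16/693 * Real.pi ^ 5 : ℝ) : ℂ) := by
  have := chi_even 4
  norm_num [Nat.factorial, bern10] at this ⊢; rw [this]
lemma chi12 : chi 12 = ((22112/1289925 * Real.pi ^ 6 : ℝ) : ℂ) := by
  have := chi_even 5
  norm_num [Nat.factorial, bern12] at this ⊢; rw [this]
lemma chi14 : chi 14 = ((64/4455 * Real.pi ^ 7 : ℝ) : ℂ) := by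
  have := chi_even 6
  norm_num [Nat.factorial, bern14] at this ⊢; rw [this]

lemma Mem_real {x : ℝ} {a : ℤ} {r : ℕ} (h1 : (a:ℝ) - r ≤ bS * x) (h2 : bS * x ≤ a + r) : Mem x ⟨a, 0, r⟩ := by
  unfold Mem cen
  have : ((bS : ℝ) : ℂ) * (x:ℂ) - (⟨(a:ℝ), ((0:ℤ):ℝ)⟩ : ℂ) = ((bS * x - a : ℝ) : ℂ) := by
    apply Complex.ext <;> simp
  rw [this, norm_real, Real.norm_eq_abs, abs_le]
  constructor <;> simp only <;> linarith

lemma Mem_re {x : ℝ} {b : Ball} (h : Mem x b) : (b.re:ℝ) - b.r ≤ bS * x ∧ bS * x ≤ b.re + b.r := by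
  unfold Mem cen at h
  have := (abs_re_le_norm _).trans h
  simp only [sub_re, re_ofReal_mul, ofReal_re, abs_le] at this
  constructor <;> linarith [this.1, this.2]
end ZP

namespace ZP

lemma fL_val (s v : ℝ) (h : chi s = (v:ℂ)) : v = ((s - 1/2)^2 - 1/4) * (fL (((s - 1/2)^2 : ℝ) : ℂ)).re + 1 := by
  have := chi_re_formula s
  rw [h, ofReal_re] at this
  exact this

lemma fL_vals : Real.pi / 3 = 2 * (fL ((9/4 : ℝ) : ℂ)).re + 1 ∧
    2/15 * Real.pi ^ 2 = 12 * (fL ((49/4 : ℝ) : ℂ)).re + 1 ∧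
    4/63 * Real.pi ^ 3 = 30 * (fL ((121/4 : ℝ) : ℂ)).re + 1 ∧
    8/225 * Real.pi ^ 4 = 56 * (fL ((225/4 : ℝ) : ℂ)).re + 1 ∧
    16/693 * Real.pi ^ 5 = 90 * (fL ((361/4 : ℝ) : ℂ)).re + 1 ∧
    22112/1289925 * Real.pi ^ 6 = 132 * (fL ((529/4 : ℝ) : ℂ)).re + 1 ∧
    64/4455 * Real.pi ^ 7 = 182 * (fL ((729/4 : ℝ) : ℂ)).re + 1 := by
  refine ⟨?_, ?_, ?_, ?_, ?_, ?_, ?_⟩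
  · refine (fL_val 2 (Real.pi / 3) (by exact_mod_cast chi2)).trans ?_; norm_num
  · refine (fL_val 4 (2/15 * Real.pi ^ 2) (by exact_mod_cast chi4)).trans ?_; norm_num
  · refine (fL_val 6 (4/63 * Real.pi ^ 3) (by exact_mod_cast chi6)).trans ?_; norm_num
  · refine (fL_val 8 (8/225 * Real.pi ^ 4) (by exact_mod_cast chi8)).trans ?_; norm_num
  · refine (fL_val 10 (16/693 * Real.pi ^ 5) (by exact_mod_cast chi10)).trans ?_; norm_num
  · refine (fL_val 12 (22112/1289925 * Real.pi ^ 6) (by exact_mod_cast chi12)).trans ?_; norm_num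
  · refine (fL_val 14 (64/4455 * Real.pi ^ 7) (by exact_mod_cast chi14)).trans ?_; norm_num

lemma pi_pows (k : ℕ) : (3.14159265358979323846 : ℝ) ^ k ≤ Real.pi ^ k ∧ Real.pi ^ k ≤ (3.14159265358979323847 : ℝ) ^ k :=
  ⟨pow_le_pow_left₀ (by norm_num) Real.pi_gt_d20.le _, pow_le_pow_left₀ Real.pi_pos.le Real.pi_lt_d20.le _⟩

lemma re_step {f g : ℂ → ℂ} (x0 : ℝ) (h : ∀ X, f X = f x0 + (X - x0) * g X) (x : ℝ) :
    (f x).re = (f x0).re + (x - x0) * (g x).re := by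
  have := congrArg Complex.re (h x)
  rw [← ofReal_sub, add_re, re_ofReal_mul] at this
  exact this

lemma CN_CC : CN CC fL := by
  obtain ⟨v1, v2, v3, v4, v5, v6, v7⟩ := fL_vals
  obtain ⟨g1, n1, h1⟩ := fL_NP.div (x0 := 9/4) (by norm_num)
  obtain ⟨g2, n2, h2⟩ := n1.div (x0 := 49/4) (by norm_num)
  obtain ⟨g3, n3, h3⟩ := n2.div (x0 := 121/4) (by norm_num)
  obtain ⟨g4, n4, h4⟩ := n3.div (x0 := 225/4) (by norm_num)
  obtain ⟨g5, n5, h5⟩ := n4.div (x0 := 361/4) (by norm_num)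
  obtain ⟨g6, n6, h6⟩ := n5.div (x0 := 529/4) (by norm_num)
  have a2 := re_step _ h1 (49/4)
  have a3 := re_step _ h1 (121/4)
  have a4 := re_step _ h1 (225/4)
  have a5 := re_step _ h1 (361/4)
  have a6 := re_step _ h1 (529/4)
  have a7 := re_step _ h1 (729/4)
  have b3 := re_step _ h2 (121/4)
  have b4 := re_step _ h2 (225/4)
  have b5 := re_step _ h2 (361/4)
  have b6 := re_step _ h2 (529/4)
  have b7 := re_step _ h2 (729/4)
  have c4 := re_step _ h3 (225/4)
  have c5 := re_step _ h3 (361/4)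
  have c6 := re_step _ h3 (529/4)
  have c7 := re_step _ h3 (729/4)
  have d5 := re_step _ h4 (361/4)
  have d6 := re_step _ h4 (529/4)
  have d7 := re_step _ h4 (729/4)
  have e6 := re_step _ h5 (529/4)
  have e7 := re_step _ h5 (729/4)
  have f7 := re_step _ h6 (729/4)
  have q1 := pi_pows 1
  have q2 := pi_pows 2
  have q3 := pi_pows 3
  have q4 := pi_pows 4
  have q5 := pi_pows 5
  have q6 := pi_pows 6
  have q7 := pi_pows 7
  rw [pow_one] at q1
  generalize Real.pi ^ 2 = p2 at *
  generalize Real.pi ^ 3 = p3 at *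
  generalize Real.pi ^ 4 = p4 at *
  generalize Real.pi ^ 5 = p5 at *
  generalize Real.pi ^ 6 = p6 at *
  generalize Real.pi ^ 7 = p7 at *
  generalize Real.pi = p1 at *
  generalize hu1 : (fL ((9/4:ℝ):ℂ)).re = u1 at *
  generalize (fL ((49/4:ℝ):ℂ)).re = u2 at *
  generalize (fL ((121/4:ℝ):ℂ)).re = u3 at *
  generalize (fL ((225/4:ℝ):ℂ)).re = u4 at *
  generalize (fL ((361/4:ℝ):ℂ)).re = u5 at *
  generalize (fL ((529/4:ℝ):ℂ)).re = u6 at *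
  generalize (fL ((729/4:ℝ):ℂ)).re = u7 at *
  generalize hw2 : (g1 ((49/4:ℝ):ℂ)).re = w2 at *
  generalize (g1 ((121/4:ℝ):ℂ)).re = w3 at *
  generalize (g1 ((225/4:ℝ):ℂ)).re = w4 at *
  generalize (g1 ((361/4:ℝ):ℂ)).re = w5 at *
  generalize (g1 ((529/4:ℝ):ℂ)).re = w6 at *
  generalize (g1 ((729/4:ℝ):ℂ)).re = w7 at *
  generalize hx3 : (g2 ((121/4:ℝ):ℂ)).re = x3 at *
  generalize (g2 ((225/4:ℝ):ℂ)).re = x4 at *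
  generalize (g2 ((361/4:ℝ):ℂ)).re = x5 at *
  generalize (g2 ((529/4:ℝ):ℂ)).re = x6 at *
  generalize (g2 ((729/4:ℝ):ℂ)).re = x7 at *
  generalize hy4 : (g3 ((225/4:ℝ):ℂ)).re = y4 at *
  generalize (g3 ((361/4:ℝ):ℂ)).re = y5 at *
  generalize (g3 ((529/4:ℝ):ℂ)).re = y6 at *
  generalize (g3 ((729/4:ℝ):ℂ)).re = y7 at *
  generalize hz5 : (g4 ((361/4:ℝ):ℂ)).re = z5 at *
  generalize (g4 ((529/4:ℝ):ℂ)).re = z6 at *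
  generalize (g4 ((729/4:ℝ):ℂ)).re = z7 at *
  generalize hr6 : (g5 ((529/4:ℝ):ℂ)).re = r6 at *
  generalize (g5 ((729/4:ℝ):ℂ)).re = r7 at *
  generalize hl7 : (g6 ((729/4:ℝ):ℂ)).re = l7 at *
  norm_num at q1 q2 q3 q4 q5 q6 q7
  have m0 : Mem u1 CC.d0 := by
    unfold CC; apply Mem_real <;> norm_num [bS] <;> linarith
  have m1 : Mem w2 CC.d1 := by
    unfold CC; apply Mem_real <;> norm_num [bS] <;> linarith
  have m2 : Mem x3 CC.d2 := by
    unfold CC; apply Mem_real <;> norm_num [bS] <;> linarith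
  have m3 : Mem y4 CC.d3 := by
    unfold CC; apply Mem_real <;> norm_num [bS] <;> linarith
  have m4 : Mem z5 CC.d4 := by
    unfold CC; apply Mem_real <;> norm_num [bS] <;> linarith
  have m5 : Mem r6 CC.d5 := by
    unfold CC; apply Mem_real <;> norm_num [bS] <;> linarith
  have m6 : l7 * 10^30 ≤ 600273540296774 := by
    norm_num; linarith
  rw [n1.ofReal, hw2] at h2
  rw [n2.ofReal, hx3] at h3
  rw [n3.ofReal, hy4] at h4
  rw [n4.ofReal, hz5] at h5
  rw [n5.ofReal, hr6] at h6
  rw [fL_NP.ofReal, hu1] at h1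
  refine ⟨u1, w2, x3, y4, z5, r6, m0, m1, m2, m3, m4, m5, fun X hX => ⟨g6 X, ?_, ?_⟩⟩
  · unfold Mem cen CC
    have k := (n6.norm_le X).trans (n6.mono (norm_nonneg X) hX)
    have e : (⟨((0:ℤ):ℝ), ((0:ℤ):ℝ)⟩ : ℂ) = 0 := by apply Complex.ext <;> simp
    rw [hl7] at k
    simp only [e, sub_zero, norm_mul, norm_real, Real.norm_eq_abs]
    norm_num [bS] at m6 ⊢
    linarith
  · rw [h1 X, h2 X, h3 X, h4 X, h5 X, h6 X]
    push_cast
    ring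
end ZP

namespace ZP

lemma chi_X (s : ℂ) : chi s = 1 + ((s-1/2)^2 - 1/4) * fL ((s-1/2)^2) := by rw [chi_eq_fL]; ring

noncomputable def c3 : ℝ := (chi (3:ℝ)).re
noncomputable def c43 : ℝ := (chi (4/3:ℝ)).re
noncomputable def c23 : ℝ := (chi (2/3:ℝ)).re
lemma c3_eq : chi 3 = (c3 : ℂ) := by have := chi_ofReal 3; exact_mod_cast this
lemma c43_eq : chi (4/3) = (c43 : ℂ) := by have := chi_ofReal (4/3); push_cast at this; unfold c43; push_cast; exact this
lemma c23_eq : chi (2/3) = (c23 : ℂ) := by have := chi_ofReal (2/3); push_cast at this; unfold c23; push_cast; exact this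

lemma c3_bd : 1.147879 ≤ c3 ∧ c3 ≤ 1.1478817 ∧ 1147879445178798027470278657687 ≤ 10^30 * c3 ∧ 10^30*c3 ≤ 1147881640877602040676457920529 := by
  have h : Mem (c3:ℂ) (bchi CC (brat4 25)) := by
    rw [← c3_eq, chi_X]
    have e : ((3:ℂ) - 1/2)^2 = (25:ℕ) / 4 := by push_cast; norm_num
    rw [e]
    exact bchi_sound CN_CC (Mem_rat4 25) (by norm_num)
  have e1 : (bchi CC (brat4 25)).re = 1147880543028200034073368289108 := by decide +kernel
  have e2 : (bchi CC (brat4 25)).r = 1097849402006603089631421 := by decide +kernel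
  have h := Mem_re h
  rw [e1, e2] at h
  norm_num [bS] at h ⊢
  refine ⟨?_, ?_, ?_, ?_⟩ <;> linarith

lemma c43_bd : 1010313769179187596889515133550 ≤ 10^30 * c43 ∧ 10^30 * c43 ≤ 1010313954720823489054055810988 := by
  have h : Mem (c43:ℂ) (bchi CC ⟨694444444444444444444444444444,0,1⟩) := by
    rw [← c43_eq, chi_X]
    have e : ((4/3:ℂ) - 1/2)^2 = ((25/36:ℝ):ℂ) := by push_cast; norm_num
    rw [e]
    refine bchi_sound CN_CC (Mem_real ?_ ?_) ?_
    · norm_num [bS]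
    · norm_num [bS]
    · rw [norm_real]; norm_num
  have e1 : (bchi CC ⟨694444444444444444444444444444,0,1⟩).re = 1010313861950005542971785472269 := by decide +kernel
  have e2 : (bchi CC ⟨694444444444444444444444444444,0,1⟩).r = 92770817946082270338719 := by decide +kernel
  have h := Mem_re h
  rw [e1, e2] at h
  norm_num [bS] at h ⊢
  constructor <;> linarith

lemma c23_bd : 994879832969333048990562479910 ≤ 10^30 * c23 ∧ 10^30 * c23 ≤ 994879979847322123478437994640 := by
  have h : Mem (c23:ℂ) (bchi CC ⟨27777777777777777777777777777,0,1⟩) := by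
    rw [← c23_eq, chi_X]
    have e : ((2/3:ℂ) - 1/2)^2 = ((1/36:ℝ):ℂ) := by push_cast; norm_num
    rw [e]
    refine bchi_sound CN_CC (Mem_real ?_ ?_) ?_
    · norm_num [bS]
    · norm_num [bS]
    · rw [norm_real]; norm_num
  have e1 : (bchi CC ⟨27777777777777777777777777777,0,1⟩).re = 994879906408327586234500237275 := by decide +kernel
  have e2 : (bchi CC ⟨27777777777777777777777777777,0,1⟩).r = 73438994537243937757365 := by decide +kernel
  have h := Mem_re h
  rw [e1, e2] at h
  norm_num [bS] at h ⊢
  constructor <;> linarith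

noncomputable def aR : ℝ := Real.pi / 3 - 1
noncomputable def b1 : ℝ := 3 / Real.pi
noncomputable def b2 : ℝ := 3 * (Real.pi / 3 - b1 * c3) / (c3 - 1)
noncomputable def gam : ℝ := 2 * ((1 - 2 * aR / 3) * c43) / (c43 + c23)

lemma b1_bd : 954929658551372014611018942515 ≤ 10^30 * b1 ∧ 10^30 * b1 ≤ 954929658551372014617193202293 := by
  have h1 := Real.pi_gt_d20
  have h2 := Real.pi_lt_d20
  have hp := Real.pi_pos
  unfold b1
  constructor
  · rw [← mul_div_assoc, le_div_iff₀ hp]; linarith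
  · rw [← mul_div_assoc, div_le_iff₀ hp]; linarith

lemma b2_bd : -992997000000000000000000000000 ≤ 10^30 * b2 ∧ 10^30 * b2 ≤ -992969100000000000000000000000 := by
  have h1 := Real.pi_gt_d20
  have h2 := Real.pi_lt_d20
  obtain ⟨k1, k2, k3, k4⟩ := c3_bd
  obtain ⟨l1, l2⟩ := b1_bd
  have hc : 0 < c3 - 1 := by linarith
  have m1 : (10^30 * b1) * c3 ≤ 954929658551372014617193202293 * c3 := by gcongr
  have m2 : 954929658551372014611018942515 * c3 ≤ (10^30 * b1) * c3 := by gcongr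
  unfold b2
  constructor
  · rw [← mul_div_assoc, le_div_iff₀ hc]; linarith
  · rw [← mul_div_assoc, div_le_iff₀ hc]; linarith

lemma gam_bd : 975989596226597618090519739258 ≤ 10^30 * gam ∧ 10^30 * gam ≤ 975989942592320852075423152532 := by
  have h1 := Real.pi_gt_d20
  have h2 := Real.pi_lt_d20
  obtain ⟨k1, k2⟩ := c43_bd
  obtain ⟨l1, l2⟩ := c23_bd
  have hc : 0 < c43 + c23 := by linarith
  have hc' : 0 ≤ c43 := by linarith
  have m1 : (1 - 2 * aR / 3) * c43 ≤ (1 - 2 * (3.14159265358979323846 / 3 - 1) / 3) * c43 := by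
    unfold aR; gcongr
  have m2 : (1 - 2 * (3.14159265358979323847 / 3 - 1) / 3) * c43 ≤ (1 - 2 * aR / 3) * c43 := by
    unfold aR; gcongr
  unfold gam
  constructor
  · rw [← mul_div_assoc, le_div_iff₀ hc]; linarith
  · rw [← mul_div_assoc, div_le_iff₀ hc]; linarith

lemma ib2_bd : -1007094087921181060823429462191 ≤ 10^30 * b2⁻¹ ∧ 10^30 * b2⁻¹ ≤ -1007039001084339476303362995843 := by
  obtain ⟨k1, k2⟩ := b2_bd
  have hc : b2 < 0 := by linarith
  rw [← div_eq_mul_inv]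
  constructor
  · rw [le_div_iff_of_neg hc]; linarith
  · rw [div_le_iff_of_neg hc]; linarith

lemma b1_abs : |b1| < 1 := by rw [abs_lt]; have := b1_bd; constructor <;> linarith
lemma b2_abs : |b2| < 1 := by rw [abs_lt]; have := b2_bd; constructor <;> linarith

lemma CS_CC : CS CC aR b1 b2 gam := by
  have h1 := Real.pi_gt_d20
  have h2 := Real.pi_lt_d20
  have hb1 := b1_bd
  have hb2 := b2_bd
  have hi2 := ib2_bd
  have hg := gam_bd
  have hi1 : b1⁻¹ = Real.pi / 3 := by unfold b1; rw [inv_div]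
  constructor
  · have : b1 ≠ 0 := by linarith
    exact_mod_cast this
  · have : b2 ≠ 0 := by linarith
    exact_mod_cast this
  · unfold CC aR; apply Mem_real <;> norm_num [bS] <;> linarith
  · unfold CC; apply Mem_real <;> norm_num [bS] <;> linarith
  · rw [← ofReal_inv, hi1]
    unfold CC; apply Mem_real <;> norm_num [bS] <;> linarith
  · rw [← ofReal_inv, ← ofReal_sub, hi1]
    unfold CC; apply Mem_real <;> norm_num [bS] <;> linarith
  · unfold CC; apply Mem_real <;> norm_num [bS] <;> linarith
  · rw [← ofReal_inv]
    unfold CC; apply Mem_real <;> norm_num [bS] <;> linarith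
  · rw [← ofReal_inv, ← ofReal_sub]
    unfold CC; apply Mem_real <;> norm_num [bS] <;> linarith
  · unfold CC; apply Mem_real <;> norm_num [bS] <;> linarith

lemma FD_w {w : ℂ} (hw : 0 < w.re) : FD b1 b2 w (chi w / chi (w + 1)) := by
  have hp : (Real.pi:ℂ) ≠ 0 := by exact_mod_cast Real.pi_ne_zero
  have hc3 : c3 - 1 ≠ 0 := by have := c3_bd; linarith [this.1]
  have e2 : Real.pi / 3 * (3 + b1 * b2) = (3 * b1 + b2) * c3 := by
    have : b2 * (c3 - 1) = 3 * (Real.pi / 3 - b1 * c3) := by unfold b2; field_simp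
    have h1 : b1 * (Real.pi / 3) = 1 := by unfold b1; field_simp
    linear_combination b2 * h1 - this
  obtain ⟨G, ζ, -, h2, -, h4, h5⟩ := F_data b1_abs b2_abs (w := w + 1)
    (by rw [chi_one, chi2, ← ofReal_mul]; unfold b1; rw [eq_comm]; norm_cast; field_simp)
    (by rw [chi2, c3_eq]; exact_mod_cast e2)
    (by
      have : 3 + b1 * b2 ≠ 0 := by
        have := abs_lt.1 b1_abs
        have := abs_lt.1 b2_abs
        nlinarith
      exact_mod_cast this) (by simpa using hw)
  have e1 : w + 1 - 1 = w := by ring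
  have e3 : w + 1 - 2 = w - 1 := by ring
  have e4 : w + 1 - 3 = w - 2 := by ring
  have e5 : w + 1 + 1 = w + 2 := by ring
  rw [e1, e3] at h4
  rw [e4, e5] at h5
  exact ⟨G, ζ, h2, h4, h5⟩
end ZP

namespace ZP

noncomputable def aS (s : ℂ) : ℂ := chi s / chi (s + 1)
noncomputable def cS (s : ℂ) : ℂ := chi (3 * s - 1) / chi (3 * s)
noncomputable def tS (s : ℂ) : ℂ := chi (2 * s - 1) / chi (2 * s)
noncomputable def mE (t : ℝ) : ℂ := mainE aR gam (aS (1/2 + t * I)) (cS (1/2 + t * I)) (tS (1/2 + t * I)) t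

lemma FD_a (t : ℝ) : FD b1 b2 (1/2 + t * I) (aS (1/2 + t * I)) := FD_w (by simp)
lemma FD_c (t : ℝ) : FD b1 b2 (1/2 + 3 * t * I) (cS (1/2 + t * I)) := by
  have := FD_w (w := 1/2 + 3 * t * I) (by simp)
  unfold cS
  convert this using 3 <;> ring
lemma tS_eq (t : ℝ) : tS (1/2 + t * I) = (starRingEnd ℂ) (chi (1 + 2 * t * I)) / chi (1 + 2 * t * I) := by
  unfold tS
  rw [← chi_conj, ← chi_one_sub (2 * (1/2 + t * I) - 1)]
  congr 2
  · simp [map_ofNat]; ring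
  · ring
lemma tS_norm (t : ℝ) : ‖tS (1/2 + t * I)‖ ≤ 1 := by
  rw [tS_eq, norm_div, norm_conj]; exact div_self_le_one _

lemma fine_bd {t0 : ℤ} {h n : ℕ} (hr : run CC false t0 h n = true) {t : ℝ} (h1 : (t0:ℝ) - h ≤ bS * t)
    (h2 : bS * t ≤ t0 + (2 * n - 1) * h) (hn : 0 < n) (h3 : 0 ≤ t) (h6 : t ≤ 6) : 1/32 ≤ (mE t).re := by
  unfold mE
  rw [tS_eq]
  refine run_fine CS_CC CN_CC h n t0 hr t h1 h2 hn ?_ _ _ _ (FD_a t) (FD_c t) ?_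
  · rw [abs_of_nonneg h3]; exact h6
  · rw [chi_X]; congr 1
    ring_nf
lemma crude_bd {t0 : ℤ} {h n : ℕ} (hr : run CC true t0 h n = true) {t : ℝ} (h1 : (t0:ℝ) - h ≤ bS * t)
    (h2 : bS * t ≤ t0 + (2 * n - 1) * h) (hn : 0 < n) : 1/32 ≤ (mE t).re :=
  run_crude CS_CC h n t0 hr t h1 h2 hn _ _ _ (FD_a t) (FD_c t) (tS_norm t)

lemma line_low {t : ℝ} (h0 : 0 ≤ t) (h20 : t ≤ 20) : 1/32 ≤ (mE t).re := by
  have h00 := h0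
  rcases le_total t (9/250) with h | h'
  · exact fine_bd rf0 (by norm_num [bS]; linarith) (by norm_num [bS]; linarith) (by norm_num) h00 (by linarith)
  clear h0
  rename' h' => h0
  rcases le_total t (21/250) with h | h'
  · exact fine_bd rf1 (by norm_num [bS]; linarith) (by norm_num [bS]; linarith) (by norm_num) h00 (by linarith)
  clear h0
  rename' h' => h0
  rcases le_total t (18/125) with h | h'
  · exact fine_bd rf2 (by norm_num [bS]; linarith) (by norm_num [bS]; linarith) (by norm_num) h00 (by linarith)
  clear h0
  rename' h' => h0
  rcases le_total t (57/250) with h | h'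
  · exact fine_bd rf3 (by norm_num [bS]; linarith) (by norm_num [bS]; linarith) (by norm_num) h00 (by linarith)
  clear h0
  rename' h' => h0
  rcases le_total t (9/25) with h | h'
  · exact fine_bd rf4 (by norm_num [bS]; linarith) (by norm_num [bS]; linarith) (by norm_num) h00 (by linarith)
  clear h0
  rename' h' => h0
  rcases le_total t (78/125) with h | h'
  · exact fine_bd rf5 (by norm_num [bS]; linarith) (by norm_num [bS]; linarith) (by norm_num) h00 (by linarith)
  clear h0
  rename' h' => h0
  rcases le_total t (363/250) with h | h'
  · exact fine_bd rf6 (by norm_num [bS]; linarith) (by norm_num [bS]; linarith) (by norm_num) h00 (by linarith)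
  clear h0
  rename' h' => h0
  rcases le_total t (2739/1250) with h | h'
  · exact fine_bd rf7 (by norm_num [bS]; linarith) (by norm_num [bS]; linarith) (by norm_num) h00 (by linarith)
  clear h0
  rename' h' => h0
  rcases le_total t (6533/2500) with h | h'
  · exact fine_bd rf8 (by norm_num [bS]; linarith) (by norm_num [bS]; linarith) (by norm_num) h00 (by linarith)
  clear h0
  rename' h' => h0
  rcases le_total t (1929/625) with h | h'
  · exact fine_bd rf9 (by norm_num [bS]; linarith) (by norm_num [bS]; linarith) (by norm_num) h00 (by linarith)
  clear h0
  rename' h' => h0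
  rcases le_total t (17457/5000) with h | h'
  · exact fine_bd rf10 (by norm_num [bS]; linarith) (by norm_num [bS]; linarith) (by norm_num) h00 (by linarith)
  clear h0
  rename' h' => h0
  rcases le_total t (18753/5000) with h | h'
  · exact fine_bd rf11 (by norm_num [bS]; linarith) (by norm_num [bS]; linarith) (by norm_num) h00 (by linarith)
  clear h0
  rename' h' => h0
  rcases le_total t (19527/5000) with h | h'
  · exact fine_bd rf12 (by norm_num [bS]; linarith) (by norm_num [bS]; linarith) (by norm_num) h00 (by linarith)
  clear h0
  rename' h' => h0
  rcases le_total t (19941/5000) with h | h'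
  · exact fine_bd rf13 (by norm_num [bS]; linarith) (by norm_num [bS]; linarith) (by norm_num) h00 (by linarith)
  clear h0
  rename' h' => h0
  rcases le_total t (20381/5000) with h | h'
  · exact fine_bd rf14 (by norm_num [bS]; linarith) (by norm_num [bS]; linarith) (by norm_num) h00 (by linarith)
  clear h0
  rename' h' => h0
  rcases le_total t (4121/1000) with h | h'
  · exact fine_bd rf15 (by norm_num [bS]; linarith) (by norm_num [bS]; linarith) (by norm_num) h00 (by linarith)
  clear h0
  rename' h' => h0
  rcases le_total t (20731/5000) with h | h'
  · exact fine_bd rf16 (by norm_num [bS]; linarith) (by norm_num [bS]; linarith) (by norm_num) h00 (by linarith)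
  clear h0
  rename' h' => h0
  rcases le_total t (20759/5000) with h | h'
  · exact fine_bd rf17 (by norm_num [bS]; linarith) (by norm_num [bS]; linarith) (by norm_num) h00 (by linarith)
  clear h0
  rename' h' => h0
  rcases le_total t (21419/5000) with h | h'
  · exact crude_bd rc0 (by norm_num [bS]; linarith) (by norm_num [bS]; linarith) (by norm_num)
  clear h0
  rename' h' => h0
  rcases le_total t (22499/5000) with h | h'
  · exact crude_bd rc1 (by norm_num [bS]; linarith) (by norm_num [bS]; linarith) (by norm_num)
  clear h0
  rename' h' => h0
  rcases le_total t (23819/5000) with h | h'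
  · exact crude_bd rc2 (by norm_num [bS]; linarith) (by norm_num [bS]; linarith) (by norm_num)
  clear h0
  rename' h' => h0
  rcases le_total t (25919/5000) with h | h'
  · exact crude_bd rc3 (by norm_num [bS]; linarith) (by norm_num [bS]; linarith) (by norm_num)
  clear h0
  rename' h' => h0
  rcases le_total t (29219/5000) with h | h'
  · exact crude_bd rc4 (by norm_num [bS]; linarith) (by norm_num [bS]; linarith) (by norm_num)
  clear h0
  rename' h' => h0
  rcases le_total t (34379/5000) with h | h'
  · exact crude_bd rc5 (by norm_num [bS]; linarith) (by norm_num [bS]; linarith) (by norm_num)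
  clear h0
  rename' h' => h0
  rcases le_total t (40859/5000) with h | h'
  · exact crude_bd rc6 (by norm_num [bS]; linarith) (by norm_num [bS]; linarith) (by norm_num)
  clear h0
  rename' h' => h0
  rcases le_total t (50999/5000) with h | h'
  · exact crude_bd rc7 (by norm_num [bS]; linarith) (by norm_num [bS]; linarith) (by norm_num)
  clear h0
  rename' h' => h0
  rcases le_total t (63659/5000) with h | h'
  · exact crude_bd rc8 (by norm_num [bS]; linarith) (by norm_num [bS]; linarith) (by norm_num)
  clear h0
  rename' h' => h0
  rcases le_total t (79499/5000) with h | h'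
  · exact crude_bd rc9 (by norm_num [bS]; linarith) (by norm_num [bS]; linarith) (by norm_num)
  clear h0
  rename' h' => h0
  rcases le_total t (95339/5000) with h | h'
  · exact crude_bd rc10 (by norm_num [bS]; linarith) (by norm_num [bS]; linarith) (by norm_num)
  clear h0
  rename' h' => h0
  rcases le_total t (100289/5000) with h | h'
  · exact crude_bd rc11 (by norm_num [bS]; linarith) (by norm_num [bS]; linarith) (by norm_num)
  clear h0
  rename' h' => h0
  linarith
end ZP

namespace ZP

lemma gam_le : 0 ≤ gam ∧ gam ≤ 1 := by have := gam_bd; constructor <;> linarith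

lemma aS_norm {s : ℂ} (h : 1/2 ≤ s.re) : ‖aS s‖ ≤ 1 := by
  unfold aS
  have := inner_one (w := s + 1) (by simp; linarith)
  rw [add_sub_cancel_right] at this
  rw [norm_div]; exact div_le_one_of_le₀ this (norm_nonneg _)
lemma cS_norm {s : ℂ} (h : 1/2 ≤ s.re) : ‖cS s‖ ≤ 1 := by
  unfold cS
  have := inner_one (w := 3 * s) (by simp; linarith)
  rw [norm_div]; exact div_le_one_of_le₀ this (norm_nonneg _)
lemma tS_norm' {s : ℂ} (h : 1/2 ≤ s.re) : ‖tS s‖ ≤ 1 := by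
  unfold tS
  have := inner_one (w := 2 * s) (by simp; linarith)
  rw [norm_div]; exact div_le_one_of_le₀ this (norm_nonneg _)

lemma norm_le_of_sq {z : ℂ} {b : ℝ} (hb : 0 ≤ b) (h : z.re * z.re + z.im * z.im ≤ b ^ 2) : ‖z‖ ≤ b := by
  refine abs_le_of_sq_le_sq' ?_ hb |>.2
  rw [← normSq_eq_norm_sq, normSq_apply]; exact h

lemma line_high {t : ℝ} (h : 20 ≤ t) :
    1/10^10 * ((t^2+1/4) * (t^2+1/36) * (t^2+400)) ≤ (mE t).re := by
  have ha := aS_norm (s := 1/2 + t * I) (by simp)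
  have hc := cS_norm (s := 1/2 + t * I) (by simp)
  have ht := tS_norm t
  unfold mE
  generalize aS (1/2 + t * I) = a at *
  generalize cS (1/2 + t * I) = c at *
  generalize tS (1/2 + t * I) = θ at *
  have t0 : 0 < t := by linarith
  obtain ⟨g0, g1⟩ := gam_le
  set s : ℂ := 1/2 + t * I with hs
  set B : ℂ := a * (2 * (s - 1) * (s - 2) + c * ((s + 1) * (s - 2) + gam * s * (1 + θ))) with hB
  set μ : ℂ := (1/2 - t * I) * (4 + t * I) * (20 - t * I) with hμ
  have n1 : ‖s‖ ≤ t + 1/(8*t) := norm_le_of_sq (by positivity) (by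
    simp [hs]; field_simp; nlinarith)
  have n1' : ‖s‖ ≤ t + 1/8 := n1.trans (by
    gcongr; linarith)
  have n2 : ‖s - 1‖ * ‖s - 2‖ ≤ t^2 + 5/4 := by
    rw [← norm_mul]
    apply norm_le_of_sq (by positivity)
    simp [hs]; nlinarith
  have n3 : ‖s + 1‖ * ‖s - 2‖ ≤ t^2 + 9/4 := by
    rw [← norm_mul]
    apply norm_le_of_sq (by positivity)
    simp [hs]; nlinarith
  have nB : ‖B‖ ≤ 3*t^2+2*t+5 := by
    have k1 : ‖1 + θ‖ ≤ 2 := (norm_add_le _ _).trans (by rw [norm_one]; linarith)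
    have k2 : ‖(gam:ℂ) * s * (1 + θ)‖ ≤ (t + 1/8) * 2 := by
      rw [norm_mul, norm_mul, norm_real, Real.norm_of_nonneg g0]
      have : gam * ‖s‖ ≤ 1 * (t + 1/8) := by gcongr
      rw [one_mul] at this
      gcongr
    have k3 : ‖(s + 1) * (s - 2) + gam * s * (1 + θ)‖ ≤ t^2 + 9/4 + (t + 1/8) * 2 :=
      (norm_add_le _ _).trans (by rw [norm_mul]; gcongr)
    have k4 : ‖c * ((s + 1) * (s - 2) + gam * s * (1 + θ))‖ ≤ t^2 + 9/4 + (t + 1/8) * 2 := by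
      rw [norm_mul]; exact (mul_le_of_le_one_left (norm_nonneg _) hc).trans k3
    have k5 : ‖2 * (s - 1) * (s - 2)‖ ≤ 2 * (t^2+5/4) := by
      rw [norm_mul, norm_mul, mul_assoc]; simp; linarith
    rw [hB, norm_mul]
    refine (mul_le_of_le_one_left (norm_nonneg _) ha).trans ((norm_add_le _ _).trans ?_)
    linarith
  have m1 : ‖1/2 - t * I‖ ≤ t + 1/(8*t) := norm_le_of_sq (by positivity) (by
    simp; field_simp; nlinarith)
  have m2 : ‖4 + t * I‖ ≤ t + 8/t := norm_le_of_sq (by positivity) (by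
    simp; field_simp; nlinarith)
  have m3 : ‖20 - t * I‖ ≤ t + 200/t := norm_le_of_sq (by positivity) (by
    simp; field_simp; nlinarith)
  have nμ : ‖μ‖ ≤ (t^2+1/8)*(t^2+8)*(t^2+200) / t^3 := by
    rw [hμ, norm_mul, norm_mul]
    calc _ ≤ (t + 1/(8*t)) * (t + 8/t) * (t + 200/t) := by gcongr
      _ = _ := by field_simp
  have nμB : -((μ * B).re) ≤ (t^2+1/8)*(t^2+8)*(t^2+200) / t^3 * (3*t^2+2*t+5) := by
    refine (neg_le_abs _).trans ((abs_re_le_norm _).trans ?_)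
    rw [norm_mul]; gcongr
  have eE : mainE aR gam a c θ t = μ * B - μ * ((s - 1) * (3 * s - 2) * (aR * (s - 1) + 1)) := by
    unfold mainE
    simp only [hB, hμ, hs]; ring
  have eP : (μ * ((s - 1) * (3 * s - 2) * (aR * (s - 1) + 1))).re =
    -((-10+2079/8*t^2+103/2*t^4) + aR*(5 -3647/16*t^2 +157*t^4+3*t^6)) := by
    simp [hs, hμ, pow_succ]; ring
  rw [eE, sub_re, eP]
  have hA : (0.0471975:ℝ) ≤ aR := by unfold aR; have := Real.pi_gt_d20; linarith
  obtain ⟨u, hu, rfl⟩ : ∃ u : ℝ, 0 ≤ u ∧ t = u + 20 := ⟨t - 20, by linarith, by ring⟩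
  have hP1 : 0 ≤ 5 -3647/16*(u+20)^2 +157*(u+20)^4+3*(u+20)^6 := by
    ring_nf; positivity
  have hP2 := mul_le_mul_of_nonneg_right hA hP1
  have key : ((u+20)^2+1/8)*((u+20)^2+8)*((u+20)^2+200) / (u+20)^3 * (3*(u+20)^2+2*(u+20)+5) ≤
     (-10+2079/8*(u+20)^2+103/2*(u+20)^4) + 0.0471975*(5 -3647/16*(u+20)^2 +157*(u+20)^4+3*(u+20)^6) -
     1/10^10 * (((u+20)^2+1/4) * ((u+20)^2+1/36) * ((u+20)^2+400)) := by
    rw [div_mul_eq_mul_div, div_le_iff₀ (by positivity), ← sub_nonneg]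
    ring_nf; positivity
  linarith

lemma mE_neg (t : ℝ) : mE (-t) = (starRingEnd ℂ) (mE t) := by
  have e : (1/2 + ((-t : ℝ):ℂ) * I) = (starRingEnd ℂ) (1/2 + t * I) := by simp [map_ofNat]
  have h2 : (starRingEnd ℂ) 2 = 2 := by simp [map_ofNat]
  have h3 : (starRingEnd ℂ) 3 = 3 := by simp [map_ofNat]
  have h4 : (starRingEnd ℂ) 4 = 4 := by simp [map_ofNat]
  have h20 : (starRingEnd ℂ) 20 = 20 := by simp [map_ofNat]
  have ea (s : ℂ) : aS ((starRingEnd ℂ) s) = (starRingEnd ℂ) (aS s) := by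
    simp [aS, ← chi_conj]
  have ec (s : ℂ) : cS ((starRingEnd ℂ) s) = (starRingEnd ℂ) (cS s) := by
    simp [cS, ← chi_conj, h3]
  have et (s : ℂ) : tS ((starRingEnd ℂ) s) = (starRingEnd ℂ) (tS s) := by
    simp [tS, ← chi_conj, h2]
  unfold mE mainE
  rw [e, ea, ec, et]
  simp [h2, h3, h4, h20]

lemma line_all (t : ℝ) : 1/10^10 * ((t^2+1/4) * (t^2+1/36) * (t^2+400)) ≤ (mE t).re := by
  wlog h : 0 ≤ t with H
  · have := H (-t) (by linarith)
    rw [mE_neg, conj_re, neg_sq] at this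
    exact this
  rcases le_total t 20 with h1 | h1
  · refine le_trans ?_ (line_low h h1)
    have : t^2 ≤ 400 := by nlinarith
    calc _ ≤ 1/10^10 * ((400+1/4) * (400+1/36) * (400+400:ℝ)) := by gcongr
      _ ≤ _ := by norm_num
  · exact line_high h1
end ZP

namespace ZP

lemma A_eq : A = (aR : ℂ) := by unfold A aR; push_cast; rfl

noncomputable def E1 (s : ℂ) : ℂ :=
  chi (2 * s) * ((s - 1) * (3 * s - 2) * (A * s - A + 1) * chi (s + 1) * chi (3 * s)
    - (s + 1) * (s - 2) * chi s * chi (3 * s - 1)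
    - 2 * (s - 1) * (s - 2) * chi s * chi (3 * s))
  - gam * s * (chi s * chi (3 * s - 1)) * (chi (2 * s) + chi (2 * s - 1))

lemma E1_diff : Differentiable ℂ E1 := by
  have := chi_diff
  unfold E1
  fun_prop

lemma chi_neg_one : chi (-1) = chi 2 := by rw [← chi_one_sub]; norm_num
lemma chi_third : chi (1/3) = (c23 : ℂ) := by rw [← chi_one_sub, ← c23_eq]; norm_num
lemma chi_nthird : chi (-1/3) = (c43 : ℂ) := by rw [← chi_one_sub, ← c43_eq]; norm_num
lemma gam_eq : gam * (c43 + c23) = 2 * ((1 - 2 * aR / 3) * c43) := by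
  have := c43_bd
  have := c23_bd
  have : c43 + c23 ≠ 0 := by linarith
  unfold gam; field_simp

lemma E1_one_sub (s : ℂ) : E1 (1 - s) = chi (2 * s - 1) * (s * (3 * s - 1) * (1 - A * s) * chi (s - 1) * chi (3 * s - 2)
    - (s + 1) * (s - 2) * chi s * chi (3 * s - 1)
    - 2 * s * (s + 1) * chi s * chi (3 * s - 2))
  - gam * (1 - s) * (chi s * chi (3 * s - 1)) * (chi (2 * s) + chi (2 * s - 1)) := by
  unfold E1
  have e1 : chi (2 * (1 - s)) = chi (2 * s - 1) := by rw [← chi_one_sub]; congr 1; ring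
  have e2 : chi (1 - s + 1) = chi (s - 1) := by rw [← chi_one_sub]; congr 1; ring
  have e3 : chi (3 * (1 - s)) = chi (3 * s - 2) := by rw [← chi_one_sub]; congr 1; ring
  have e4 : chi (3 * (1 - s) - 1) = chi (3 * s - 1) := by rw [← chi_one_sub]; congr 1; ring
  have e5 : chi (2 * (1 - s) - 1) = chi (2 * s) := by rw [← chi_one_sub]; congr 1; ring
  rw [e1, e2, e3, e4, e5, chi_one_sub]
  ring

lemma Z1_eq (s : ℂ) : Z1 s = (s - 1) * E1 s + s * E1 (1 - s) := by
  rw [E1_one_sub]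
  unfold E1 Z1 f1
  have e2 : chi (1 - s + 1) = chi (s - 1) := by rw [← chi_one_sub]; congr 1; ring
  have e3 : chi (3 * (1 - s)) = chi (3 * s - 2) := by rw [← chi_one_sub]; congr 1; ring
  have e4 : chi (3 * (1 - s) - 1) = chi (3 * s - 1) := by rw [← chi_one_sub]; congr 1; ring
  rw [e2, e3, e4, chi_one_sub]
  ring

lemma E1_zero : E1 0 = 0 := by
  have h := chi2
  unfold E1
  norm_num [chi_zero, chi_one, chi_neg_one]
  rw [h, A]; push_cast; ring
lemma E1_a : E1 (1/3) = 0 := by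
  have h : (gam : ℂ) * (c43 + c23) = 2 * ((1 - 2 * aR / 3) * c43) := by exact_mod_cast gam_eq
  unfold E1
  norm_num [chi_zero, chi_one, chi_third, chi_nthird, c43_eq, c23_eq]
  rw [show (-(1/3):ℂ) = -1/3 by ring, chi_nthird, A_eq]
  linear_combination (-1/3 * c23 : ℂ) * h
lemma E1_b : E1 (2/3) = 0 := by
  have h : (gam : ℂ) * (c43 + c23) = 2 * ((1 - 2 * aR / 3) * c43) := by exact_mod_cast gam_eq
  have h2 := chi2
  have e : (Real.pi / 3 : ℝ) = aR + 1 := by unfold aR; ring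
  rw [e] at h2
  push_cast at h2
  unfold E1
  norm_num [chi_zero, chi_one, chi_third, chi_nthird, c43_eq, c23_eq, h2]
  linear_combination (-2/3 * c23 : ℂ) * h

lemma factor {f : ℂ → ℂ} (hf : Differentiable ℂ f) {c : ℂ} (h0 : f c = 0) :
    ∃ g : ℂ → ℂ, Differentiable ℂ g ∧ ∀ s, f s = (s - c) * g s := by
  refine ⟨dslope f c, ?_, fun s => ?_⟩
  · rw [← differentiableOn_univ] at hf ⊢
    exact (differentiableOn_dslope Filter.univ_mem).2 hf
  · rw [← smul_eq_mul, sub_smul_dslope, h0, sub_zero]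

lemma exists_k : ∃ k : ℂ → ℂ, Differentiable ℂ k ∧ ∀ s, E1 s = s * (s - 1/3) * (s - 2/3) * k s := by
  obtain ⟨g1, d1, h1⟩ := factor E1_diff E1_zero
  have z1 : g1 (1/3) = 0 := by
    have := h1 (1/3); rw [E1_a] at this
    have := this.symm
    rw [mul_eq_zero] at this
    exact this.resolve_left (by norm_num)
  obtain ⟨g2, d2, h2⟩ := factor d1 z1
  have z2 : g2 (2/3) = 0 := by
    have := h1 (2/3); rw [E1_b, h2] at this
    have := this.symm
    rw [mul_eq_zero, mul_eq_zero] at this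
    exact (this.resolve_left (by norm_num)).resolve_left (by norm_num)
  obtain ⟨g3, d3, h3⟩ := factor d2 z2
  refine ⟨g3, d3, fun s => ?_⟩
  rw [h1, h2, h3]; ring

noncomputable def kk : ℂ → ℂ := exists_k.choose
lemma kk_diff : Differentiable ℂ kk := exists_k.choose_spec.1
lemma E1_kk (s : ℂ) : E1 s = s * (s - 1/3) * (s - 2/3) * kk s := exists_k.choose_spec.2 s

lemma Z1_kk (s : ℂ) : Z1 s = s * (s - 1) * (s - 1/3) * (s - 2/3) * (kk s - kk (1 - s)) := by
  rw [Z1_eq, E1_kk, E1_kk (1 - s)]; ring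

noncomputable def XX (s : ℂ) : ℂ := chi (2 * s) * chi (s + 1) * chi (3 * s)
lemma XX_ne {s : ℂ} (h : 1/2 ≤ s.re) : XX s ≠ 0 := by
  unfold XX
  refine mul_ne_zero (mul_ne_zero (chi_ne_zero ?_) (chi_ne_zero ?_)) (chi_ne_zero ?_) <;> simp <;> linarith
lemma XX_diff : Differentiable ℂ XX := by
  have := chi_diff
  unfold XX
  fun_prop

lemma E1_XX {s : ℂ} (h : 1/2 ≤ s.re) : E1 s = XX s * ((s - 1) * (3 * s - 2) * (aR * (s - 1) + 1) -
    aS s * (2 * (s - 1) * (s - 2) + cS s * ((s + 1) * (s - 2) + gam * s * (1 + tS s)))) := by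
  have h1 : chi (2 * s) ≠ 0 := chi_ne_zero (by simp; linarith)
  have h2 : chi (s + 1) ≠ 0 := chi_ne_zero (by simp; linarith)
  have h3 : chi (3 * s) ≠ 0 := chi_ne_zero (by simp; linarith)
  unfold E1 XX aS cS tS
  rw [A_eq]
  generalize chi (2 * s) = x1 at *
  generalize chi (s + 1) = x2 at *
  generalize chi (3 * s) = x3 at *
  generalize chi (3 * s - 1) = x4 at *
  generalize chi (2 * s - 1) = x5 at *
  field_simp
  ring

lemma E1'_XX {s : ℂ} (h : 1/2 ≤ s.re) : ∃ p q : ℂ, ‖p‖ ≤ 1 ∧ ‖q‖ ≤ 1 ∧ E1 (1 - s) = XX s * (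
    tS s * (s * (3 * s - 1) * (1 - aR * s) * p * q - (s + 1) * (s - 2) * aS s * cS s - 2 * s * (s + 1) * aS s * q)
    - gam * (1 - s) * aS s * cS s * (1 + tS s)) := by
  have h1 : chi (2 * s) ≠ 0 := chi_ne_zero (by simp; linarith)
  have h2 : chi (s + 1) ≠ 0 := chi_ne_zero (by simp; linarith)
  have h3 : chi (3 * s) ≠ 0 := chi_ne_zero (by simp; linarith)
  refine ⟨chi (s - 1) / chi (s + 1), chi (3 * s - 2) / chi (3 * s), ?_, ?_, ?_⟩
  · have := inner_two (w := s + 1) (by simp; linarith)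
    rw [show s + 1 - 2 = s - 1 by ring] at this
    rw [norm_div]; exact div_le_one_of_le₀ this (norm_nonneg _)
  · have := inner_two (w := 3 * s) (by simp; linarith)
    rw [norm_div]; exact div_le_one_of_le₀ this (norm_nonneg _)
  · rw [E1_one_sub]
    unfold XX aS cS tS
    rw [A_eq]
    generalize chi (2 * s) = x1 at *
    generalize chi (s + 1) = x2 at *
    generalize chi (3 * s) = x3 at *
    generalize chi (3 * s - 1) = x4 at *
    generalize chi (2 * s - 1) = x5 at *
    generalize chi (3 * s - 2) = x6 at *
    field_simp
end ZP

namespace ZP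

lemma pl_bdd {f : ℂ → ℂ} (hd : ∀ z : ℂ, 0 ≤ z.re → DifferentiableAt ℂ f z) {B C : ℝ}
    (hB : ∀ z : ℂ, 0 ≤ z.re → ‖f z‖ ≤ B) (hC : ∀ t : ℝ, ‖f (t * I)‖ ≤ C) {z : ℂ} (hz : 0 ≤ z.re) :
    ‖f z‖ ≤ C := by
  refine PhragmenLindelof.right_half_plane_of_bounded_on_real (f := f) ?_ ?_ ?_ hC hz
  · apply DifferentiableOn.diffContOnCl
    rw [closure_setOfPred_lt_re]
    intro z hz
    exact (hd z hz).differentiableWithinAt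
  · refine ⟨0, by norm_num, 0, ?_⟩
    refine Asymptotics.IsBigO.of_bound B ?_
    refine Filter.eventually_inf_principal.2 (Filter.Eventually.of_forall fun z hz => ?_)
    have := hB z (le_of_lt hz)
    simpa using this
  · refine ⟨B, ?_⟩
    rw [Filter.eventually_map]
    filter_upwards [Filter.eventually_ge_atTop 0] with x hx
    exact hB _ (by simpa using hx)

lemma bdd_of_large {f : ℂ → ℂ} (hd : ∀ z : ℂ, 0 ≤ z.re → DifferentiableAt ℂ f z) {B R : ℝ}
    (h : ∀ z : ℂ, 0 ≤ z.re → R ≤ ‖z‖ → ‖f z‖ ≤ B) : ∃ B', ∀ z : ℂ, 0 ≤ z.re → ‖f z‖ ≤ B' := by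
  have hc : IsCompact (Metric.closedBall (0:ℂ) R ∩ {z : ℂ | 0 ≤ z.re}) :=
    (isCompact_closedBall 0 R).inter_right (isClosed_le continuous_const Complex.continuous_re)
  obtain ⟨M, hM⟩ := hc.exists_bound_of_continuousOn (f := f)
    (fun z hz => (hd z hz.2).continuousAt.continuousWithinAt)
  refine ⟨max M B, fun z hz => ?_⟩
  rcases le_total ‖z‖ R with h1 | h1
  · exact (hM z ⟨by simpa using h1, hz⟩).trans (le_max_left _ _)
  · exact (h z hz h1).trans (le_max_right _ _)

lemma aR_bd : 0 ≤ aR ∧ aR ≤ 1 := by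
  unfold aR
  have := Real.pi_gt_three
  have := Real.pi_lt_four
  constructor <;> linarith

lemma gam_norm : ‖(gam:ℂ)‖ ≤ 1 := by
  rw [Complex.norm_real, Real.norm_eq_abs, abs_of_nonneg gam_le.1]; exact gam_le.2
lemma aR_norm : ‖(aR:ℂ)‖ ≤ 1 := by
  rw [Complex.norm_real, Real.norm_eq_abs, abs_of_nonneg aR_bd.1]; exact aR_bd.2

lemma nm {x y : ℂ} {a b : ℝ} (hx : ‖x‖ ≤ a) (hy : ‖y‖ ≤ b) : ‖x * y‖ ≤ a * b := by
  rw [norm_mul]; exact mul_le_mul hx hy (norm_nonneg _) ((norm_nonneg _).trans hx)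
lemma na {x y : ℂ} {a b : ℝ} (hx : ‖x‖ ≤ a) (hy : ‖y‖ ≤ b) : ‖x + y‖ ≤ a + b :=
  (norm_add_le _ _).trans (add_le_add hx hy)
lemma ns {x y : ℂ} {a b : ℝ} (hx : ‖x‖ ≤ a) (hy : ‖y‖ ≤ b) : ‖x - y‖ ≤ a + b :=
  (norm_sub_le _ _).trans (add_le_add hx hy)
lemma n1 : ‖(1:ℂ)‖ ≤ 1 := by simp
lemma n2 : ‖(2:ℂ)‖ ≤ 2 := by simp
lemma n3 : ‖(3:ℂ)‖ ≤ 3 := by simp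

lemma den_low {s : ℂ} (hs : 2 ≤ ‖s‖) : ‖s‖^3 / 4 ≤ ‖s * (s - 1/3) * (s - 2/3)‖ := by
  have h1 : ‖s‖/2 ≤ ‖s - 1/3‖ := by
    have := norm_sub_norm_le s (1/3)
    norm_num at this; linarith
  have h2 : ‖s‖/2 ≤ ‖s - 2/3‖ := by
    have := norm_sub_norm_le s (2/3)
    norm_num at this; linarith
  rw [norm_mul, norm_mul]
  have h0 := norm_nonneg s
  calc ‖s‖^3/4 = ‖s‖ * (‖s‖/2) * (‖s‖/2) := by ring
    _ ≤ _ := by gcongr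

lemma den_low' {s : ℂ} (hs : 2 ≤ ‖s‖) : ‖s‖^3 / 8 ≤ ‖(1 - s) * (1 - s - 1/3) * (1 - s - 2/3)‖ := by
  have h1 : ‖s‖/2 ≤ ‖1 - s - 1/3‖ := by
    have := norm_sub_norm_le s (2/3)
    rw [show (1 - s - 1/3 : ℂ) = -(s - 2/3) by ring, norm_neg]
    norm_num at this; linarith
  have h2 : ‖s‖/2 ≤ ‖1 - s - 2/3‖ := by
    have := norm_sub_norm_le s (1/3)
    rw [show (1 - s - 2/3 : ℂ) = -(s - 1/3) by ring, norm_neg]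
    norm_num at this; linarith
  have h3 : ‖s‖/2 ≤ ‖1 - s‖ := by
    have := norm_sub_norm_le s 1
    rw [norm_sub_rev]
    norm_num at this; linarith
  rw [norm_mul, norm_mul]
  have h0 := norm_nonneg s
  calc ‖s‖^3/8 = (‖s‖/2) * (‖s‖/2) * (‖s‖/2) := by ring
    _ ≤ _ := by gcongr

lemma kk_up {s : ℂ} (h : 1/2 ≤ s.re) (hs : 2 ≤ ‖s‖) : ‖kk s‖ ≤ 1000 * ‖XX s‖ := by
  have e := E1_XX h
  rw [E1_kk] at e
  have hr := norm_nonneg s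
  have hss : ‖s‖ ≤ ‖s‖ := le_rfl
  have b := ns (nm (nm (ns hss n1) (ns (nm n3 hss) n2)) (na (nm aR_norm (ns hss n1)) n1))
    (nm (aS_norm h) (na (nm (nm n2 (ns hss n1)) (ns hss n2))
      (nm (cS_norm h) (na (nm (na hss n1) (ns hss n2)) (nm (nm gam_norm hss) (na n1 (tS_norm' h)))))))
  have e2 := congrArg norm e
  rw [norm_mul, norm_mul (XX s)] at e2
  have hd := den_low hs
  have hX := norm_nonneg (XX s)
  set r := ‖s‖
  have b2 := b.trans (show _ ≤ 250 * r^3 by nlinarith [mul_nonneg hr hr, mul_nonneg (mul_nonneg hr hr) (sub_nonneg.2 hs), mul_nonneg hr (sub_nonneg.2 hs)])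
  have h3 : r^3/4 * ‖kk s‖ ≤ ‖XX s‖ * (250 * r^3) := by
    calc _ ≤ ‖s * (s - 1/3) * (s - 2/3)‖ * ‖kk s‖ := by gcongr
      _ = _ := e2
      _ ≤ _ := by gcongr
  have hr3 : 0 < r^3 := by positivity
  have : r^3 * ‖kk s‖ ≤ r^3 * (1000 * ‖XX s‖) := by linarith
  exact le_of_mul_le_mul_left this hr3

lemma kk_up' {s : ℂ} (h : 1/2 ≤ s.re) (hs : 2 ≤ ‖s‖) : ‖kk (1 - s)‖ ≤ 2000 * ‖XX s‖ := by
  obtain ⟨p, q, hp, hq, e⟩ := E1'_XX h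
  rw [E1_kk] at e
  have hr := norm_nonneg s
  have hss : ‖s‖ ≤ ‖s‖ := le_rfl
  have b := ns (nm (tS_norm' h) (ns (ns (nm (nm (nm (nm hss (ns (nm n3 hss) n1)) (ns n1 (nm aR_norm hss))) hp) hq)
      (nm (nm (nm (na hss n1) (ns hss n2)) (aS_norm h)) (cS_norm h)))
      (nm (nm (nm (nm n2 hss) (na hss n1)) (aS_norm h)) hq)))
    (nm (nm (nm (nm gam_norm (ns n1 hss)) (aS_norm h)) (cS_norm h)) (na n1 (tS_norm' h)))
  have e2 := congrArg norm e
  rw [norm_mul, norm_mul (XX s)] at e2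
  have hd := den_low' hs
  have hX := norm_nonneg (XX s)
  set r := ‖s‖
  have b2 := b.trans (show _ ≤ 250 * r^3 by nlinarith [mul_nonneg hr hr, mul_nonneg (mul_nonneg hr hr) (sub_nonneg.2 hs), mul_nonneg hr (sub_nonneg.2 hs)])
  have h3 : r^3/8 * ‖kk (1 - s)‖ ≤ ‖XX s‖ * (250 * r^3) := by
    calc _ ≤ ‖(1 - s) * (1 - s - 1/3) * (1 - s - 2/3)‖ * ‖kk (1 - s)‖ := by gcongr
      _ = _ := e2
      _ ≤ _ := by gcongr
  have hr3 : 0 < r^3 := by positivity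
  have : r^3 * ‖kk (1 - s)‖ ≤ r^3 * (2000 * ‖XX s‖) := by linarith
  exact le_of_mul_le_mul_left this hr3

noncomputable def KK (z : ℂ) : ℂ := kk (1/2 + z) / XX (1/2 + z) * ((z + 4) / (z + 20))

lemma frac_le {z : ℂ} (hz : 0 ≤ z.re) : ‖(z + 4) / (z + 20)‖ ≤ 1 := by
  rw [norm_div]
  refine div_le_one_of_le₀ ?_ (norm_nonneg _)
  rw [Complex.norm_def, Complex.norm_def]
  apply Real.sqrt_le_sqrt
  simp [normSq_apply]
  nlinarith

lemma z20 {z : ℂ} (hz : 0 ≤ z.re) : z + 20 ≠ 0 := by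
  intro h
  have := congrArg re h
  simp at this; linarith

lemma hre {z : ℂ} (hz : 0 ≤ z.re) : 1/2 ≤ (1/2 + z).re := by
  simp; linarith

lemma KK_diff {z : ℂ} (hz : 0 ≤ z.re) : DifferentiableAt ℂ KK z := by
  have h1 : DifferentiableAt ℂ (fun z => kk (1/2 + z)) z := (kk_diff _).comp z (by fun_prop)
  have h2 : DifferentiableAt ℂ (fun z => XX (1/2 + z)) z := (XX_diff _).comp z (by fun_prop)
  have h3 : DifferentiableAt ℂ (fun z : ℂ => z + 4) z := by fun_prop
  have h4 : DifferentiableAt ℂ (fun z : ℂ => z + 20) z := by fun_prop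
  exact (h1.div h2 (XX_ne (hre hz))).mul (h3.div h4 (z20 hz))

lemma half_norm {z : ℂ} (h : 3 ≤ ‖z‖) : 2 ≤ ‖1/2 + z‖ := by
  have := norm_sub_norm_le z (-(1/2))
  rw [sub_neg_eq_add, add_comm z] at this
  norm_num at this ⊢; linarith

lemma KK_bdd : ∃ B, ∀ z : ℂ, 0 ≤ z.re → ‖KK z‖ ≤ B := by
  refine bdd_of_large (R := 3) (B := 1000) (fun z hz => KK_diff hz) ?_
  intro z hz h
  have h1 := kk_up (hre hz) (half_norm h)
  have h2 : ‖kk (1/2 + z) / XX (1/2 + z)‖ ≤ 1000 := by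
    rw [norm_div]
    exact div_le_of_le_mul₀ (norm_nonneg _) (by norm_num) h1
  have := nm h2 (frac_le hz)
  unfold KK; linarith

lemma KK_line (t : ℝ) : 1/10^10 ≤ (KK (t * I)).re := by
  have h := line_all t
  set P : ℝ := (t^2+1/4) * (t^2+1/36) * (t^2+400) with hP
  have hPp : 0 < P := by positivity
  have e : mE t = (P:ℂ) * KK (t * I) := by
    have hs : 1/2 ≤ (1/2 + (t:ℂ) * I).re := by simp
    have e1 := E1_XX hs
    rw [E1_kk] at e1
    have hX := XX_ne hs
    have h20 : (t:ℂ) * I + 20 ≠ 0 := z20 (by simp)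
    unfold mE mainE KK
    simp only []
    have e2 : aS (1/2 + t * I) * (2 * ((1/2 + t * I) - 1) * ((1/2 + t * I) - 2) + cS (1/2 + t * I) * (((1/2 + t * I) + 1) * ((1/2 + t * I) - 2) + gam * (1/2 + t * I) * (1 + tS (1/2 + t * I)))) - ((1/2 + t * I) - 1) * (3 * (1/2 + t * I) - 2) * (aR * ((1/2 + t * I) - 1) + 1)
      = - ((1/2 + t * I) * ((1/2 + t * I) - 1/3) * ((1/2 + t * I) - 2/3) * kk (1/2 + t * I)) / XX (1/2 + t * I) := by
      rw [e1, eq_div_iff hX]; ring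
    rw [e2]
    have hI : (I:ℂ)^2 = -1 := I_sq
    have e3 : (P:ℂ) = -((1/2 - t * I) * (20 - t * I) * ((1/2 + t * I) * ((1/2 + t * I) - 1/3) * ((1/2 + t * I) - 2/3)) * (t * I + 20)) := by
      rw [hP]; push_cast
      have a1 : ((1/2:ℂ) - t * I) * (1/2 + t * I) = t^2 + 1/4 := by linear_combination (-t^2:ℂ) * hI
      have a2 : ((20:ℂ) - t * I) * (t * I + 20) = t^2 + 400 := by linear_combination (-t^2:ℂ) * hI
      have a3 : (1/2 + (t:ℂ) * I - 1/3) * ((1/2 + t * I) - 2/3) = -(t^2 + 1/36) := by linear_combination (t^2:ℂ) * hI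
      rw [← a1, ← a2, show (t:ℂ)^2+1/36 = -((1/2 + (t:ℂ) * I - 1/3) * ((1/2 + t * I) - 2/3)) by rw [a3]; ring]
      ring
    rw [e3]
    field_simp
    ring
  rw [e, re_ofReal_mul] at h
  have : P * (1/10^10) ≤ P * (KK (t * I)).re := by linarith
  exact le_of_mul_le_mul_left this hPp

lemma KK_re {z : ℂ} (hz : 0 ≤ z.re) : 1/10^10 ≤ (KK z).re := by
  obtain ⟨B, hB⟩ := KK_bdd
  have := pl_bdd (f := fun z => exp (-KK z)) (B := Real.exp B) (C := Real.exp (-(1/10^10)))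
    (fun z hz => (KK_diff hz).neg.cexp) (fun z hz => ?_) (fun t => ?_) hz
  · rw [norm_exp, Real.exp_le_exp, neg_re] at this
    linarith
  · rw [norm_exp, Real.exp_le_exp]
    have := re_le_norm (-KK z)
    rw [norm_neg] at this
    exact this.trans (hB z hz)
  · rw [norm_exp, Real.exp_le_exp, neg_re]
    have := KK_line t
    linarith

lemma kk_low {z : ℂ} (hz : 0 ≤ z.re) : 1/10^10 * ‖XX (1/2 + z)‖ ≤ ‖kk (1/2 + z)‖ := by
  have h1 : 1/10^10 ≤ ‖KK z‖ := (KK_re hz).trans (re_le_norm _)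
  unfold KK at h1
  rw [norm_mul] at h1
  have h2 : 1/10^10 ≤ ‖kk (1/2 + z) / XX (1/2 + z)‖ :=
    h1.trans (mul_le_of_le_one_right (norm_nonneg _) (frac_le hz))
  rw [norm_div, le_div_iff₀ (norm_pos_iff.2 (XX_ne (hre hz)))] at h2
  exact h2

lemma kk_ne {z : ℂ} (hz : 0 ≤ z.re) : kk (1/2 + z) ≠ 0 := by
  have h := kk_low hz
  have := norm_pos_iff.2 (XX_ne (hre hz))
  rw [← norm_pos_iff]
  linarith

noncomputable def JJ (z : ℂ) : ℂ := kk (1/2 - z) / kk (1/2 + z)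

lemma JJ_diff {z : ℂ} (hz : 0 ≤ z.re) : DifferentiableAt ℂ JJ z := by
  have h1 : DifferentiableAt ℂ (fun z => kk (1/2 - z)) z := (kk_diff _).comp z (by fun_prop)
  have h2 : DifferentiableAt ℂ (fun z => kk (1/2 + z)) z := (kk_diff _).comp z (by fun_prop)
  exact h1.div h2 (kk_ne hz)

lemma JJ_bdd : ∃ B, ∀ z : ℂ, 0 ≤ z.re → ‖JJ z‖ ≤ B := by
  refine bdd_of_large (R := 3) (B := 2000 * 10^10) (fun z hz => JJ_diff hz) ?_
  intro z hz h
  have h1 := kk_up' (hre hz) (half_norm h)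
  rw [show (1 - (1/2 + z) : ℂ) = 1/2 - z by ring] at h1
  have h2 := kk_low hz
  unfold JJ
  rw [norm_div]
  exact div_le_of_le_mul₀ (norm_nonneg _) (by norm_num) (by linarith)

lemma E1_conj (s : ℂ) : E1 ((starRingEnd ℂ) s) = (starRingEnd ℂ) (E1 s) := by
  unfold E1
  rw [A_eq]
  simp only [map_sub, map_add, map_mul, ← chi_conj, Complex.conj_ofReal, map_ofNat, map_one]

lemma JJ_line (t : ℝ) : ‖JJ (t * I)‖ ≤ 1 := by
  have e : (1/2 - (t:ℂ) * I) = (starRingEnd ℂ) (1/2 + t * I) := by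
    simp only [map_add, map_mul, map_div₀, map_one, map_ofNat, conj_ofReal, conj_I]; ring
  have h := E1_conj (1/2 + t * I)
  rw [← e, E1_kk, E1_kk] at h
  have h2 := congrArg norm h
  rw [norm_conj, norm_mul (_ * _ * _), norm_mul (_ * _ * _) (kk (1 / 2 + _))] at h2
  have h3 : ‖(1/2 - (t:ℂ) * I) * (1/2 - (t:ℂ) * I - 1/3) * (1/2 - (t:ℂ) * I - 2/3)‖
    = ‖(1/2 + (t:ℂ) * I) * (1/2 + (t:ℂ) * I - 1/3) * (1/2 + (t:ℂ) * I - 2/3)‖ := by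
    rw [← norm_conj]
    congr 1
    simp only [map_add, map_sub, map_mul, map_div₀, map_one, map_ofNat, conj_ofReal, conj_I]; ring
  rw [h3] at h2
  have h4 : ‖(1/2 + (t:ℂ) * I) * (1/2 + (t:ℂ) * I - 1/3) * (1/2 + (t:ℂ) * I - 2/3)‖ ≠ 0 := by
    rw [norm_ne_zero_iff]
    refine mul_ne_zero (mul_ne_zero ?_ ?_) ?_ <;> intro h <;> have := congrArg re h <;> norm_num at this
  have h5 := mul_left_cancel₀ h4 h2
  unfold JJ
  rw [norm_div, h5]
  exact div_self_le_one _

lemma JJ_le {z : ℂ} (hz : 0 ≤ z.re) : ‖JJ z‖ ≤ 1 := by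
  obtain ⟨B, hB⟩ := JJ_bdd
  exact pl_bdd (fun z hz => JJ_diff hz) hB JJ_line hz

lemma Z1_two : Z1 2 ≠ 0 := by
  have h2 := chi2
  have h6 := chi6
  have hm1 := chi_neg_one
  have hm3 : chi (-3) = chi 4 := by rw [← chi_one_sub]; norm_num
  have h3 : chi 3 ≠ 0 := chi_ne_zero (by norm_num)
  have h4 : chi 4 ≠ 0 := chi_ne_zero (by norm_num)
  have e : Z1 2 = 4 * chi 3 * chi 4 * (((1 + aR) * (4/63*Real.pi^3) - (1 + 16 * aR) : ℝ) : ℂ) := by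
    have e : (Real.pi / 3 : ℝ) = aR + 1 := by unfold aR; ring
    rw [e] at h2
    unfold Z1 f1
    norm_num [hm1, hm3, h2, h6, chi_zero, A_eq]
    ring
  rw [e]
  refine mul_ne_zero (mul_ne_zero (mul_ne_zero (by norm_num) h3) h4) ?_
  rw [Complex.ofReal_ne_zero]
  have p1 := Real.pi_gt_d2
  have p2 := Real.pi_lt_d2
  have p3 : (30:ℝ) ≤ Real.pi^3 := by
    calc (30:ℝ) ≤ 3.14^3 := by norm_num
      _ ≤ _ := by gcongr
  have q := aR_bd.1
  have : aR ≤ 0.05 := by unfold aR; linarith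
  apply ne_of_gt
  nlinarith

lemma JJ_ne_one {z : ℂ} (hz : 0 < z.re) : JJ z ≠ 1 := by
  intro h
  have ho : IsOpen {z : ℂ | 0 < z.re} := isOpen_lt continuous_const Complex.continuous_re
  have hp : IsPreconnected {z : ℂ | 0 < z.re} := (convex_halfSpace_re_gt 0).isPreconnected
  have hE := Complex.eqOn_of_isPreconnected_of_isMaxOn_norm (f := JJ) hp ho
    (fun w hw => (JJ_diff (le_of_lt hw)).differentiableWithinAt) (c := z) hz
    (fun w hw => by
      simp only [Set.mem_ofPred_eq, Function.comp, h, norm_one]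
      exact JJ_le (le_of_lt hw))
  have h2 := hE (show (3/2:ℂ) ∈ {z : ℂ | 0 < z.re} by norm_num)
  simp only [Function.const, h] at h2
  unfold JJ at h2
  rw [div_eq_one_iff_eq (kk_ne (by norm_num))] at h2
  apply Z1_two
  rw [Z1_kk]
  norm_num at h2 ⊢
  rw [h2, sub_self]

lemma kk_ne_sub {s : ℂ} (hs : s.re ≠ 1/2) : kk s ≠ kk (1 - s) := by
  have key : ∀ s : ℂ, 1/2 < s.re → kk s ≠ kk (1 - s) := by
    intro s h e
    have hz : 0 < (s - 1/2).re := by simp; linarith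
    apply JJ_ne_one hz
    unfold JJ
    rw [div_eq_one_iff_eq (kk_ne hz.le)]
    rw [show (1/2 - (s - 1/2) : ℂ) = 1 - s by ring, show (1/2 + (s - 1/2) : ℂ) = s by ring, e]
  rcases lt_or_gt_of_ne hs with h | h
  · have := key (1 - s) (by simp; linarith)
    rw [sub_sub_cancel] at this
    exact this.symm
  · exact key s h

lemma deriv_aux {f g : ℂ → ℂ} {c : ℂ} (hg : DifferentiableAt ℂ g c) (h : ∀ s, f s = (s - c) * g s) (h0 : g c ≠ 0) :
    f c = 0 ∧ deriv f c ≠ 0 := by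
  refine ⟨by rw [h]; simp, ?_⟩
  have e : f = fun s => (s - c) * g s := funext h
  have := ((hasDerivAt_id c).sub_const c).mul hg.hasDerivAt
  have h2 : HasDerivAt f (g c) c := by
    rw [e]
    have e3 : (1:ℂ) * g c + (id c - c) * deriv g c = g c := by simp
    rw [← e3]; exact this
  rw [h2.deriv]; exact h0

end ZP

theorem Z1_zeros (ρ : ℂ) :
    (Z1 ρ = 0 → ρ ∉ ({0, 1/3, 2/3, 1} : Set ℂ) → ρ.re = 1 / 2) ∧
    (ρ ∈ ({0, 1/3, 2/3, 1} : Set ℂ) → Z1 ρ = 0 ∧ deriv Z1 ρ ≠ 0) := by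
  have hk := ZP.kk_diff
  have hk2 : Differentiable ℂ (fun s => ZP.kk (1 - s)) := by fun_prop
  constructor
  · intro h hn
    by_contra hr
    simp only [Set.mem_insert_iff, Set.mem_singleton_iff, not_or] at hn
    obtain ⟨n0, n1, n2, n3⟩ := hn
    rw [ZP.Z1_kk] at h
    have := sub_ne_zero.2 (ZP.kk_ne_sub hr)
    have a1 := sub_ne_zero.2 n1
    have a2 := sub_ne_zero.2 n2
    have a3 := sub_ne_zero.2 n3
    exact mul_ne_zero (mul_ne_zero (mul_ne_zero (mul_ne_zero n0 a3) a1) a2) this h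
  · intro h
    simp only [Set.mem_insert_iff, Set.mem_singleton_iff] at h
    have hne : ∀ s : ℂ, s.re ≠ 1/2 → ZP.kk s - ZP.kk (1 - s) ≠ 0 := fun s hs => sub_ne_zero.2 (ZP.kk_ne_sub hs)
    rcases h with rfl | rfl | rfl | rfl
    · refine ZP.deriv_aux (g := fun s => (s - 1) * (s - 1/3) * (s - 2/3) * (ZP.kk s - ZP.kk (1 - s))) (by fun_prop) (fun s => by rw [ZP.Z1_kk]; ring) ?_
      exact mul_ne_zero (by norm_num) (hne _ (by norm_num))
    · refine ZP.deriv_aux (g := fun s => s * (s - 1) * (s - 2/3) * (ZP.kk s - ZP.kk (1 - s))) (by fun_prop) (fun s => by rw [ZP.Z1_kk]; ring) ?_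
      exact mul_ne_zero (by norm_num) (hne _ (by norm_num))
    · refine ZP.deriv_aux (g := fun s => s * (s - 1) * (s - 1/3) * (ZP.kk s - ZP.kk (1 - s))) (by fun_prop) (fun s => by rw [ZP.Z1_kk]; ring) ?_
      exact mul_ne_zero (by norm_num) (hne _ (by norm_num))
    · refine ZP.deriv_aux (g := fun s => s * (s - 1/3) * (s - 2/3) * (ZP.kk s - ZP.kk (1 - s))) (by fun_prop) (fun s => by rw [ZP.Z1_kk]; ring) ?_
      exact mul_ne_zero (by norm_num) (hne _ (by norm_num))
end

section
/- There exists a real number σ₁ such that the entire function f₁(s) has no zero in the left half-plane Re(s) < σ₁; that is, for all complex s with Re(s) < σ₁ one has f₁(s) ≠ 0. -/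
open Complex

theorem prodB (z : ℂ) (hz : 10 ≤ z.re) (n : ℕ) :
    ‖∏ j ∈ Finset.range n, (1 + (-(1 / (4 * (z + j + 1/2)^2)))) - 1‖ ≤ 0.03 := by
  have hs : ∀ n : ℕ, ∑ j ∈ Finset.range n, ‖(-(1 / (4 * (z + j + 1/2)^2)))‖ ≤
      1/4 * (1 / z.re - 1 / (z.re + n)) := by
    intro n
    induction n with
    | zero => simp
    | succ n ih =>
      rw [Finset.sum_range_succ]
      have hn : (0:ℝ) ≤ n := n.cast_nonneg
      have h1 : z.re + n + 1/2 ≤ ‖z + n + 1/2‖ := by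
        have := Complex.re_le_norm (z + n + 1/2)
        simp at this
        norm_num at this ⊢
        linarith
      have h2 : ‖(-(1 / (4 * (z + n + 1/2)^2)))‖ ≤ 1/4 * (1 / (z.re + n) - 1 / (z.re + (n+1))) := by
        rw [norm_neg, norm_div, norm_mul, norm_pow, norm_one]
        have e : ‖(4:ℂ)‖ = 4 := by simp
        rw [e]
        have h3 : 1/4 * (1 / (z.re + n) - 1 / (z.re + (n+1))) = 1 / (4 * ((z.re + n) * (z.re+n+1))) := by
          have : z.re + n ≠ 0 := by linarith
          have : z.re + n + 1 ≠ 0 := by linarith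
          have : z.re + (n + 1) ≠ 0 := by linarith
          field_simp
          ring
        rw [h3]
        apply one_div_le_one_div_of_le
        · have : 0 < z.re + n := by linarith
          positivity
        · nlinarith
      push_cast
      linarith
  have h := Finset.norm_prod_one_add_sub_one_le (Finset.range n) (fun j : ℕ => (-(1 / (4 * (z + j + 1/2)^2))))
  refine h.trans ?_
  have h4 : ∑ j ∈ Finset.range n, ‖(-(1 / (4 * (z + j + 1/2)^2)))‖ ≤ 1/40 := by
    refine (hs n).trans ?_
    have : 1 / z.re ≤ 1 / 10 := one_div_le_one_div_of_le (by norm_num) hz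
    have : 0 ≤ 1 / (z.re + n) := by
      have hn : (0:ℝ) ≤ n := n.cast_nonneg
      have : 0 < z.re + n := by linarith
      positivity
    linarith
  have h5 := Real.exp_le_exp.2 h4
  have h6 := Real.exp_bound_div_one_sub_of_interval (x := 1/40) (by norm_num) (by norm_num)
  have h7 : (1:ℝ) / (1 - 1/40) ≤ 1.03 := by norm_num
  linarith

theorem gam (z : ℂ) (hz : 10 ≤ z.re) :
    ‖Gamma (z+1/2) ^ 2 / (Gamma z * Gamma (z+1)) - 1‖ ≤ 0.03 := by
  have hne : ∀ w : ℂ, 10 ≤ w.re → Gamma w ≠ 0 := fun w hw =>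
    Gamma_ne_zero_of_re_pos (by linarith)
  have ht : Filter.Tendsto (fun n => GammaSeq (z+1/2) n ^ 2 / (GammaSeq z n * GammaSeq (z+1) n))
      Filter.atTop (nhds (Gamma (z+1/2) ^ 2 / (Gamma z * Gamma (z+1)))) := by
    apply Filter.Tendsto.div
    · exact (GammaSeq_tendsto_Gamma _).pow 2
    · exact (GammaSeq_tendsto_Gamma _).mul (GammaSeq_tendsto_Gamma _)
    · exact mul_ne_zero (hne _ hz) (hne _ (by simp; linarith))
  have ht2 := (ht.sub_const 1).norm
  refine le_of_tendsto ht2 ?_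
  filter_upwards [Filter.eventually_gt_atTop 0] with n hn
  have hp : ∀ c : ℂ, 0 ≤ c.re → ∀ j : ℕ, z + c + j ≠ 0 := by
    intro c hc j h
    have := congrArg Complex.re h
    simp at this
    have hn : (0:ℝ) ≤ j := j.cast_nonneg
    linarith
  have hnc : (n:ℂ) ≠ 0 := by exact_mod_cast hn.ne'
  have e1 : ∀ j : ℕ, 1 + (-(1 / (4 * (z + j + 1/2)^2))) = (z + j) * (z + 1 + j) / (z + 1/2 + j)^2 := by
    intro j
    have := hp (1/2) (by norm_num) j
    have h2 : z + j + 1/2 ≠ 0 := by rwa [show z + j + 1/2 = z + 1/2 + j by ring]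
    rw [show z + 1/2 + j = z + j + 1/2 by ring]
    have h4 : z + 1 + j = (z + j + 1/2) + 1/2 := by ring
    have h5 : z + j = (z + j + 1/2) - 1/2 := by ring
    rw [h4]
    nth_rewrite 2 [h5]
    generalize z + j + 1/2 = t at *
    field_simp
    ring
  have key : GammaSeq (z+1/2) n ^ 2 / (GammaSeq z n * GammaSeq (z+1) n) =
      ∏ j ∈ Finset.range (n+1), (1 + (-(1 / (4 * (z + j + 1/2)^2)))) := by
    simp only [e1, Finset.prod_div_distrib, Finset.prod_mul_distrib, Finset.prod_pow]
    unfold GammaSeq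
    have q0 : ∏ j ∈ Finset.range (n+1), (z + (j:ℂ)) ≠ 0 := Finset.prod_ne_zero_iff.2 fun j _ => by
      simpa using hp 0 (by simp) j
    have q1 : ∏ j ∈ Finset.range (n+1), (z + 1 + (j:ℂ)) ≠ 0 := Finset.prod_ne_zero_iff.2 fun j _ => 
      hp 1 (by simp) j
    have q2 : ∏ j ∈ Finset.range (n+1), (z + 1/2 + (j:ℂ)) ≠ 0 := Finset.prod_ne_zero_iff.2 fun j _ => 
      hp (1/2) (by norm_num) j
    have hpow : ((n:ℂ) ^ (z + 1/2))^2 = (n:ℂ)^z * (n:ℂ)^(z+1) := by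
      rw [sq, ← cpow_add _ _ hnc, ← cpow_add _ _ hnc]; congr 1; ring
    have hf : (n.factorial : ℂ) ≠ 0 := by exact_mod_cast n.factorial_ne_zero
    have hz1 : (n:ℂ)^z ≠ 0 := by simp [cpow_eq_zero_iff, hnc]
    have hz2 : (n:ℂ)^(z+1) ≠ 0 := by simp [cpow_eq_zero_iff, hnc]
    rw [div_pow, mul_pow, hpow]
    generalize (n:ℂ)^z = a at *
    generalize (n:ℂ)^(z+1) = b at *
    generalize ∏ j ∈ Finset.range (n+1), (z + (j:ℂ)) = P at *
    generalize ∏ j ∈ Finset.range (n+1), (z + 1 + (j:ℂ)) = Q at *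
    generalize ∏ j ∈ Finset.range (n+1), (z + 1/2 + (j:ℂ)) = R at *
    field_simp
  rw [key]
  exact prodB z hz (n+1)

theorem gam2 (z : ℂ) (hz : 10 ≤ z.re) :
    0.97 * (‖z‖ * ‖Gamma z‖^2) ≤ ‖Gamma (z+1/2)‖^2 ∧ 
    ‖Gamma (z+1/2)‖^2 ≤ 1.03 * (‖z‖ * ‖Gamma z‖^2) := by
  have h := gam z hz
  have hz0 : z ≠ 0 := by rintro rfl; simp at hz; linarith
  have hg : Gamma z ≠ 0 := Gamma_ne_zero_of_re_pos (by linarith)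
  rw [Gamma_add_one z hz0] at h
  set q := Gamma (z+1/2) ^ 2 / (Gamma z * (z * Gamma z)) with hq
  have : Gamma (z+1/2) ^ 2 = q * (z * Gamma z ^ 2) := by
    rw [hq]; field_simp
  have hN : ‖Gamma (z+1/2)‖^2 = ‖q‖ * (‖z‖ * ‖Gamma z‖^2) := by
    rw [← norm_pow, this]; simp
  rw [hN]
  have h1 : ‖q‖ ≤ 1.03 := by
    have := norm_le_norm_add_norm_sub' q 1
    norm_num at *; linarith
  have h2 : 0.97 ≤ ‖q‖ := by
    have := norm_le_norm_add_norm_sub' 1 q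
    rw [norm_sub_rev] at this
    norm_num at *; linarith
  constructor <;> gcongr

theorem zet (s : ℂ) (hs : 10 ≤ s.re) : ‖riemannZeta s - 1‖ ≤ 0.01 := by
  have h1 : 1 < s.re := by linarith
  have hsum := (Complex.summable_one_div_nat_cpow (p := s)).2 h1
  have hz := zeta_eq_tsum_one_div_nat_cpow h1
  rw [hsum.tsum_eq_zero_add, ((summable_nat_add_iff 1).2 hsum).tsum_eq_zero_add] at hz
  have s0 : s ≠ 0 := by rintro rfl; simp at hs; linarith
  simp only [Nat.cast_zero, zero_cpow s0, zero_add, Nat.cast_one, one_cpow, div_one, div_zero] at hz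
  rw [hz, add_sub_cancel_left]
  have h2 : HasSum (fun n : ℕ => 1 / ((n:ℝ))^2) (Real.pi^2/6) := hasSum_zeta_two
  have h3 : Summable (fun n : ℕ => 1/256 * (1 / ((n + 1 + 1 : ℕ):ℝ)^2)) :=
    (((summable_nat_add_iff 2).2 h2.summable)).mul_left _
  have h4 := h2.tsum_eq
  rw [h2.summable.tsum_eq_zero_add, ((summable_nat_add_iff 1).2 h2.summable).tsum_eq_zero_add] at h4
  refine (tsum_of_norm_bounded h3.hasSum ?_).trans ?_
  · intro n
    rw [norm_div, norm_one, Complex.norm_natCast_cpow_of_pos (by omega)]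
    have hm : (2:ℝ) ≤ ((n + 1 + 1 : ℕ):ℝ) := by push_cast; linarith [(n.cast_nonneg : (0:ℝ) ≤ n)]
    set m := ((n + 1 + 1 : ℕ):ℝ)
    have : m^(10:ℝ) ≤ m ^ s.re := Real.rpow_le_rpow_of_exponent_le (by linarith) hs
    have e : m^(10:ℝ) = m^8 * m^2 := by
      rw [show (10:ℝ) = ((10:ℕ):ℝ) by norm_num, Real.rpow_natCast]; ring
    have h8 : (256:ℝ) ≤ m^8 := by
      calc (256:ℝ) = 2^8 := by norm_num
        _ ≤ m^8 := by gcongr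
    have : 256 * m^2 ≤ m^s.re := by
      refine le_trans ?_ this
      rw [e]; gcongr
    rw [one_div_mul_one_div]
    exact one_div_le_one_div_of_le (by positivity) this
  · rw [tsum_mul_left]
    norm_num at h4 ⊢
    have := Real.pi_lt_d2
    have := Real.pi_pos
    norm_num at *
    nlinarith

theorem chi_eq (w : ℂ) (hw : 1 < w.re) :
    chi w = w * (w - 1) * ((Real.pi : ℂ) ^ (-w / 2) * Gamma (w / 2) * riemannZeta w) := by
  have w0 : w ≠ 0 := by rintro rfl; simp at hw; linarith
  have w1 : w - 1 ≠ 0 := by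
    intro h
    have := congrArg Complex.re h
    simp at this; linarith
  have w1' : 1 - w ≠ 0 := by rw [← neg_sub]; exact neg_ne_zero.2 w1
  have hz := completedZeta_eq_tsum_of_one_lt_re hw
  rw [← zeta_eq_tsum_one_div_nat_cpow hw, completedRiemannZeta_eq] at hz
  rw [← hz, chi]
  field_simp
  ring

theorem chiR (w : ℂ) (hw : 1000 ≤ w.re) :
    0 < ‖chi (w - 1)‖ ∧ 0.8 * (‖w‖ * ‖chi (w-1)‖^2) ≤ 2 * Real.pi * ‖chi w‖^2 ∧
      2 * Real.pi * ‖chi w‖^2 ≤ 1.25 * (‖w‖ * ‖chi (w-1)‖^2) := by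
  have hpi := Real.pi_pos
  have hW : 1000 ≤ ‖w‖ := hw.trans (Complex.re_le_norm w)
  have hW1 : ‖w‖ - 1 ≤ ‖w - 1‖ ∧ ‖w - 1‖ ≤ ‖w‖ + 1 := by
    have a := norm_sub_norm_le w 1
    have b := norm_sub_le w 1
    simp only [norm_one] at a b
    exact ⟨a, b⟩
  have hW2 : ‖w‖ - 2 ≤ ‖w - 1 - 1‖ ∧ ‖w - 1 - 1‖ ≤ ‖w‖ + 2 := by
    have a := norm_sub_norm_le (w-1) 1
    have b := norm_sub_le (w-1) 1
    simp only [norm_one] at a b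
    exact ⟨by linarith, by linarith⟩
  have g := gam2 ((w-1)/2) (by
    have : ((w-1)/2).re = (w.re - 1)/2 := by simp
    rw [this]; linarith)
  rw [show (w-1)/2 + 1/2 = w/2 by ring] at g
  have hg0 : 0 < ‖Gamma ((w-1)/2)‖ := norm_pos_iff.2 (Gamma_ne_zero_of_re_pos (by
    have : ((w-1)/2).re = (w.re - 1)/2 := by simp
    rw [this]; linarith))
  have hh : ‖(w-1)/2‖ = ‖w-1‖/2 := by simp
  rw [hh] at g
  have zz : ∀ s : ℂ, 10 ≤ s.re → 0.99 ≤ ‖riemannZeta s‖ ∧ ‖riemannZeta s‖ ≤ 1.01 := by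
    intro s hs
    have h := zet s hs
    have a := norm_le_norm_add_norm_sub' (riemannZeta s) 1
    have b := norm_le_norm_add_norm_sub' 1 (riemannZeta s)
    rw [norm_sub_rev 1] at b
    rw [norm_one] at a b
    constructor <;> linarith
  obtain ⟨z1l, z1u⟩ := zz w (by linarith)
  obtain ⟨z0l, z0u⟩ := zz (w-1) (by simp; linarith)
  have hp : Real.pi * ‖(Real.pi : ℂ) ^ (-w / 2)‖^2 = ‖(Real.pi : ℂ) ^ (-(w-1) / 2)‖^2 := by
    rw [norm_cpow_eq_rpow_re_of_pos hpi, norm_cpow_eq_rpow_re_of_pos hpi, ← Real.rpow_natCast,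
      ← Real.rpow_natCast, ← Real.rpow_mul hpi.le, ← Real.rpow_mul hpi.le]
    nth_rewrite 1 [← Real.rpow_one Real.pi]
    rw [← Real.rpow_add hpi]
    congr 1
    simp
    ring
  have hp0 : 0 < ‖(Real.pi : ℂ) ^ (-(w-1) / 2)‖ := by
    rw [norm_cpow_eq_rpow_re_of_pos hpi]; positivity
  rw [chi_eq w (by linarith), chi_eq (w-1) (by simp; linarith)]
  simp only [norm_mul]
  generalize ‖(Real.pi : ℂ) ^ (-(w-1) / 2)‖ = p0 at *
  generalize ‖(Real.pi : ℂ) ^ (-w / 2)‖ = p1 at *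
  generalize ‖Gamma ((w-1)/2)‖ = g0 at *
  generalize ‖Gamma (w/2)‖ = g1 at *
  generalize ‖riemannZeta w‖ = z1 at *
  generalize ‖riemannZeta (w-1)‖ = z0 at *
  generalize ‖w - 1 - 1‖ = W2 at *
  generalize ‖w - 1‖ = W1 at *
  generalize ‖w‖ = W at *
  obtain ⟨g1l, g1u⟩ := g
  have W2p : 0 < W2 := by linarith
  have W1p : 0 < W1 := by linarith
  have Wp : 0 < W := by linarith
  have z0p : 0 < z0 := by linarith
  have z1p : 0 < z1 := by linarith
  have e : 2 * Real.pi * (W * W1 * (p1 * g1 * z1))^2 = W^2 * W1^2 * p0^2 * z1^2 * (2 * g1^2) := by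
    rw [← hp]; ring
  rw [e]
  have zl : 0.9 * z0^2 ≤ z1^2 := by nlinarith
  have zu : z1^2 ≤ 1.05 * z0^2 := by nlinarith
  refine ⟨by positivity, ?_, ?_⟩
  · calc 0.8 * (W * (W1 * W2 * (p0 * g0 * z0))^2)
        ≤ (0.99^3*0.9*0.97) * (W * (W1 * W2 * (p0 * g0 * z0))^2) := by gcongr; norm_num
      _ = (0.99 * W2)^2 * W1^2 * p0^2 * (0.9 * z0^2) * (2 * (0.97 * ((0.99 * W)/2 * g0^2))) := by ring
      _ ≤ W^2 * W1^2 * p0^2 * z1^2 * (2 * (0.97 * (W1/2 * g0^2))) := by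
          gcongr
          · linarith
          · linarith
      _ ≤ _ := by gcongr
  · calc W^2 * W1^2 * p0^2 * z1^2 * (2 * g1^2)
        ≤ W^2 * W1^2 * p0^2 * z1^2 * (2 * (1.03 * (W1/2 * g0^2))) := by gcongr
      _ ≤ (1.01 * W2)^2 * W1^2 * p0^2 * (1.05 * z0^2) * (2 * (1.03 * ((1.01 * W)/2 * g0^2))) := by
          gcongr
          · linarith
          · linarith
      _ = (1.01^3*1.05*1.03) * (W * (W1 * W2 * (p0 * g0 * z0))^2) := by ring
      _ ≤ _ := by gcongr; norm_num

theorem chi_symm (s : ℂ) : chi (1 - s) = chi s := by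
  rw [chi, chi, completedRiemannZeta₀_one_sub]; ring

theorem f1_no_zero_left :
    ∃ σ₁ : ℝ, ∀ s : ℂ, s.re < σ₁ → f1 s ≠ 0 := by
  refine ⟨-20000, fun s hs h0 => ?_⟩
  obtain ⟨w, rfl⟩ : ∃ w, s = 1 - w := ⟨1 - s, by ring⟩
  have hw : 20000 ≤ w.re := by simp at hs; linarith
  have hW : 20000 ≤ ‖w‖ := hw.trans (Complex.re_le_norm w)
  have w0 : w ≠ 0 := by rintro rfl; simp at hw; linarith
  obtain ⟨c0p, cl, cu⟩ := chiR w (by linarith)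
  obtain ⟨d0p, dl, du⟩ := chiR (3 * w - 1) (by simp; linarith)
  have e1 : chi (1 - w + 1) = chi (w - 1) := by rw [← chi_symm (w - 1)]; congr 1; ring
  have e2 : chi (3 * (1 - w)) = chi (3 * w - 1 - 1) := by
    rw [← chi_symm (3 * w - 1 - 1)]; congr 1; ring
  have e3 : chi (3 * (1 - w) - 1) = chi (3 * w - 1) := by
    rw [← chi_symm (3 * w - 1)]; congr 1; ring
  rw [f1, e1, e2, e3, chi_symm] at h0
  have w0' : 1 - w - 1 ≠ 0 := by simpa using w0
  have h1 := (mul_eq_zero.1 h0).resolve_left w0'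
  have h2 : (w - 2) * (w + 1) * (chi w * chi (3 * w - 1)) =
      w * (3 * w - 1) * (1 - A * w) * (chi (w-1) * chi (3 * w - 1 - 1))
      - 2 * (w * (w + 1)) * (chi w * chi (3 * w - 1 - 1)) := by linear_combination -h1
  have h3 := congrArg norm h2
  have h4 := h3.le.trans (norm_sub_le _ _)
  simp only [norm_mul] at h4
  have t2 : ‖(2:ℂ)‖ = 2 := by simp
  have t3 : ‖(3:ℂ)‖ = 3 := by simp
  have hA : ‖A‖ ≤ 0.0472 := by
    have : A = ((Real.pi / 3 - 1 : ℝ) : ℂ) := by simp [A]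
    rw [this, Complex.norm_real, Real.norm_eq_abs, abs_le]
    have := Real.pi_lt_d4
    have := Real.pi_gt_three
    constructor <;> linarith
  have hA1 : ‖1 - A * w‖ ≤ 0.0473 * ‖w‖ := by
    have a := norm_sub_le 1 (A * w)
    rw [norm_one, norm_mul] at a
    have : ‖A‖ * ‖w‖ ≤ 0.0472 * ‖w‖ := by gcongr
    linarith
  have hm2 : 0.999 * ‖w‖ ≤ ‖w - 2‖ := by
    have a := norm_sub_norm_le w 2
    rw [t2] at a; linarith
  have hp1 : 0.999 * ‖w‖ ≤ ‖w + 1‖ ∧ ‖w + 1‖ ≤ 1.001 * ‖w‖ := by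
    have a := norm_sub_norm_le w (-1)
    have b := norm_add_le w 1
    rw [sub_neg_eq_add, norm_neg] at a
    rw [norm_one] at a b
    constructor <;> linarith
  have hm3 : 2.999 * ‖w‖ ≤ ‖3 * w - 1‖ ∧ ‖3 * w - 1‖ ≤ 3.001 * ‖w‖ := by
    have a := norm_sub_norm_le (3 * w) 1
    have b := norm_sub_le (3 * w) 1
    rw [norm_mul, t3, norm_one] at a b
    constructor <;> linarith
  rw [t2] at h4
  have an := norm_nonneg (1 - A * w)
  have c1n := norm_nonneg (chi w)
  have d1n := norm_nonneg (chi (3 * w - 1))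
  generalize ‖chi w‖ = c1 at *
  generalize ‖chi (w - 1)‖ = c0 at *
  generalize ‖chi (3 * w - 1)‖ = d1 at *
  generalize ‖chi (3 * w - 1 - 1)‖ = d0 at *
  generalize ‖1 - A * w‖ = a at *
  generalize ‖3 * w - 1‖ = W3 at *
  generalize ‖w - 2‖ = Wm at *
  generalize ‖w + 1‖ = Wp at *
  generalize ‖w‖ = W at *
  obtain ⟨hp1, hp1'⟩ := hp1
  obtain ⟨hm3, hm3'⟩ := hm3
  have hpi := Real.pi_gt_three
  have hpi' := Real.pi_lt_d2
  have W0 : 0 < W := by linarith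
  have W30 : 0 < W3 := by linarith
  have Wm0 : 0 < Wm := by linarith
  have Wp0 : 0 < Wp := by linarith
  -- c1 is small compared with W * c0
  have hc1 : c1 ≤ 0.006 * (W * c0) := by
    refine (sq_le_sq₀ (by positivity) (by positivity)).1 ?_
    have : 6 * c1^2 ≤ 2 * Real.pi * c1^2 := by gcongr; linarith
    have : 20000 * (W * c0^2) ≤ W * (W * c0^2) := by gcongr
    nlinarith
  have hcd : 0.218 * (W * (c0 * d0)) ≤ c1 * d1 := by
    refine (sq_le_sq₀ (by positivity) (by positivity)).1 ?_
    have q1 : 0.8 * (W * c0^2) ≤ 6.3 * c1^2 :=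
      cl.trans (by gcongr; norm_num at hpi' ⊢; linarith)
    have q2 : 0.8 * (2.999 * W * d0^2) ≤ 6.3 * d1^2 := by
      refine le_trans ?_ (dl.trans (by gcongr; norm_num at hpi' ⊢; linarith))
      gcongr
    have q3 := mul_le_mul q1 q2 (by positivity) (by positivity)
    have q4 : 0 ≤ W^2 * (c0^2 * d0^2) := by positivity
    nlinarith
  have L : 0.999 * W * (0.999 * W) * (0.218 * (W * (c0 * d0))) ≤ Wm * Wp * (c1 * d1) := by gcongr
  have R1 : W * W3 * a * (c0 * d0) ≤ W * (3.001 * W) * (0.0473 * W) * (c0 * d0) := by gcongr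
  have R2 : 2 * (W * Wp) * (c1 * d0) ≤ 2 * (W * (1.001 * W)) * (0.006 * (W * c0) * d0) := by gcongr
  have P : 0 < W^3 * (c0 * d0) := by positivity
  nlinarith
end
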